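/- Let n ≥ 1, m ≥ 1 and s ∈ (0,1), with s ≤ 1/2 if n = 1. Define δ* := inf{ E_{s,n/s}(u) : u : 𝕊ⁿ → 𝕊^m continuous and not homotopic to a constant map } ∈ [0,∞] (with inf ∅ = ∞). There exists ε = ε(n,m,s) > 0 such that: (a) δ* ≥ ε; and (b) for every continuous map g : 𝕊ⁿ → 𝕊^m which is not homotopic to a constant and satisfies inf{ E_{s,n/s}(v) : v : 𝕊ⁿ → 𝕊^m continuous, homotopic to g } ≤ δ* + ε, there exists a continuous map u : 𝕊ⁿ → 𝕊^m homotopic to g with E_{s,n/s}(u) ≤ E_{s,n/s}(v) for every continuous v : 𝕊ⁿ → 𝕊^m homotopic to g. -/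

import Mathlib

open MeasureTheory
open scoped ENNReal

noncomputable section

/-- The unit sphere `𝕊ᵏ ⊆ ℝ^{k+1}`. -/
abbrev Sph (k : ℕ) : Type _ := ↥(Metric.sphere (0 : EuclideanSpace ℝ (Fin (k + 1))) 1)

/-- `f` and `g` are homotopic maps. -/
def Homotopic {X Y : Type*} [TopologicalSpace X] [TopologicalSpace Y] (f g : X → Y) : Prop :=
  ∃ H : unitInterval × X → Y, Continuous H ∧ (∀ x, H (0, x) = f x) ∧ (∀ x, H (1, x) = g x)

/-- `u` is homotopic to a constant map. -/
def NullHomotopic {X Y : Type*} [TopologicalSpace X] [TopologicalSpace Y] (u : X → Y) : Prop :=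
  ∃ c : Y, Homotopic u (fun _ => c)

/-- The energy `E_{s,n/s}(u) = ∫∫ |u(x)-u(y)|^{n/s}/|x-y|^{2n} dμ dμ` of a map `𝕊ⁿ → 𝕊^m`. -/
def sphEnergy (n m : ℕ) (s : ℝ) (u : Sph n → Sph m) : ℝ≥0∞ :=
  ∫⁻ x, ∫⁻ y,
    ENNReal.ofReal
      (‖(u x : EuclideanSpace ℝ (Fin (m + 1))) - (u y : EuclideanSpace ℝ (Fin (m + 1)))‖
          ^ ((n : ℝ) / s) / dist x y ^ (2 * (n : ℝ)))
    ∂(μH[(n : ℝ)] : Measure (Sph n)) ∂(μH[(n : ℝ)] : Measure (Sph n))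

/-- The least energy `δ*` of homotopically nontrivial continuous maps `𝕊ⁿ → 𝕊^m`
(equal to `∞` if there are none). -/
def minNontrivialEnergy (n m : ℕ) (s : ℝ) : ℝ≥0∞ :=
  sInf {e : ℝ≥0∞ | ∃ u : Sph n → Sph m, Continuous u ∧ ¬ NullHomotopic u ∧ e = sphEnergy n m s u}


set_option linter.unusedSectionVars false
open Set Filter Topology

lemma le_of_sq_le_sq0 {a b : ℝ} (h : a ^ 2 ≤ b ^ 2) (hb : 0 ≤ b) : a ≤ b := abs_le_of_sq_le_sq' h hb |>.2

section Conf
variable {X Y : Type*} [MetricSpace X] [MetricSpace Y] [MeasurableSpace X] [BorelSpace X]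
  [MeasurableSpace Y] [BorelSpace Y]

lemma conf_piece (n : ℕ) (φ : X → Y) (lam : X → ℝ) (hpos : ∀ x, 0 < lam x)
    (hconf : ∀ x y, dist (φ x) (φ y) ^ 2 = lam x * lam y * dist x y ^ 2)
    {A : Set X} (hA : MeasurableSet A) (a b : ℝ) (ha : 0 < a) (hab : a ≤ b)
    (hlam : ∀ x ∈ A, a ≤ lam x ∧ lam x ≤ b) :
    μH[n] (φ '' A) ≤ ENNReal.ofReal ((b / a) ^ n) * ∫⁻ x in A, ENNReal.ofReal (lam x ^ n) ∂μH[n] ∧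
    ∫⁻ x in A, ENNReal.ofReal (lam x ^ n) ∂μH[n] ≤ ENNReal.ofReal ((b / a) ^ n) * μH[n] (φ '' A) := by
  have hb : 0 < b := lt_of_lt_of_le ha hab
  have key1 : μH[n] (φ '' A) ≤ ENNReal.ofReal (b ^ n) * μH[n] A := by
    have hL : LipschitzOnWith b.toNNReal φ A := by
      apply LipschitzOnWith.of_dist_le_mul
      intro x hx y hy
      rw [Real.coe_toNNReal _ hb.le]
      refine le_of_sq_le_sq0 ?_ (by positivity)
      rw [hconf, mul_pow]
      have : lam x * lam y ≤ b ^ 2 := by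
        rw [sq]; exact mul_le_mul (hlam x hx).2 (hlam y hy).2 (hpos y).le hb.le
      gcongr
    have := hL.hausdorffMeasure_image_le (d := (n : ℝ)) (by positivity)
    refine this.trans (le_of_eq ?_)
    rw [ENNReal.ofReal_pow hb.le]; simp [ENNReal.ofReal]
  have key2 : ENNReal.ofReal (a ^ n) * μH[n] A ≤ μH[n] (φ '' A) := by
    have hinj : ∀ x y, φ x = φ y → x = y := by
      intro x y h
      have := hconf x y
      rw [h, dist_self] at this
      have h2 : dist x y ^ 2 = 0 := by
        have : lam x * lam y ≠ 0 := (mul_pos (hpos x) (hpos y)).ne'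
        grind
      exact dist_eq_zero.1 (by simpa using h2)
    rcases isEmpty_or_nonempty X with hX | hX
    · have : A = ∅ := Set.eq_empty_of_isEmpty A
      simp [this]
    have hli : Function.LeftInverse (Function.invFun φ) φ := Function.leftInverse_invFun hinj
    have hL : LipschitzOnWith (a⁻¹).toNNReal (Function.invFun φ) (φ '' A) := by
      apply LipschitzOnWith.of_dist_le_mul
      rintro _ ⟨x, hx, rfl⟩ _ ⟨y, hy, rfl⟩
      rw [Real.coe_toNNReal _ (by positivity), hli x, hli y]
      rw [inv_mul_eq_div, le_div_iff₀ ha]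
      refine le_of_sq_le_sq0 ?_ (by positivity)
      rw [hconf, mul_pow, mul_comm]
      have : a ^ 2 ≤ lam x * lam y := by
        rw [sq]; exact mul_le_mul (hlam x hx).1 (hlam y hy).1 ha.le (hpos x).le
      gcongr
    have := hL.hausdorffMeasure_image_le (d := (n : ℝ)) (by positivity)
    have himg : Function.invFun φ '' (φ '' A) = A := by
      rw [Set.image_image]; simp [hli _]
    rw [himg] at this
    calc ENNReal.ofReal (a ^ n) * μH[n] A
        ≤ ENNReal.ofReal (a ^ n) * (((a⁻¹).toNNReal : ℝ≥0∞) ^ (n : ℝ) * μH[n] (φ '' A)) := by gcongr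
      _ = μH[n] (φ '' A) := by
        rw [← mul_assoc]
        have : ENNReal.ofReal (a ^ n) * ((a⁻¹).toNNReal : ℝ≥0∞) ^ (n : ℝ) = 1 := by
          have : ((a⁻¹).toNNReal : ℝ≥0∞) ^ (n : ℝ) = ENNReal.ofReal ((a⁻¹) ^ n) := by
            rw [ENNReal.ofReal_pow (by positivity)]; simp [ENNReal.ofReal]
          rw [this, ← ENNReal.ofReal_mul (by positivity), ← mul_pow]
          simp [ha.ne']
        rw [this, one_mul]
  have i1 : ENNReal.ofReal (a ^ n) * μH[n] A ≤ ∫⁻ x in A, ENNReal.ofReal (lam x ^ n) ∂μH[n] := by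
    rw [← setLIntegral_const]
    apply setLIntegral_mono' hA
    intro x hx
    exact ENNReal.ofReal_le_ofReal (pow_le_pow_left₀ ha.le (hlam x hx).1 n)
  have i2 : ∫⁻ x in A, ENNReal.ofReal (lam x ^ n) ∂μH[n] ≤ ENNReal.ofReal (b ^ n) * μH[n] A := by
    rw [← setLIntegral_const]
    apply setLIntegral_mono' hA
    intro x hx
    exact ENNReal.ofReal_le_ofReal (pow_le_pow_left₀ (hpos x).le (hlam x hx).2 n)
  have hba : ENNReal.ofReal (b ^ n) = ENNReal.ofReal ((b / a) ^ n) * ENNReal.ofReal (a ^ n) := by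
    rw [← ENNReal.ofReal_mul (by positivity), ← mul_pow, div_mul_cancel₀ _ ha.ne']
  constructor
  · refine key1.trans ?_
    rw [hba, mul_assoc]
    gcongr
  · refine i2.trans ?_
    rw [hba, mul_assoc]
    gcongr

theorem conf_image (n : ℕ) (φ : X → Y) (hφ : MeasurableEmbedding φ) (lam : X → ℝ)
    (hl : Measurable lam) (hpos : ∀ x, 0 < lam x)
    (hconf : ∀ x y, dist (φ x) (φ y) ^ 2 = lam x * lam y * dist x y ^ 2)
    {A : Set X} (hA : MeasurableSet A) :
    μH[n] (φ '' A) = ∫⁻ x in A, ENNReal.ofReal (lam x ^ n) ∂μH[n] := by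
  have main : ∀ q : ℝ, 1 < q →
      μH[n] (φ '' A) ≤ ENNReal.ofReal (q ^ n) * ∫⁻ x in A, ENNReal.ofReal (lam x ^ n) ∂μH[n] ∧
      ∫⁻ x in A, ENNReal.ofReal (lam x ^ n) ∂μH[n] ≤ ENNReal.ofReal (q ^ n) * μH[n] (φ '' A) := by
    intro q hq
    have hq0 : 0 < q := by linarith
    set B : ℤ → Set X := fun k => A ∩ lam ⁻¹' (Ico (q ^ k) (q ^ (k + 1))) with hB
    have hBm : ∀ k, MeasurableSet (B k) := fun k => hA.inter (hl measurableSet_Ico)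
    have hBA : A = ⋃ k, B k := by
      ext x
      simp only [hB, mem_iUnion, mem_inter_iff, mem_preimage]
      constructor
      · intro hx
        obtain ⟨k, hk⟩ := exists_mem_Ico_zpow (hpos x) hq
        exact ⟨k, hx, hk⟩
      · rintro ⟨k, hx, -⟩; exact hx
    have hBd : Pairwise (Function.onFun Disjoint B) := by
      intro i j hij
      rw [Function.onFun, Set.disjoint_left]
      rintro x ⟨-, hx1, hx2⟩ ⟨-, hy1, hy2⟩
      have h1 : i < j + 1 := (zpow_lt_zpow_iff_right₀ hq).1 (lt_of_le_of_lt hx1 hy2)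
      have h2 : j < i + 1 := (zpow_lt_zpow_iff_right₀ hq).1 (lt_of_le_of_lt hy1 hx2)
      omega
    have hp : ∀ k, _ := fun k => conf_piece n φ lam hpos hconf (hBm k) (q ^ k) (q ^ (k + 1))
      (by positivity) (zpow_le_zpow_right₀ hq.le (by omega))
      (fun x hx => ⟨hx.2.1, hx.2.2.le⟩)
    have hqq : ∀ k : ℤ, q ^ (k + 1) / q ^ k = q := by
      intro k; rw [zpow_add₀ hq0.ne', zpow_one]; field_simp
    simp only [hqq] at hp
    have e1 : μH[n] (φ '' A) = ∑' k, μH[n] (φ '' B k) := by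
      conv_lhs => rw [hBA, image_iUnion]
      refine measure_iUnion ?_ (fun k => hφ.measurableSet_image.2 (hBm k))
      intro i j hij
      exact (Set.disjoint_image_iff hφ.injective).2 (hBd hij)
    have e2 : ∫⁻ x in A, ENNReal.ofReal (lam x ^ n) ∂μH[n]
        = ∑' k, ∫⁻ x in B k, ENNReal.ofReal (lam x ^ n) ∂μH[n] := by
      conv_lhs => rw [hBA]
      exact lintegral_iUnion hBm hBd _
    rw [e1, e2, ← ENNReal.tsum_mul_left, ← ENNReal.tsum_mul_left]
    exact ⟨ENNReal.tsum_le_tsum fun k => (hp k).1, ENNReal.tsum_le_tsum fun k => (hp k).2⟩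
  have lim : ∀ T : ℝ≥0∞, Tendsto (fun q : ℝ => ENNReal.ofReal (q ^ n) * T) (𝓝[>] 1) (𝓝 T) := by
    intro T
    have h1 : Tendsto (fun q : ℝ => ENNReal.ofReal (q ^ n)) (𝓝[>] 1) (𝓝 1) := by
      have : Continuous (fun q : ℝ => ENNReal.ofReal (q ^ n)) := ENNReal.continuous_ofReal.comp (by fun_prop)
      have h := (this.tendsto 1).mono_left (nhdsWithin_le_nhds (s := Ioi 1))
      simpa using h
    simpa using ENNReal.Tendsto.mul_const h1 (b := T) (Or.inl one_ne_zero)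
  apply le_antisymm
  · refine ge_of_tendsto (lim _) ?_
    filter_upwards [self_mem_nhdsWithin] with q hq using (main q hq).1
  · refine ge_of_tendsto (lim _) ?_
    filter_upwards [self_mem_nhdsWithin] with q hq using (main q hq).2

/-- change of variables, on the image of a measurable set -/
theorem conf_lintegral (n : ℕ) (φ : X → Y) (hφ : MeasurableEmbedding φ) (lam : X → ℝ)
    (hl : Measurable lam) (hpos : ∀ x, 0 < lam x)
    (hconf : ∀ x y, dist (φ x) (φ y) ^ 2 = lam x * lam y * dist x y ^ 2)
    {A : Set X} (hA : MeasurableSet A) (g : Y → ℝ≥0∞) (hg : Measurable g) :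
    ∫⁻ y in φ '' A, g y ∂μH[n] = ∫⁻ x in A, ENNReal.ofReal (lam x ^ n) * g (φ x) ∂μH[n] := by
  have hd : Measurable fun x => ENNReal.ofReal (lam x ^ n) := by fun_prop
  have hm : (μH[n] : Measure Y).restrict (φ '' A)
      = (((μH[n] : Measure X).restrict A).withDensity (fun x => ENNReal.ofReal (lam x ^ n))).map φ := by
    ext s hs
    rw [Measure.restrict_apply hs, Measure.map_apply hφ.measurable hs,
      withDensity_apply _ (hφ.measurable hs), Measure.restrict_restrict (hφ.measurable hs),
      ← conf_image n φ hφ lam hl hpos hconf ((hφ.measurable hs).inter hA)]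
    congr 1
    ext y
    constructor
    · rintro ⟨h, x, hx, rfl⟩; exact ⟨x, ⟨h, hx⟩, rfl⟩
    · rintro ⟨x, ⟨h, hx⟩, rfl⟩; exact ⟨h, x, hx, rfl⟩
  rw [hm, hφ.lintegral_map]
  exact lintegral_withDensity_eq_lintegral_mul _ hd (hg.comp hφ.measurable)
end Conf


/-- energy density -/
def en (n : ℕ) (p : ℝ) {X G : Type*} [MetricSpace X] [NormedAddCommGroup G] (v : X → G)
    (x y : X) : ℝ≥0∞ :=
  ENNReal.ofReal (‖v x - v y‖ ^ p / dist x y ^ (2 * (n : ℝ)))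

/-- energy on a product set -/
def Em (n : ℕ) (p : ℝ) {X G : Type*} [MetricSpace X] [MeasurableSpace X] [BorelSpace X]
    [NormedAddCommGroup G] (v : X → G) (A B : Set X) : ℝ≥0∞ :=
  ∫⁻ x in A, ∫⁻ y in B, en n p v x y ∂μH[n] ∂μH[n]

lemma en_symm (n : ℕ) (p : ℝ) {X G : Type*} [MetricSpace X] [NormedAddCommGroup G] (v : X → G)
    (x y : X) : en n p v x y = en n p v y x := by
  simp only [en, norm_sub_rev (v x), dist_comm x]

lemma dist_rpow_two_mul (n : ℕ) {X : Type*} [MetricSpace X] (x y : X) :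
    dist x y ^ (2 * (n : ℝ)) = (dist x y ^ 2) ^ n := by
  rw [Real.rpow_mul dist_nonneg]; norm_cast

section
variable {X Y G : Type*} [MetricSpace X] [MetricSpace Y] [MeasurableSpace X] [BorelSpace X]
  [MeasurableSpace Y] [BorelSpace Y] [NormedAddCommGroup G]

lemma en_measurable [SecondCountableTopology X] (n : ℕ) (p : ℝ) (v : X → G) (hv : Continuous v) :
    Measurable (fun z : X × X => en n p v z.1 z.2) := by
  unfold en
  have h1 : Measurable fun z : X × X => ‖v z.1 - v z.2‖ :=
    (by fun_prop : Continuous fun z : X × X => ‖v z.1 - v z.2‖).measurable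
  have h2 : Measurable fun z : X × X => dist z.1 z.2 := measurable_dist
  exact ((h1.pow_const p).div (h2.pow_const _)).ennreal_ofReal

lemma en_measurable_right [SecondCountableTopology X] (n : ℕ) (p : ℝ) (v : X → G)
    (hv : Continuous v) (x : X) : Measurable (en n p v x) := by
  unfold en
  have h1 : Measurable fun y : X => ‖v x - v y‖ :=
    (by fun_prop : Continuous fun y : X => ‖v x - v y‖).measurable
  have h2 : Measurable fun y : X => dist x y := (continuous_const.dist continuous_id).measurable
  exact ((h1.pow_const p).div (h2.pow_const _)).ennreal_ofReal

lemma en_measurable_int [SecondCountableTopology X] (n : ℕ) (p : ℝ) (v : X → G)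
    (hv : Continuous v) (μ : Measure X) [SFinite μ] :
    Measurable (fun x => ∫⁻ y, en n p v x y ∂μ) :=
  (en_measurable n p v hv).lintegral_prod_right'

lemma en_conf (n : ℕ) (p : ℝ) (φ : X → Y) (lam : X → ℝ) (hpos : ∀ x, 0 < lam x)
    (hconf : ∀ x y, dist (φ x) (φ y) ^ 2 = lam x * lam y * dist x y ^ 2) (v : Y → G) (x y : X) :
    ENNReal.ofReal (lam x ^ n) * (ENNReal.ofReal (lam y ^ n) * en n p v (φ x) (φ y))
      = en n p (v ∘ φ) x y := by
  have hx := hpos x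
  have hy := hpos y
  simp only [en, Function.comp]
  rw [← ENNReal.ofReal_mul (by positivity), ← ENNReal.ofReal_mul (by positivity)]
  congr 1
  rw [dist_rpow_two_mul, dist_rpow_two_mul, hconf]
  rw [mul_pow, mul_pow]
  field_simp

theorem Em_conf [SecondCountableTopology X] [SecondCountableTopology Y] (n : ℕ) (p : ℝ) (φ : X → Y)
    (hφ : MeasurableEmbedding φ) (lam : X → ℝ)
    (hl : Measurable lam) (hpos : ∀ x, 0 < lam x)
    (hconf : ∀ x y, dist (φ x) (φ y) ^ 2 = lam x * lam y * dist x y ^ 2)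
    [SFinite (μH[n] : Measure Y)]
    (v : Y → G) (hv : Continuous v)
    {A B : Set X} (hA : MeasurableSet A) (hB : MeasurableSet B) :
    Em n p v (φ '' A) (φ '' B) = Em n p (v ∘ φ) A B := by
  unfold Em
  rw [conf_lintegral n φ hφ lam hl hpos hconf hA _ (en_measurable_int n p v hv _)]
  apply lintegral_congr
  intro x
  rw [conf_lintegral n φ hφ lam hl hpos hconf hB _ (en_measurable_right n p v hv _)]
  rw [← lintegral_const_mul']
  · apply lintegral_congr
    intro y
    exact en_conf n p φ lam hpos hconf v x y
  · exact ENNReal.ofReal_ne_top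

lemma Em_mono (n : ℕ) (p : ℝ) (v : X → G) {A A' B B' : Set X} (h : A ⊆ A') (h' : B ⊆ B') :
    Em n p v A B ≤ Em n p v A' B' :=
  (lintegral_mono_set h).trans (lintegral_mono fun _ => lintegral_mono_set h')

lemma Em_symm [SecondCountableTopology X] (n : ℕ) (p : ℝ) (v : X → G) (hv : Continuous v)
    [SFinite (μH[n] : Measure X)] (A B : Set X) : Em n p v A B = Em n p v B A := by
  unfold Em
  rw [lintegral_lintegral_swap (en_measurable n p v hv).aemeasurable]
  simp only [en_symm n p v]
end

/-- the model space -/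
abbrev Fn (n : ℕ) : Type := EuclideanSpace ℝ (Fin n)

instance muF_haar (n : ℕ) : Measure.IsAddHaarMeasure (μH[(n : ℝ)] : Measure (Fn n)) := by
  simpa using MeasureTheory.isAddHaarMeasure_hausdorffMeasure (E := EuclideanSpace ℝ (Fin n))

/-- conformal charts of the sphere, covering all but one point -/
structure Chart (n : ℕ) where
  τ : Fn n → Sph n
  lam : Fn n → ℝ
  lam_meas : Measurable lam
  lam_pos : ∀ x, 0 < lam x
  conf : ∀ x y, dist (τ x) (τ y) ^ 2 = lam x * lam y * dist x y ^ 2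
  emb : IsOpenEmbedding τ
  pt : Sph n
  range_eq : range τ = {pt}ᶜ

/-- rescaled chart -/
def Chart.scale {n : ℕ} (c : Chart n) (r : ℝ) (hr : 0 < r) : Chart n where
  τ := fun x => c.τ (r • x)
  lam := fun x => r * c.lam (r • x)
  lam_meas := (c.lam_meas.comp (measurable_const_smul r)).const_mul r
  lam_pos := fun x => mul_pos hr (c.lam_pos _)
  conf := by
    intro x y
    rw [c.conf, dist_smul₀, Real.norm_eq_abs, mul_pow, sq_abs]; ring
  emb := c.emb.comp (Homeomorph.smulOfNeZero r hr.ne').isOpenEmbedding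
  pt := c.pt
  range_eq := by
    have : (fun x => c.τ (r • x)) = c.τ ∘ (fun x => r • x) := rfl
    have h2 : range (fun x : Fn n => r • x) = univ :=
      (Homeomorph.smulOfNeZero (α := Fn n) r hr.ne').surjective.range_eq
    rw [this, Set.range_comp, h2, image_univ, c.range_eq]

instance finrank_fact (n : ℕ) : Fact (Module.finrank ℝ (EuclideanSpace ℝ (Fin (n + 1))) = n + 1) :=
  ⟨by simp⟩

lemma stereo_inner {E : Type*} [NormedAddCommGroup E] [InnerProductSpace ℝ E] (v p q : E)
    (hv : ‖v‖ = 1) (hp : inner ℝ v p = 0) (hq : inner ℝ v q = 0) (X Y : E) (hX : ‖X‖ = 1)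
    (hY : ‖Y‖ = 1)
    (eX : X = (‖p‖ ^ 2 + 4)⁻¹ • (4 : ℝ) • p + (‖p‖ ^ 2 + 4)⁻¹ • (‖p‖ ^ 2 - 4) • v)
    (eY : Y = (‖q‖ ^ 2 + 4)⁻¹ • (4 : ℝ) • q + (‖q‖ ^ 2 + 4)⁻¹ • (‖q‖ ^ 2 - 4) • v) :
    ‖X - Y‖ ^ 2 = 4 / (‖p‖ ^ 2 + 4) * (4 / (‖q‖ ^ 2 + 4)) * ‖p - q‖ ^ 2 := by
  have h1 : inner ℝ X Y = (16 * inner ℝ p q + (‖p‖ ^ 2 - 4) * (‖q‖ ^ 2 - 4)) /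
      ((‖p‖ ^ 2 + 4) * (‖q‖ ^ 2 + 4)) := by
    rw [eX, eY]
    have hp' : inner ℝ p v = 0 := by rw [real_inner_comm]; exact hp
    simp only [inner_add_left, inner_add_right, inner_smul_left, inner_smul_right, hq, hp',
      real_inner_self_eq_norm_sq, hv]
    simp
    field_simp
    ring
  have h2 := norm_sub_sq_real X Y
  have h3 := norm_sub_sq_real p q
  rw [h2, h3, h1, hX, hY]
  have : ‖p‖ ^ 2 + 4 ≠ 0 := by positivity
  have : ‖q‖ ^ 2 + 4 ≠ 0 := by positivity
  field_simp
  ring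

/-- stereographic chart with `0 ↦ a` -/
theorem exists_stereo (n : ℕ) (a : Sph n) : ∃ c : Chart n, c.τ 0 = a ∧
    ∀ x, c.lam x = 4 / (‖x‖ ^ 2 + 4) := by
  set e := stereographic' n (-a) with he
  have ht : e.target = univ := stereographic'_target _
  have hs : e.source = {-a}ᶜ := stereographic'_source _
  obtain ⟨U, hform⟩ : ∃ U : (ℝ ∙ ((-a : Sph n) : EuclideanSpace ℝ (Fin (n + 1))))ᗮ ≃ₗᵢ[ℝ]
      EuclideanSpace ℝ (Fin n), ∀ x, ((e.symm x : Sph n) : EuclideanSpace ℝ (Fin (n + 1))) =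
      (‖(U.symm x : EuclideanSpace ℝ (Fin (n + 1)))‖ ^ 2 + 4)⁻¹ • (4 : ℝ) •
        (U.symm x : EuclideanSpace ℝ (Fin (n + 1))) +
      (‖(U.symm x : EuclideanSpace ℝ (Fin (n + 1)))‖ ^ 2 + 4)⁻¹ •
        (‖(U.symm x : EuclideanSpace ℝ (Fin (n + 1)))‖ ^ 2 - 4) •
          ((-a : Sph n) : EuclideanSpace ℝ (Fin (n + 1))) :=
    ⟨_, fun x => stereographic'_symm_apply (n := n) (-a) x⟩
  have hnorm : ∀ z : Sph n, ‖(z : EuclideanSpace ℝ (Fin (n + 1)))‖ = 1 := fun z => by simp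
  refine ⟨⟨e.symm, fun x => 4 / (‖x‖ ^ 2 + 4), by fun_prop, fun x => by positivity, ?_, ?_, -a, ?_⟩,
    ?_, fun x => rfl⟩
  · intro x y
    have hx := hform x
    have hy := hform y
    have hdist : dist x y = ‖(U.symm x : EuclideanSpace ℝ (Fin (n + 1))) - U.symm y‖ := by
      rw [← Submodule.coe_sub, ← map_sub, dist_eq_norm]
      exact (U.symm.norm_map _).symm
    have hnx : ‖x‖ = ‖(U.symm x : EuclideanSpace ℝ (Fin (n + 1)))‖ := (U.symm.norm_map _).symm
    have hny : ‖y‖ = ‖(U.symm y : EuclideanSpace ℝ (Fin (n + 1)))‖ := (U.symm.norm_map _).symm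
    rw [hdist, hnx, hny, Subtype.dist_eq, dist_eq_norm]
    refine stereo_inner ((-a : Sph n) : EuclideanSpace ℝ (Fin (n + 1))) _ _ (hnorm _) ?_ ?_ _ _
      (hnorm _) (hnorm _) hx hy
    · exact Submodule.mem_orthogonal_singleton_iff_inner_right.1 (U.symm x).2
    · exact Submodule.mem_orthogonal_singleton_iff_inner_right.1 (U.symm y).2
  · exact e.symm.isOpenEmbedding (by simpa using ht)
  · rw [← hs, ← e.symm_image_target_eq_source, ht, image_univ]
  · apply Subtype.ext
    show ((e.symm 0 : Sph n) : EuclideanSpace ℝ (Fin (n + 1))) = a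
    rw [hform 0, LinearIsometryEquiv.map_zero]
    simp [smul_smul]


section
variable {X Y : Type*} [TopologicalSpace X] [TopologicalSpace Y]

lemma homotopic_iff (f g : C(X, Y)) : Homotopic (f : X → Y) g ↔ ContinuousMap.Homotopic f g := by
  constructor
  · rintro ⟨H, h1, h2, h3⟩
    exact ⟨⟨⟨H, h1⟩, h2, h3⟩⟩
  · rintro ⟨H⟩
    exact ⟨H, H.continuous, H.map_zero_left, H.map_one_left⟩

lemma Homotopic.cont_left {f g : X → Y} (h : Homotopic f g) : Continuous f := by
  obtain ⟨H, h1, h2, h3⟩ := h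
  have : f = fun x => H (0, x) := by ext x; exact (h2 x).symm
  rw [this]; fun_prop

lemma Homotopic.cont_right {f g : X → Y} (h : Homotopic f g) : Continuous g := by
  obtain ⟨H, h1, h2, h3⟩ := h
  have : g = fun x => H (1, x) := by ext x; exact (h3 x).symm
  rw [this]; fun_prop

lemma Homotopic.rfl' {f : X → Y} (hf : Continuous f) : Homotopic f f :=
  ⟨fun z => f z.2, by fun_prop, fun _ => rfl, fun _ => rfl⟩

lemma Homotopic.symm' {f g : X → Y} (h : Homotopic f g) : Homotopic g f :=
  (homotopic_iff ⟨g, h.cont_right⟩ ⟨f, h.cont_left⟩).2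
    ((homotopic_iff ⟨f, h.cont_left⟩ ⟨g, h.cont_right⟩).1 h).symm

lemma Homotopic.trans' {f g k : X → Y} (h : Homotopic f g) (h' : Homotopic g k) :
    Homotopic f k :=
  (homotopic_iff ⟨f, h.cont_left⟩ ⟨k, h'.cont_right⟩).2
    (((homotopic_iff ⟨f, h.cont_left⟩ ⟨g, h.cont_right⟩).1 h).trans
      ((homotopic_iff ⟨g, h.cont_right⟩ ⟨k, h'.cont_right⟩).1 h'))

/-- homotopies parametrized by real numbers in `[0,1]` -/
lemma Homotopic.of_real {f g : X → Y} (H : ℝ → X → Y)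
    (hH : ContinuousOn (fun z : ℝ × X => H z.1 z.2) (Icc 0 1 ×ˢ univ)) (h0 : ∀ x, H 0 x = f x)
    (h1 : ∀ x, H 1 x = g x) : Homotopic f g := by
  refine ⟨fun z => H z.1 z.2, ?_, fun x => by simpa using h0 x, fun x => by simpa using h1 x⟩
  exact hH.comp_continuous (f := fun z : unitInterval × X => ((z.1 : ℝ), z.2)) (by fun_prop)
    (fun z => ⟨z.1.2, mem_univ _⟩)
end

instance (k : ℕ) : Inhabited (Sph k) := ⟨⟨EuclideanSpace.single 0 1, by simp⟩⟩

/-- radial projection onto the sphere -/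
def proj (m : ℕ) (y : Fn (m + 1)) : Sph m :=
  if h : y = 0 then default else ⟨‖y‖⁻¹ • y, by simp [norm_smul, h]⟩

lemma coe_proj {m : ℕ} {y : Fn (m + 1)} (h : y ≠ 0) : (proj m y : Fn (m + 1)) = ‖y‖⁻¹ • y := by
  simp [proj, h]

lemma proj_coe {m : ℕ} (y : Sph m) : proj m (y : Fn (m + 1)) = y := by
  have h : ‖(y : Fn (m + 1))‖ = 1 := by simp
  apply Subtype.ext
  rw [coe_proj (by intro h0; rw [h0] at h; simp at h), h]; simp

lemma proj_continuousOn {X : Type*} [TopologicalSpace X] {m : ℕ} {F : X → Fn (m + 1)} {A : Set X}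
    (hF : ContinuousOn F A) (h0 : ∀ x ∈ A, F x ≠ 0) : ContinuousOn (fun x => proj m (F x)) A := by
  rw [continuousOn_iff_continuous_domRestrict] at *
  rw [continuous_induced_rng]
  have : (fun x : A => ((proj m (F x) : Sph m) : Fn (m + 1))) = fun x : A => ‖F x‖⁻¹ • F x := by
    ext1 x; exact coe_proj (h0 x x.2)
  show Continuous (fun x : A => ((proj m (F x) : Sph m) : Fn (m + 1)))
  rw [this]
  have hF' : Continuous fun x : A => F x := hF
  exact (hF'.norm.inv₀ fun x => by simpa using h0 x x.2).smul hF'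

lemma proj_continuous {X : Type*} [TopologicalSpace X] {m : ℕ} {F : X → Fn (m + 1)}
    (hF : Continuous F) (h0 : ∀ x, F x ≠ 0) : Continuous (fun x => proj m (F x)) := by
  rw [← continuousOn_univ] at *
  exact proj_continuousOn hF fun x _ => h0 x

lemma proj_lip {m : ℕ} {y z : Fn (m + 1)} (hy : 1 / 2 ≤ ‖y‖) (hz : 1 / 2 ≤ ‖z‖) :
    ‖(proj m y : Fn (m + 1)) - proj m z‖ ≤ 4 * ‖y - z‖ := by
  have hy0 : y ≠ 0 := by intro h; rw [h] at hy; norm_num at hy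
  have hz0 : z ≠ 0 := by intro h; rw [h] at hz; norm_num at hz
  rw [coe_proj hy0, coe_proj hz0]
  have hyp : 0 < ‖y‖ := by positivity
  have hzp : 0 < ‖z‖ := by positivity
  have e : ‖y‖⁻¹ • y - ‖z‖⁻¹ • z = ‖y‖⁻¹ • (y - z) + (‖y‖⁻¹ * (‖z‖ - ‖y‖) * ‖z‖⁻¹) • z := by
    rw [smul_sub, sub_add, ← sub_smul]; congr 2; field_simp; ring
  rw [e]
  have h1 : ‖y‖⁻¹ ≤ 2 := by
    rw [inv_le_comm₀ hyp (by norm_num)]; linarith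
  have h2 : |‖z‖ - ‖y‖| ≤ ‖y - z‖ := by rw [norm_sub_rev]; exact abs_norm_sub_norm_le z y
  calc _ ≤ ‖‖y‖⁻¹ • (y - z)‖ + ‖(‖y‖⁻¹ * (‖z‖ - ‖y‖) * ‖z‖⁻¹) • z‖ := norm_add_le _ _
    _ = ‖y‖⁻¹ * ‖y - z‖ + ‖y‖⁻¹ * |‖z‖ - ‖y‖| := by
      rw [norm_smul, norm_smul, norm_mul, norm_mul]
      rw [norm_inv, norm_inv, norm_norm, norm_norm, Real.norm_eq_abs]
      field_simp
    _ ≤ 2 * ‖y - z‖ + 2 * ‖y - z‖ := by gcongr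
    _ = _ := by ring

/-- segments avoiding zero give homotopies -/
lemma homotopic_proj {X : Type*} [TopologicalSpace X] {m : ℕ} {F G : X → Fn (m + 1)}
    (hF : Continuous F) (hG : Continuous G) (h : ∀ x, ‖F x - G x‖ < ‖F x‖) :
    Homotopic (fun x => proj m (F x)) (fun x => proj m (G x)) := by
  refine Homotopic.of_real (fun t x => proj m (F x + t • (G x - F x))) ?_ (by simp) (by simp)
  apply proj_continuousOn
  · fun_prop
  · rintro ⟨t, x⟩ ⟨ht, -⟩ h0
    have h1 : F x = t • (F x - G x) := by
      have h3 : F x = - (t • (G x - F x)) := eq_neg_of_add_eq_zero_left h0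
      have h4 : - (t • (G x - F x)) = t • (F x - G x) := by rw [← smul_neg, neg_sub]
      exact h3.trans h4
    have h2 : ‖F x‖ = t * ‖F x - G x‖ := by
      conv_lhs => rw [h1, norm_smul, Real.norm_eq_abs, abs_of_nonneg ht.1]
    have := h x
    have := ht.2
    nlinarith [norm_nonneg (F x - G x)]

lemma homotopic_of_close {X : Type*} [TopologicalSpace X] {m : ℕ} {F : X → Sph m}
    {G : X → Fn (m + 1)}
    (hF : Continuous F) (hG : Continuous G) (h : ∀ x, ‖(F x : Fn (m + 1)) - G x‖ < 1) :
    Homotopic F (fun x => proj m (G x)) := by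
  have := homotopic_proj (m := m) (F := fun x => (F x : Fn (m + 1))) (G := G) (by fun_prop) hG
    (fun x => by simpa using h x)
  simpa only [proj_coe] using this

section glue
variable {n : ℕ} {Y T : Type*} [TopologicalSpace Y] [TopologicalSpace T]

open Classical in
/-- glue a map given in a chart with a map on the sphere -/
def glue (c : Chart n) (U : Sph n → Y) (F : Fn n → Y) (y : Sph n) : Y :=
  if h : y ∈ range c.τ then F h.choose else U y

lemma glue_tau (c : Chart n) (U : Sph n → Y) (F : Fn n → Y) (x : Fn n) :
    glue c U F (c.τ x) = F x := by
  have h : c.τ x ∈ range c.τ := ⟨x, rfl⟩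
  rw [glue, dif_pos h]
  rw [c.emb.injective h.choose_spec]

lemma glue_off (c : Chart n) (U : Sph n → Y) (F : Fn n → Y) (R : ℝ)
    (hF : ∀ x, R ≤ ‖x‖ → F x = U (c.τ x)) (y : Sph n)
    (hy : y ∉ c.τ '' Metric.ball 0 R) : glue c U F y = U y := by
  by_cases h : y ∈ range c.τ
  · obtain ⟨x, rfl⟩ := h
    rw [glue_tau]
    apply hF
    by_contra hx
    exact hy ⟨x, by simpa using hx, rfl⟩
  · rw [glue, dif_neg h]

lemma glue_continuous (c : Chart n) (U : Sph n → Y) (hU : Continuous U) (F : T → Fn n → Y)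
    (hF : Continuous fun z : T × Fn n => F z.1 z.2) (R : ℝ)
    (hFU : ∀ t x, R ≤ ‖x‖ → F t x = U (c.τ x)) :
    Continuous fun z : T × Sph n => glue c U (F z.1) z.2 := by
  rw [continuous_iff_continuousAt]
  rintro ⟨t, y⟩
  by_cases h : y ∈ range c.τ
  · obtain ⟨x, rfl⟩ := h
    have he : IsOpenEmbedding (Prod.map (id : T → T) c.τ) := IsOpenEmbedding.id.prodMap c.emb
    have := he.continuousAt_iff (g := fun z : T × Sph n => glue c U (F z.1) z.2) (x := (t, x))
    refine this.1 ?_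
    have h2 : (fun z : T × Sph n => glue c U (F z.1) z.2) ∘ (Prod.map (id : T → T) c.τ) =
        fun z : T × Fn n => F z.1 z.2 := by
      ext1 z
      exact glue_tau _ _ _ _
    rw [h2]
    exact hF.continuousAt
  · have hcl : IsClosed (c.τ '' Metric.closedBall 0 R) :=
      ((isCompact_closedBall (0 : Fn n) R).image c.emb.continuous).isClosed
    have hmem : {z : T × Sph n | z.2 ∈ (c.τ '' Metric.closedBall 0 R)ᶜ} ∈ 𝓝 (t, y) := by
      apply (hcl.isOpen_compl.preimage continuous_snd).mem_nhds
      rintro ⟨x, -, hx⟩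
      exact h ⟨x, hx⟩
    have : (fun z : T × Sph n => U z.2) =ᶠ[𝓝 (t, y)] fun z : T × Sph n => glue c U (F z.1) z.2 := by
      filter_upwards [hmem] with z hz
      exact (glue_off c U (F z.1) R (hFU z.1) z.2
        (fun h => hz (image_mono Metric.ball_subset_closedBall h))).symm
    exact ContinuousAt.congr (by fun_prop) this
end glue


lemma cone_continuous {n m : ℕ} (H : unitInterval × Sph n → Sph m) (hH : Continuous H) (c : Sph m)
    (hc : ∀ x, H (1, x) = c) :
    Continuous fun y : Fn (n + 1) => H (projIcc 0 1 zero_le_one (1 - ‖y‖), proj n y) := by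
  rw [continuous_iff_continuousAt]
  intro y
  by_cases hy : y = 0
  · subst hy
    have h1 : ∀ W ∈ 𝓝 c, ∀ᶠ t in 𝓝 (1 : unitInterval), ∀ x ∈ (univ : Set (Sph n)), H (t, x) ∈ W := by
      intro W hW
      refine isCompact_univ.eventually_forall_of_forall_eventually fun x _ => ?_
      have : Tendsto H (𝓝 (1, x)) (𝓝 c) := by
        have := hH.tendsto (1, x); rwa [hc] at this
      exact this.eventually hW
    unfold ContinuousAt
    have h0 : projIcc (0 : ℝ) 1 zero_le_one (1 - ‖(0 : Fn (n + 1))‖) = 1 := by simp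
    beta_reduce
    rw [h0, hc, tendsto_def]
    intro W hW
    have h2 : Tendsto (fun y : Fn (n + 1) => projIcc (0 : ℝ) 1 zero_le_one (1 - ‖y‖)) (𝓝 0) (𝓝 1) := by
      have : Continuous (fun y : Fn (n + 1) => projIcc (0 : ℝ) 1 zero_le_one (1 - ‖y‖)) :=
        continuous_projIcc.comp (by fun_prop)
      have := this.tendsto 0
      rwa [h0] at this
    filter_upwards [h2.eventually (h1 W hW)] with y hy
    exact hy _ (mem_univ _)
  · have h1 : ContinuousAt (fun y : Fn (n + 1) => proj n y) y := by
      have := proj_continuousOn (m := n) (F := fun y : Fn (n + 1) => y) (A := {0}ᶜ)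
        continuousOn_id (fun x hx => hx)
      exact this.continuousAt (isOpen_compl_singleton.mem_nhds hy)
    have h2 : ContinuousAt (fun y : Fn (n + 1) => projIcc (0 : ℝ) 1 zero_le_one (1 - ‖y‖)) y :=
      (continuous_projIcc.comp (by fun_prop)).continuousAt
    exact ContinuousAt.comp (g := H) (f := fun y : Fn (n + 1) => 
      (projIcc (0 : ℝ) 1 zero_le_one (1 - ‖y‖), proj n y)) hH.continuousAt (h2.prodMk h1)

lemma dist_sq_sph {n : ℕ} (x e : Sph n) :
    dist x e ^ 2 = 2 - 2 * inner ℝ (x : Fn (n + 1)) (e : Fn (n + 1)) := by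
  rw [Subtype.dist_eq, dist_eq_norm, norm_sub_sq_real]
  have h1 : ‖(x : Fn (n + 1))‖ = 1 := by simp
  have h2 : ‖(e : Fn (n + 1))‖ = 1 := by simp
  rw [h1, h2]; ring

lemma glue_hom {n m : ℕ} (e : Sph n) (ρ : ℝ) (U : Sph n → Sph m) (hU : Continuous U) (c : Sph m)
    (hc : ∀ x, dist x e = ρ → U x = c) (A B : Sph n → Sph m) (H : ℝ → Sph n → Sph m)
    (hH : ContinuousOn (fun z : ℝ × Sph n => H z.1 z.2) (Icc 0 1 ×ˢ univ))
    (h0 : ∀ x, H 0 x = A x) (h1 : ∀ x, H 1 x = B x)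
    (hK : ∀ t ∈ Icc (0 : ℝ) 1, ∀ x, ρ ≤ dist x e → H t x = c) :
    Homotopic (fun x => if ρ ≤ dist x e then U x else A x)
      (fun x => if ρ ≤ dist x e then U x else B x) := by
  refine ⟨fun z => if ρ ≤ dist z.2 e then U z.2 else H z.1 z.2, ?_, ?_, ?_⟩
  · refine Continuous.if_le (by fun_prop) ?_ (by fun_prop) (by fun_prop) ?_
    · exact hH.comp_continuous (f := fun z : unitInterval × Sph n => ((z.1 : ℝ), z.2)) (by fun_prop)
        (fun z => ⟨z.1.2, mem_univ _⟩)
    · rintro ⟨t, x⟩ h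
      show U x = H t x
      rw [hK t t.2 x h.le, hc x h.symm]
  · intro x; simp [h0]
  · intro x; simp [h1]

theorem topo {n m : ℕ} (e : Sph n) (ρ : ℝ) (hρ : 0 < ρ) (hρ2 : ρ ≤ 2) (U : Sph n → Sph m)
    (hU : Continuous U) (c : Sph m) (hc : ∀ x, dist x e = ρ → U x = c)
    (hin : NullHomotopic fun x => if ρ ≤ dist x e then c else U x) :
    Homotopic U (fun x => if ρ ≤ dist x e then U x else c) := by
  set uin : Sph n → Sph m := fun x => if ρ ≤ dist x e then c else U x with huin
  obtain ⟨c1, H, hHc, hH0, hH1⟩ := hin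
  set F : Fn (n + 1) → Sph m := fun y => H (projIcc 0 1 zero_le_one (1 - ‖y‖), proj n y) with hF
  have hFc : Continuous F := cone_continuous H hHc c1 hH1
  have hFu : ∀ x : Sph n, F x = uin x := by
    intro x
    have : ‖(x : Fn (n + 1))‖ = 1 := by simp
    simp only [hF, this, proj_coe, sub_self]
    rw [← hH0]; congr 2; simp
  have huc : Continuous uin := by
    have : uin = fun x : Sph n => F x := by ext1 x; exact (hFu x).symm
    rw [this]; fun_prop
  have hme : dist (-e) e = 2 := by
    have : dist (-e) e ^ 2 = 2 ^ 2 := by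
      rw [dist_sq_sph]; simp; norm_num
    exact (pow_left_inj₀ dist_nonneg (by norm_num) two_ne_zero).1 this
  set a : Sph n → ℝ := fun x => min 1 (dist x e / ρ) with ha
  have hac : Continuous a := by fun_prop
  have ha1 : ∀ x, ρ ≤ dist x e → a x = 1 := fun x hx => min_eq_left ((one_le_div hρ).2 hx)
  set q : ℝ → Sph n → Fn (n + 1) :=
    fun σ x => (1 - σ * a x) • (x : Fn (n + 1)) - (σ * a x) • (e : Fn (n + 1)) with hq
  have hne : ‖(e : Fn (n + 1))‖ = 1 := by simp
  have hnx : ∀ x : Sph n, ‖(x : Fn (n + 1))‖ = 1 := fun x => by simp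
  have hq0 : ∀ σ ∈ Icc (0 : ℝ) 1, ∀ x, q σ x ≠ 0 := by
    intro σ hσ x h0
    have h1 : (1 - σ * a x) • (x : Fn (n + 1)) = (σ * a x) • (e : Fn (n + 1)) := sub_eq_zero.1 h0
    have hax0 : 0 ≤ a x := by simp only [ha]; positivity
    have hax1 : a x ≤ 1 := min_le_left _ _
    have hsa : 0 ≤ σ * a x := mul_nonneg hσ.1 hax0
    have hsa1 : σ * a x ≤ 1 := mul_le_one₀ hσ.2 hax0 hax1
    have h2 := congrArg norm h1
    rw [norm_smul, norm_smul, hne, hnx, Real.norm_eq_abs, Real.norm_eq_abs, abs_of_nonneg hsa,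
      abs_of_nonneg (by linarith)] at h2
    have h3 : σ * a x = 1 / 2 := by linarith
    rw [h3] at h1
    have h4 : (x : Fn (n + 1)) = e := by
      have := congrArg (fun z => (2 : ℝ) • z) h1
      simp only [smul_smul] at this
      norm_num at this
      exact_mod_cast this
    have h5 : x = e := Subtype.ext h4
    have h6 : a x = 0 := by simp [ha, h5]
    rw [h6] at h3; norm_num at h3
  have hqc : ContinuousOn (fun z : ℝ × Sph n => proj n (q z.1 z.2)) (Icc 0 1 ×ˢ univ) := by
    apply proj_continuousOn
    · apply Continuous.continuousOn; fun_prop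
    · rintro ⟨σ, x⟩ ⟨hσ, -⟩; exact hq0 σ hσ x
  have hqK : ∀ σ ∈ Icc (0 : ℝ) 1, ∀ x, ρ ≤ dist x e → ρ ≤ dist (proj n (q σ x)) e := by
    intro σ hσ x hx
    refine hx.trans ?_
    apply le_of_sq_le_sq0 _ dist_nonneg
    rw [dist_sq_sph, dist_sq_sph, coe_proj (hq0 σ hσ x)]
    have hpos : 0 < ‖q σ x‖ := norm_pos_iff.2 (hq0 σ hσ x)
    have hqe : q σ x = (1 - σ) • (x : Fn (n + 1)) - σ • (e : Fn (n + 1)) := by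
      simp only [hq, ha1 x hx, mul_one]
    set κ := inner ℝ (x : Fn (n + 1)) (e : Fn (n + 1)) with hκ
    have hin1 : inner ℝ (q σ x) (e : Fn (n + 1)) = (1 - σ) * κ - σ := by
      rw [hqe, inner_sub_left, inner_smul_left, inner_smul_left, real_inner_self_eq_norm_sq, hne]
      simp [hκ]
    have hn1 : ‖(1 - σ) • (x : Fn (n + 1))‖ = 1 - σ := by
      rw [norm_smul, hnx, Real.norm_eq_abs, abs_of_nonneg (by linarith [hσ.2]), mul_one]
    have hn2 : ‖σ • (e : Fn (n + 1))‖ = σ := by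
      rw [norm_smul, hne, Real.norm_eq_abs, abs_of_nonneg hσ.1, mul_one]
    have hle : ‖q σ x‖ ≤ 1 := by
      rw [hqe]; refine (norm_sub_le _ _).trans ?_; rw [hn1, hn2]; linarith
    have hge : 1 - 2 * σ ≤ ‖q σ x‖ := by
      rw [hqe]; refine le_trans ?_ (norm_sub_norm_le _ _); rw [hn1, hn2]; linarith
    have hk1 : |κ| ≤ 1 := by
      have := abs_real_inner_le_norm (x : Fn (n + 1)) (e : Fn (n + 1))
      rwa [hne, hnx, mul_one] at this
    rw [abs_le] at hk1
    rw [inner_smul_left, hin1]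
    simp only [conj_trivial]
    have key : (1 - σ) * κ - σ ≤ κ * ‖q σ x‖ := by
      obtain ⟨h0, h1⟩ := hσ
      rcases le_total 0 κ with hk | hk
      · nlinarith
      · nlinarith
    have : ‖q σ x‖⁻¹ * ((1 - σ) * κ - σ) ≤ κ := by
      rw [inv_mul_le_iff₀ hpos]; linarith
    linarith
  have hq1 : ∀ x, ρ ≤ dist x e → proj n (q 1 x) = -e := by
    intro x hx
    have hqe : q 1 x = ((-e : Sph n) : Fn (n + 1)) := by
      simp only [hq, ha1 x hx, mul_one]; simp
    rw [hqe, proj_coe]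
  have huK : ∀ x, ρ ≤ dist x e → uin x = c := fun x hx => by simp only [huin, if_pos hx]
  have step1 := glue_hom e ρ U hU c hc uin (fun x => uin (proj n (q 1 x)))
    (fun σ x => uin (proj n (q σ x))) (huc.comp_continuousOn hqc)
    (fun x => by
      have : q 0 x = x := by simp [hq]
      rw [this, proj_coe]) (fun x => rfl) (fun σ hσ x hx => huK _ (hqK σ hσ x hx))
  have hq1c : Continuous fun x => proj n (q 1 x) :=
    hqc.comp_continuous (f := fun x : Sph n => ((1 : ℝ), x)) (by fun_prop) (fun z => by simp)
  have step2 := glue_hom e ρ U hU c hc (fun x => uin (proj n (q 1 x))) (fun _ => c)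
    (fun t x => F ((1 - t) • (proj n (q 1 x) : Fn (n + 1)) + t • ((-e : Sph n) : Fn (n + 1))))
    (by
      apply Continuous.continuousOn
      have h7 : Continuous fun z : ℝ × Sph n => (proj n (q 1 z.2) : Fn (n + 1)) :=
        continuous_subtype_val.comp (hq1c.comp continuous_snd)
      exact hFc.comp (by fun_prop))
    (fun x => by simp [hFu]) (fun x => by
      simp only [sub_self, zero_smul, zero_add, one_smul]
      rw [hFu, huK _ (by rw [hme]; exact hρ2)])
    (fun t ht x hx => by
      simp only [hq1 x hx, ← add_smul, sub_add_cancel, one_smul]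
      rw [hFu, huK _ (by rw [hme]; exact hρ2)])
  have h3 : (fun x => if ρ ≤ dist x e then U x else uin x) = U := by
    ext1 x; simp only [huin]; split_ifs <;> rfl
  rw [h3] at step1
  exact step1.trans' step2


section jensen
variable {X G : Type*} [MeasurableSpace X] [NormedAddCommGroup G] [NormedSpace ℝ G]

lemma jensen1 (P : Measure X) [IsProbabilityMeasure P] {p : ℝ} (hp : 1 ≤ p) (g : X → G)
    (hg : AEStronglyMeasurable g P) : ‖∫ x, g x ∂P‖ₑ ^ p ≤ ∫⁻ x, ‖g x‖ₑ ^ p ∂P := by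
  have hp0 : 0 < p := by linarith
  have h1 : ‖∫ x, g x ∂P‖ₑ ≤ ∫⁻ x, ‖g x‖ₑ ∂P := enorm_integral_le_lintegral_enorm _
  have h2 := eLpNorm_le_eLpNorm_of_exponent_le (μ := P) (p := 1) (q := ENNReal.ofReal p)
    (by simpa using hp) hg
  rw [eLpNorm_one_eq_lintegral_enorm, eLpNorm_eq_lintegral_rpow_enorm_toReal (by simpa using hp0)
    (by simp), ENNReal.toReal_ofReal hp0.le] at h2
  calc _ ≤ ((∫⁻ x, ‖g x‖ₑ ^ p ∂P) ^ (1 / p)) ^ p := by gcongr; exact h1.trans h2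
    _ = _ := by rw [← ENNReal.rpow_mul, one_div_mul_cancel hp0.ne', ENNReal.rpow_one]

lemma jensen_dirac (P : Measure X) [IsProbabilityMeasure P] {p : ℝ} (hp : 1 ≤ p)
    [CompleteSpace G] (f : X → G)
    (hf : Integrable f P) (v : G) :
    ‖(∫ x, f x ∂P) - v‖ₑ ^ p ≤ ∫⁻ x, ‖f x - v‖ₑ ^ p ∂P := by
  have : (∫ x, f x ∂P) - v = ∫ x, (f x - v) ∂P := by
    rw [integral_sub hf (integrable_const v)]; simp
  rw [this]
  exact jensen1 P hp _ (hf.sub (integrable_const v)).1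

lemma jensen2 (P Q : Measure X) [IsProbabilityMeasure P] [IsProbabilityMeasure Q] {p : ℝ}
    (hp : 1 ≤ p) [CompleteSpace G] (f : X → G)
    (hf : Integrable f P) (hf' : Integrable f Q) :
    ‖(∫ x, f x ∂P) - ∫ x, f x ∂Q‖ₑ ^ p ≤ ∫⁻ x, ∫⁻ y, ‖f x - f y‖ₑ ^ p ∂Q ∂P := by
  refine (jensen_dirac P hp f hf _).trans (lintegral_mono fun x => ?_)
  rw [← enorm_neg, neg_sub]
  refine (jensen_dirac Q hp f hf' _).trans (lintegral_mono fun y => ?_)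
  rw [← enorm_neg, neg_sub]

lemma norm_ge_of_avg (P : Measure X) [IsProbabilityMeasure P] {p : ℝ} (hp : 1 ≤ p)
    [CompleteSpace G] (f : X → G) (hf : Integrable f P) (h1 : ∀ x, ‖f x‖ = 1) (δ : ℝ) (hδ : 0 ≤ δ)
    (h : ∫⁻ x, ∫⁻ y, ‖f x - f y‖ₑ ^ p ∂P ∂P ≤ ENNReal.ofReal (δ ^ p))
    (hm : AEMeasurable (fun x => ∫⁻ y, ‖f x - f y‖ₑ ^ p ∂P) P) :
    1 - δ ≤ ‖∫ x, f x ∂P‖ := by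
  obtain ⟨x, hx⟩ := exists_le_lintegral hm
  have h2 : ‖(∫ x, f x ∂P) - f x‖ₑ ^ p ≤ ENNReal.ofReal (δ ^ p) := by
    refine (jensen_dirac P hp f hf _).trans ?_
    refine le_trans (lintegral_mono fun y => ?_) (hx.trans h)
    rw [← enorm_neg, neg_sub]
  rw [← ENNReal.ofReal_rpow_of_nonneg hδ (by linarith),
    ENNReal.rpow_le_rpow_iff (by linarith)] at h2
  rw [← ofReal_norm, ENNReal.ofReal_le_ofReal_iff hδ] at h2
  have h3 := norm_sub_norm_le (f x) (f x - ∫ x, f x ∂P)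
  rw [norm_sub_rev] at h2
  simp only [sub_sub_cancel, h1] at h3
  linarith
end jensen

section avg
variable {X G : Type*} [MetricSpace X] [MeasurableSpace X] [BorelSpace X]
  [NormedAddCommGroup G] [NormedSpace ℝ G]

lemma enorm_rpow_eq {p : ℝ} (hp : 0 ≤ p) (v : G) : ‖v‖ₑ ^ p = ENNReal.ofReal (‖v‖ ^ p) := by
  rw [← ofReal_norm, ENNReal.ofReal_rpow_of_nonneg (norm_nonneg _) hp]

lemma enorm_le_en (n : ℕ) {p : ℝ} (hp : 0 < p) (v : X → G) (x y : X) (D : ℝ) (h : dist x y ≤ D) :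
    ‖v x - v y‖ₑ ^ p ≤ ENNReal.ofReal (D ^ (2 * n)) * en n p v x y := by
  have hD : 0 ≤ D := dist_nonneg.trans h
  rw [enorm_rpow_eq hp.le, en, ← ENNReal.ofReal_mul (by positivity)]
  apply ENNReal.ofReal_le_ofReal
  rcases eq_or_ne x y with rfl | hxy
  · simp [Real.zero_rpow hp.ne']
  · have hd : 0 < dist x y := dist_pos.2 hxy
    rw [dist_rpow_two_mul, ← pow_mul, ← mul_div_assoc, le_div_iff₀ (by positivity), mul_comm]
    gcongr

lemma avg_le (n : ℕ) {p : ℝ} (hp : 0 < p) (v : X → G) (P Q : Measure X) (A B : ℝ≥0∞) (hB : B ≠ ∞) (S T : Set X)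
    (hS : MeasurableSet S) (hT : MeasurableSet T)
    (hP : P ≤ A • (μH[n] : Measure X).restrict S) (hQ : Q ≤ B • (μH[n] : Measure X).restrict T)
    (D : ℝ) (hD : ∀ x ∈ S, ∀ y ∈ T, dist x y ≤ D) :
    ∫⁻ x, ∫⁻ y, ‖v x - v y‖ₑ ^ p ∂Q ∂P ≤ ENNReal.ofReal (D ^ (2 * n)) * A * B * Em n p v S T := by
  have h1 : ∀ x ∈ S, ∫⁻ y, ‖v x - v y‖ₑ ^ p ∂Q ≤
      B * (ENNReal.ofReal (D ^ (2 * n)) * ∫⁻ y in T, en n p v x y ∂μH[n]) := by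
    intro x hx
    refine (lintegral_mono' hQ le_rfl).trans ?_
    rw [lintegral_smul_measure, smul_eq_mul]
    gcongr
    rw [← lintegral_const_mul' _ _ ENNReal.ofReal_ne_top]
    exact setLIntegral_mono' hT fun y hy => enorm_le_en n hp v x y D (hD x hx y hy)
  refine (lintegral_mono' hP le_rfl).trans ?_
  rw [lintegral_smul_measure, smul_eq_mul]
  refine (mul_le_mul_right (setLIntegral_mono' hS h1) A).trans ?_
  rw [lintegral_const_mul' _ _ hB, lintegral_const_mul' _ _ ENNReal.ofReal_ne_top, Em]
  apply le_of_eq; ring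
end avg

section st
variable (n : ℕ) (a : Sph n)

/-- stereographic chart centred at `a` -/
def st : Chart n := (exists_stereo n a).choose

lemma st_zero : (st n a).τ 0 = a := (exists_stereo n a).choose_spec.1

lemma st_lam (x : Fn n) : (st n a).lam x = 4 / (‖x‖ ^ 2 + 4) := (exists_stereo n a).choose_spec.2 x

lemma st_dist (x : Fn n) : dist ((st n a).τ x) a ^ 2 = 4 * ‖x‖ ^ 2 / (‖x‖ ^ 2 + 4) := by
  have := (st n a).conf x 0
  rw [st_zero, st_lam, st_lam] at this
  rw [this, dist_zero_right]; simp; ring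

lemma st_lip (x y : Fn n) : dist ((st n a).τ x) ((st n a).τ y) ≤ dist x y := by
  apply le_of_sq_le_sq0 _ dist_nonneg
  rw [(st n a).conf, st_lam, st_lam]
  have h : ∀ z : Fn n, 4 / (‖z‖ ^ 2 + 4) ≤ 1 := fun z => by
    rw [div_le_one (by positivity)]; nlinarith [sq_nonneg ‖z‖]
  have h1 : 4 / (‖x‖ ^ 2 + 4) * (4 / (‖y‖ ^ 2 + 4)) ≤ 1 := mul_le_one₀ (h x) (by positivity) (h y)
  nlinarith [sq_nonneg (dist x y)]

lemma dist_neg_self (a : Sph n) : dist (-a) a = 2 := by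
  have : dist (-a) a ^ 2 = 2 ^ 2 := by
    rw [dist_sq_sph]; simp; norm_num
  exact (pow_left_inj₀ dist_nonneg (by norm_num) two_ne_zero).1 this

lemma st_pt : (st n a).pt = -a := by
  by_contra h
  have h1 : -a ∈ range (st n a).τ := by
    rw [(st n a).range_eq]; exact fun h2 => h (mem_singleton_iff.1 h2).symm
  obtain ⟨x, hx⟩ := h1
  have h2 := st_dist n a x
  rw [hx, dist_neg_self, eq_div_iff (by positivity)] at h2
  linarith

lemma dist_le_two (x y : Sph n) : dist x y ≤ 2 := by
  have h := dist_triangle x.1 0 y.1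
  have h1 : dist x.1 0 = 1 := x.2
  have h2 : dist 0 y.1 = 1 := by rw [dist_comm]; exact y.2
  rw [h1, h2] at h
  rw [Subtype.dist_eq]; linarith

lemma ball_sub_st {s : ℝ} (hs1 : s ≤ 1) :
    Metric.ball a s ⊆ (st n a).τ '' Metric.ball 0 (2 * s) := by
  intro y hy
  have hy' : dist y a < s := hy
  have hs : 0 < s := dist_nonneg.trans_lt hy'
  have h1 : y ∈ range (st n a).τ := by
    rw [(st n a).range_eq, st_pt]
    rintro rfl
    rw [dist_neg_self] at hy'; linarith
  obtain ⟨x, rfl⟩ := h1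
  refine ⟨x, ?_, rfl⟩
  have h2 := st_dist n a x
  have h3 : dist ((st n a).τ x) a ^ 2 < s ^ 2 := by gcongr
  rw [h2, div_lt_iff₀ (by positivity)] at h3
  rw [mem_ball_zero_iff]
  by_contra h4
  push Not at h4
  have h5 : s ^ 2 ≤ 1 := by nlinarith
  have h6 : (2 * s) ^ 2 ≤ ‖x‖ ^ 2 := by gcongr
  nlinarith [mul_le_mul_of_nonneg_right h5 (sq_nonneg ‖x‖)]

lemma st_sub_ball (s : ℝ) : (st n a).τ '' Metric.ball 0 s ⊆ Metric.ball a s := by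
  rintro _ ⟨x, hx, rfl⟩
  have := st_lip n a x 0
  rw [st_zero] at this
  exact this.trans_lt hx

lemma muS_ball_le {s : ℝ} (hs : 0 < s) (hs1 : s ≤ 1) : (μH[(n : ℝ)] : Measure (Sph n)) (Metric.ball a s) ≤
    ENNReal.ofReal ((2 * s) ^ n) * (μH[(n : ℝ)] : Measure (Fn n)) (Metric.ball 0 1) := by
  refine (measure_mono (ball_sub_st n a hs1)).trans ?_
  have hl : LipschitzWith 1 (st n a).τ := LipschitzWith.of_dist_le_mul fun x y => by
    simpa using st_lip n a x y
  refine (hl.lipschitzOnWith.hausdorffMeasure_image_le (Nat.cast_nonneg n)).trans ?_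
  rw [Measure.addHaar_ball_of_pos _ _ (by positivity)]
  simp

instance muS_fin : IsFiniteMeasure (μH[(n : ℝ)] : Measure (Sph n)) := by
  have : IsLocallyFiniteMeasure (μH[(n : ℝ)] : Measure (Sph n)) := by
    refine ⟨fun a => ⟨Metric.ball a 1, Metric.ball_mem_nhds a one_pos, ?_⟩⟩
    refine (muS_ball_le n a one_pos le_rfl).trans_lt ?_
    exact ENNReal.mul_lt_top ENNReal.ofReal_lt_top measure_ball_lt_top
  infer_instance

lemma conf_meas (c : Chart n) {A : Set (Fn n)} (hA : MeasurableSet A) :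
    (μH[(n : ℝ)] : Measure (Sph n)) (c.τ '' A) =
      ∫⁻ x in A, ENNReal.ofReal (c.lam x ^ n) ∂μH[(n : ℝ)] := by
  have := conf_lintegral n c.τ c.emb.measurableEmbedding c.lam c.lam_meas c.lam_pos c.conf hA
    (fun _ => 1) measurable_const
  simpa using this

lemma le_muS_ball {s : ℝ} (hs : 0 < s) (hs4 : s ≤ 4) :
    ENNReal.ofReal ((s / 5) ^ n) * (μH[(n : ℝ)] : Measure (Fn n)) (Metric.ball 0 1) ≤
      (μH[(n : ℝ)] : Measure (Sph n)) (Metric.ball a s) := by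
  refine le_trans ?_ (measure_mono (st_sub_ball n a s))
  rw [conf_meas n _ measurableSet_ball]
  have h1 : ∫⁻ x in Metric.ball (0 : Fn n) s, ENNReal.ofReal ((1 / 5) ^ n) ∂μH[(n : ℝ)] ≤
      ∫⁻ x in Metric.ball (0 : Fn n) s, ENNReal.ofReal ((st n a).lam x ^ n) ∂μH[(n : ℝ)] := by
    refine setLIntegral_mono' measurableSet_ball fun x hx => ?_
    apply ENNReal.ofReal_le_ofReal
    rw [mem_ball_zero_iff] at hx
    gcongr
    rw [st_lam, div_le_div_iff₀ (by norm_num) (by positivity)]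
    nlinarith [norm_nonneg x]
  refine le_trans ?_ h1
  rw [setLIntegral_const, Measure.addHaar_ball_of_pos _ _ hs, ← mul_assoc,
    ← ENNReal.ofReal_mul (by positivity)]
  simp only [finrank_euclideanSpace, Fintype.card_fin]
  rw [← mul_pow]
  apply le_of_eq; congr 3; ring

/-- measure of balls of the sphere -/
theorem muS_ball : ∃ c1 c2 : ℝ, 0 < c1 ∧ 0 < c2 ∧ ∀ (a : Sph n) (s : ℝ), 0 < s →
    (s ≤ 4 → c1 * s ^ n ≤ (μH[(n : ℝ)] : Measure (Sph n)).real (Metric.ball a s)) ∧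
      (μH[(n : ℝ)] : Measure (Sph n)).real (Metric.ball a s) ≤ c2 * s ^ n := by
  set ω := (μH[(n : ℝ)] : Measure (Fn n)).real (Metric.ball 0 1) with hω
  have hω0 : 0 < ω := ENNReal.toReal_pos (Metric.measure_ball_pos _ _ one_pos).ne'
    measure_ball_lt_top.ne
  refine ⟨(1 / 5) ^ n * ω, 2 ^ n * ω + (μH[(n : ℝ)] : Measure (Sph n)).real univ, by positivity,
    by positivity, fun a s hs => ⟨fun hs4 => ?_, ?_⟩⟩
  · have := ENNReal.toReal_mono (measure_ne_top _ _) (le_muS_ball n a hs hs4)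
    rw [ENNReal.toReal_mul, ENNReal.toReal_ofReal (by positivity)] at this
    refine le_trans (le_of_eq ?_) this
    simp only [Measure.real] at hω
    rw [← hω, div_pow, div_pow]; ring
  · rcases le_total s 1 with h1 | h1
    · have := ENNReal.toReal_mono (by
        exact (ENNReal.mul_lt_top ENNReal.ofReal_lt_top measure_ball_lt_top).ne)
        (muS_ball_le n a hs h1)
      rw [ENNReal.toReal_mul, ENNReal.toReal_ofReal (by positivity)] at this
      simp only [Measure.real] at hω
      rw [← hω, mul_pow] at this
      have h2 : 0 ≤ (μH[(n : ℝ)] : Measure (Sph n)).real univ * s ^ n := by positivity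
      rw [Measure.real]
      linarith
    · have h2 : (μH[(n : ℝ)] : Measure (Sph n)).real (Metric.ball a s) ≤
          (μH[(n : ℝ)] : Measure (Sph n)).real univ := measureReal_mono (subset_univ _)
      have h3 : 1 ≤ s ^ n := one_le_pow₀ h1
      have h4 : 0 ≤ (μH[(n : ℝ)] : Measure (Sph n)).real univ := by positivity
      have h5 : 0 ≤ 2 ^ n * ω * s ^ n := by positivity
      nlinarith
end st

lemma sphEnergy_eq (n m : ℕ) (s : ℝ) (u : Sph n → Sph m) :
    sphEnergy n m s u = Em n ((n : ℝ) / s) (fun x => (u x : Fn (m + 1))) univ univ := by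
  simp [sphEnergy, Em, en]


section mav
variable {n : ℕ}

/-- averaging kernel -/
def akr (t : ℝ) (x y : Sph n) : ℝ := max 0 (t - dist x y)

/-- total mass of the averaging kernel -/
def den (t : ℝ) (x : Sph n) : ℝ := ∫ y, akr t x y ∂(μH[(n : ℝ)] : Measure (Sph n))

/-- average at scale `t` -/
def Mav {m : ℕ} (t : ℝ) (u : Sph n → Fn m) (x : Sph n) : Fn m :=
  (den t x)⁻¹ • ∫ y, akr t x y • u y ∂(μH[(n : ℝ)] : Measure (Sph n))

/-- averaging measure -/
def Pm (t : ℝ) (x : Sph n) : Measure (Sph n) :=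
  (μH[(n : ℝ)] : Measure (Sph n)).withDensity fun y => ENNReal.ofReal (akr t x y / den t x)

lemma ker_cont : Continuous fun z : (ℝ × Sph n) × Sph n => akr z.1.1 z.1.2 z.2 := by
  unfold akr; fun_prop

lemma ker_cont' (t : ℝ) (x : Sph n) : Continuous (akr t x) := by
  unfold akr; fun_prop

lemma ker_nonneg (t : ℝ) (x y : Sph n) : 0 ≤ akr t x y := le_max_left _ _

lemma integrable_of_cont {G : Type*} [NormedAddCommGroup G] [SecondCountableTopology G]
    [MeasurableSpace G] [BorelSpace G] (P : Measure (Sph n)) [IsFiniteMeasure P]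
    {f : Sph n → G} (hf : Continuous f) : Integrable f P := by
  rw [← integrableOn_univ]
  exact hf.continuousOn.integrableOn_compact isCompact_univ

lemma den_cont : Continuous fun z : ℝ × Sph n => den z.1 z.2 := by
  have := continuous_parametric_integral_of_continuous (μ := (μH[(n : ℝ)] : Measure (Sph n)))
    (f := fun (z : ℝ × Sph n) y => akr z.1 z.2 y) ker_cont (s := univ) isCompact_univ
  simpa [den] using this

lemma num_cont {m : ℕ} (u : Sph n → Fn m) (hu : Continuous u) : Continuous fun z : ℝ × Sph n =>
    ∫ y, akr z.1 z.2 y • u y ∂(μH[(n : ℝ)] : Measure (Sph n)) := by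
  have := continuous_parametric_integral_of_continuous (μ := (μH[(n : ℝ)] : Measure (Sph n)))
    (f := fun (z : ℝ × Sph n) y => akr z.1 z.2 y • u y)
    (by have := ker_cont (n := n); fun_prop) (s := univ) isCompact_univ
  simpa using this

/-- lower bound of the mass -/
theorem den_ge : ∃ c : ℝ, 0 < c ∧ ∀ (t : ℝ) (x : Sph n), 0 < t → t ≤ 4 → c * (t * t ^ n) ≤ den t x := by
  obtain ⟨c1, c2, h1, h2, h⟩ := muS_ball n
  refine ⟨c1 / 2 ^ (n + 1), by positivity, fun t x ht ht4 => ?_⟩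
  have h3 := (h x (t / 2) (by positivity)).1 (by linarith)
  have h4 : ∫ y in Metric.ball x (t / 2), (t / 2) ∂(μH[(n : ℝ)] : Measure (Sph n)) ≤ den t x := by
    rw [den, ← setIntegral_univ (f := fun y => akr t x y)]
    refine (setIntegral_mono_on (integrable_const _) (g := akr t x)
      (integrable_of_cont _ (ker_cont' t x)) measurableSet_ball ?_).trans ?_
    · intro y hy
      have : dist y x < t / 2 := hy
      rw [dist_comm] at this
      exact le_max_of_le_right (by linarith)
    · refine setIntegral_mono_set (integrable_of_cont _ (ker_cont' t x)) ?_ ?_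
      · exact Eventually.of_forall fun y => ker_nonneg t x y
      · exact (subset_univ _).eventuallyLE
  refine le_trans ?_ h4
  rw [setIntegral_const, smul_eq_mul]
  calc _ = c1 * (t / 2) ^ n * (t / 2) := by rw [div_pow]; field_simp; ring
    _ ≤ _ := by gcongr

lemma den_pos (t : ℝ) (x : Sph n) (ht : 0 < t) (ht4 : t ≤ 4) : 0 < den t x := by
  obtain ⟨c, hc, h⟩ := den_ge (n := n)
  exact lt_of_lt_of_le (by positivity) (h t x ht ht4)

lemma Pm_prob (t : ℝ) (x : Sph n) (ht : 0 < t) (ht4 : t ≤ 4) : IsProbabilityMeasure (Pm t x) := by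
  constructor
  have hd := den_pos t x ht ht4
  rw [Pm, withDensity_apply _ MeasurableSet.univ, setLIntegral_univ,
    ← ofReal_integral_eq_lintegral_ofReal]
  · rw [integral_div]
    show ENNReal.ofReal (den t x / den t x) = 1
    rw [div_self hd.ne', ENNReal.ofReal_one]
  · exact integrable_of_cont _ ((ker_cont' t x).div_const _)
  · exact Eventually.of_forall fun y => div_nonneg (ker_nonneg t x y) hd.le

lemma Mav_eq {m : ℕ} (t : ℝ) (x : Sph n) (ht : 0 < t) (ht4 : t ≤ 4) (u : Sph n → Fn m) :
    Mav t u x = ∫ y, u y ∂(Pm t x) := by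
  have hd := den_pos t x ht ht4
  rw [Mav, Pm, integral_withDensity_eq_integral_toReal_smul, ← integral_smul]
  · apply integral_congr_ae
    refine Eventually.of_forall fun y => ?_
    simp only
    rw [ENNReal.toReal_ofReal (div_nonneg (ker_nonneg t x y) hd.le), smul_smul]
    congr 1; ring
  · exact ((ker_cont' t x).div_const _).measurable.ennreal_ofReal
  · exact Eventually.of_forall fun y => ENNReal.ofReal_lt_top

theorem Pm_le : ∃ C : ℝ, 0 < C ∧ ∀ (t : ℝ) (x : Sph n), 0 < t → t ≤ 4 →
    Pm t x ≤ ENNReal.ofReal (C / t ^ n) • (μH[(n : ℝ)] : Measure (Sph n)).restrict (Metric.ball x t) := by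
  obtain ⟨c, hc, h⟩ := den_ge (n := n)
  refine ⟨1 / c, by positivity, fun t x ht ht4 => ?_⟩
  have hd := den_pos t x ht ht4
  have h2 := h t x ht ht4
  have e : ENNReal.ofReal (1 / c / t ^ n) • (μH[(n : ℝ)] : Measure (Sph n)).restrict (Metric.ball x t)
      = (μH[(n : ℝ)] : Measure (Sph n)).withDensity
        ((Metric.ball x t).indicator fun _ => ENNReal.ofReal (1 / c / t ^ n)) := by
    rw [withDensity_indicator measurableSet_ball, withDensity_const]
  rw [e, Pm]
  apply withDensity_mono
  refine Eventually.of_forall fun y => ?_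
  by_cases hy : y ∈ Metric.ball x t
  · simp only [indicator_of_mem hy]
    apply ENNReal.ofReal_le_ofReal
    have hk : akr t x y ≤ t := max_le ht.le (by linarith [dist_nonneg (x := x) (y := y)])
    rw [div_div, div_le_div_iff₀ hd (by positivity), one_mul]
    calc akr t x y * (c * t ^ n) ≤ t * (c * t ^ n) := by gcongr
      _ = c * (t * t ^ n) := by ring
      _ ≤ _ := h2
  · simp only [indicator_of_notMem hy]
    have : t ≤ dist x y := by simpa [dist_comm] using hy
    have : akr t x y = 0 := max_eq_left (by linarith)
    simp [this]
end mav


/-- a sphere valued map seen as a vector valued map -/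
def cv {X : Type*} {m : ℕ} (u : X → Sph m) (x : X) : Fn (m + 1) := u x

lemma cv_norm {X : Type*} {m : ℕ} (u : X → Sph m) (x : X) : ‖cv u x‖ = 1 := by simp [cv]

lemma cv_cont {X : Type*} [TopologicalSpace X] {m : ℕ} {u : X → Sph m} (hu : Continuous u) :
    Continuous (cv u) := continuous_subtype_val.comp hu

section
variable {n m : ℕ}

lemma lint_meas {X G : Type*} [TopologicalSpace X] [SecondCountableTopology X] [MeasurableSpace X]
    [BorelSpace X]
    [NormedAddCommGroup G] (p : ℝ) (f : X → G) (hf : Continuous f) (P : Measure X) [SFinite P] :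
    Measurable (fun x => ∫⁻ y, ‖f x - f y‖ₑ ^ p ∂P) := by
  have : Measurable fun z : X × X => ‖f z.1 - f z.2‖ₑ ^ p :=
    ((by fun_prop : Continuous fun z : X × X => ‖f z.1 - f z.2‖ₑ).measurable).pow_const p
  exact this.lintegral_prod_right'

theorem Pm_avg (p : ℝ) (hp : 0 < p) : ∃ C : ℝ, 0 < C ∧ ∀ (v : Sph n → Fn (m + 1)) (t t' D : ℝ)
    (x x' : Sph n),
    0 < t → t ≤ 4 → 0 < t' → t' ≤ 4 → 
    (∀ y ∈ Metric.ball x t, ∀ z ∈ Metric.ball x' t', dist y z ≤ D) →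
    ∫⁻ y, ∫⁻ z, ‖v y - v z‖ₑ ^ p ∂(Pm t' x') ∂(Pm t x) ≤
      ENNReal.ofReal (C * D ^ (2 * n) / (t ^ n * t' ^ n)) *
        Em n p v (Metric.ball x t) (Metric.ball x' t') := by
  obtain ⟨C, hC, h⟩ := Pm_le (n := n)
  refine ⟨C * C, by positivity, fun v t t' D x x' ht ht4 ht' ht4' hD => ?_⟩
  refine (avg_le n hp v _ _ _ _ ENNReal.ofReal_ne_top _ _ measurableSet_ball measurableSet_ball
    (h t x ht ht4) (h t' x' ht' ht4') D hD).trans (le_of_eq ?_)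
  congr 1
  have hD0 : 0 ≤ D := dist_nonneg.trans (hD x (Metric.mem_ball_self ht) x' (Metric.mem_ball_self ht'))
  rw [← ENNReal.ofReal_mul (by positivity), ← ENNReal.ofReal_mul (by positivity)]
  congr 1; field_simp

theorem Mav_norm (p : ℝ) (hp : 1 ≤ p) : ∃ C : ℝ, 0 < C ∧ ∀ (u : Sph n → Sph m) (t δ : ℝ) (x : Sph n),
    Continuous u → 0 < t → t ≤ 4 → 0 ≤ δ →
    ENNReal.ofReal C * Em n p (cv u) (Metric.ball x t) univ ≤ ENNReal.ofReal (δ ^ p) →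
    1 - δ ≤ ‖Mav t (cv u) x‖ := by
  obtain ⟨C, hC, h⟩ := Pm_avg (n := n) (m := m) p (by linarith)
  refine ⟨C * 2 ^ (2 * n), by positivity, fun u t δ x hu ht ht4 hδ hE => ?_⟩
  have := Pm_prob t x ht ht4
  rw [Mav_eq t x ht ht4]
  refine norm_ge_of_avg _ hp (cv u) (integrable_of_cont _ (cv_cont hu)) (cv_norm u) δ hδ ?_ ?_
  · refine le_trans ?_ hE
    refine (h (cv u) t t (2 * t) x x ht ht4 ht ht4 ?_).trans ?_
    · intro y hy z hz
      rw [Metric.mem_ball] at hy hz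
      linarith [dist_triangle_right y z x]
    · refine mul_le_mul' (le_of_eq ?_) (Em_mono n p _ subset_rfl (subset_univ _))
      congr 1
      rw [mul_pow]; field_simp; ring
  · exact (lint_meas p _ (cv_cont hu) _).aemeasurable

theorem Mav_diff (p : ℝ) (hp : 1 ≤ p) : ∃ C : ℝ, 0 < C ∧ ∀ (u : Sph n → Sph m) (t : ℝ) (x : Sph n),
    Continuous u → 0 < t → t ≤ 4 →
    ‖Mav t (cv u) x - Mav (t / 3) (cv u) x‖ₑ ^ p ≤
      ENNReal.ofReal C * Em n p (cv u) (Metric.ball x t) univ := by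
  obtain ⟨C, hC, h⟩ := Pm_avg (n := n) (m := m) p (by linarith)
  refine ⟨C * 12 ^ n, by positivity, fun u t x hu ht ht4 => ?_⟩
  have := Pm_prob t x ht ht4
  have := Pm_prob (t / 3) x (by positivity) (by linarith)
  rw [Mav_eq t x ht ht4, Mav_eq (t / 3) x (by positivity) (by linarith)]
  refine (jensen2 _ _ hp (cv u) (integrable_of_cont _ (cv_cont hu))
    (integrable_of_cont _ (cv_cont hu))).trans ?_
  refine (h (cv u) t (t / 3) (2 * t) x x ht ht4 (by positivity) (by linarith) ?_).trans ?_
  · intro y hy z hz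
    rw [Metric.mem_ball] at hy hz
    linarith [dist_triangle_right y z x]
  · refine mul_le_mul' (le_of_eq ?_) (Em_mono n p _ subset_rfl (subset_univ _))
    congr 1
    rw [mul_pow, div_pow, pow_mul, pow_mul, show (12 : ℝ) = 2 ^ 2 * 3 by norm_num, mul_pow]
    field_simp
    ring

theorem Mav_four (p : ℝ) (hp : 1 ≤ p) : ∃ C : ℝ, 0 < C ∧ ∀ (u : Sph n → Sph m) (x x' : Sph n),
    Continuous u →
    ‖Mav 4 (cv u) x - Mav 4 (cv u) x'‖ₑ ^ p ≤ ENNReal.ofReal C * Em n p (cv u) univ univ := by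
  obtain ⟨C, hC, h⟩ := Pm_avg (n := n) (m := m) p (by linarith)
  refine ⟨C * 2 ^ (2 * n) / (4 ^ n * 4 ^ n), by positivity, fun u x x' hu => ?_⟩
  have := Pm_prob 4 x (by norm_num) (by norm_num)
  have := Pm_prob 4 x' (by norm_num) (by norm_num)
  rw [Mav_eq 4 x (by norm_num) (by norm_num), Mav_eq 4 x' (by norm_num) (by norm_num)]
  refine (jensen2 _ _ hp (cv u) (integrable_of_cont _ (cv_cont hu))
    (integrable_of_cont _ (cv_cont hu))).trans ?_
  refine (h (cv u) 4 4 2 x x' (by norm_num) (by norm_num) (by norm_num) (by norm_num)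
    (fun y _ z _ => dist_le_two n y z)).trans ?_
  gcongr
  exact Em_mono n p _ (subset_univ _) (subset_univ _)

theorem Mav_Lp (p : ℝ) (hp : 1 ≤ p) : ∃ C : ℝ, 0 < C ∧ ∀ (u : Sph n → Sph m) (t : ℝ),
    Continuous u → 0 < t → t ≤ 4 →
    ∫⁻ x, ‖Mav t (cv u) x - cv u x‖ₑ ^ p ∂(μH[(n : ℝ)] : Measure (Sph n)) ≤
      ENNReal.ofReal (C * t ^ n) * Em n p (cv u) univ univ := by
  obtain ⟨C, hC, h⟩ := Pm_le (n := n)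
  refine ⟨C, hC, fun u t hu ht ht4 => ?_⟩
  rw [Em, ← lintegral_const_mul' _ _ ENNReal.ofReal_ne_top, setLIntegral_univ]
  refine lintegral_mono fun x => ?_
  have := Pm_prob t x ht ht4
  rw [Mav_eq t x ht ht4]
  refine (jensen_dirac _ hp (cv u) (integrable_of_cont _ (cv_cont hu)) _).trans ?_
  refine (lintegral_mono' (h t x ht ht4) le_rfl).trans ?_
  rw [lintegral_smul_measure, smul_eq_mul]
  have h2 : ∫⁻ y in Metric.ball x t, ‖cv u y - cv u x‖ₑ ^ p ∂(μH[(n : ℝ)] : Measure (Sph n)) ≤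
      ENNReal.ofReal (t ^ (2 * n)) * ∫⁻ y in univ, en n p (cv u) x y ∂μH[(n : ℝ)] := by
    rw [← lintegral_const_mul' _ _ ENNReal.ofReal_ne_top]
    refine le_trans (setLIntegral_mono' measurableSet_ball fun y hy => ?_)
      (lintegral_mono_set (subset_univ _))
    rw [Metric.mem_ball, dist_comm] at hy
    have := enorm_le_en n (p := p) (by linarith) (cv u) x y t hy.le
    rwa [← enorm_neg, neg_sub] at this
  refine (mul_le_mul' le_rfl h2).trans (le_of_eq ?_)
  rw [← mul_assoc, ← ENNReal.ofReal_mul (by positivity)]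
  congr 2
  field_simp; ring

lemma akr_lip (t : ℝ) (x x' y : Sph n) : |akr t x y - akr t x' y| ≤ dist x x' := by
  unfold akr
  refine (abs_max_sub_max_le_max _ _ _ _).trans ?_
  rw [sub_self, abs_zero, max_eq_right (abs_nonneg _), show t - dist x y - (t - dist x' y) =
    dist x' y - dist x y by ring]
  have := abs_dist_sub_le x' x y
  rwa [dist_comm x' x] at this

theorem Mav_lip (t : ℝ) (ht : 0 < t) (ht4 : t ≤ 4) : ∃ L : ℝ, 0 ≤ L ∧ ∀ (u : Sph n → Sph m)
    (x x' : Sph n), Continuous u →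
    ‖Mav t (cv u) x - Mav t (cv u) x'‖ ≤ L * dist x x' := by
  obtain ⟨c, hc, h⟩ := den_ge (n := n)
  set V := (μH[(n : ℝ)] : Measure (Sph n)).real univ with hV
  have hV0 : 0 ≤ V := by positivity
  refine ⟨2 * V / (c * (t * t ^ n)), by positivity, fun u x x' hu => ?_⟩
  have hd := h t x ht ht4
  have hp := den_pos t x ht ht4
  have hp' := den_pos t x' ht ht4
  set N : Sph n → Fn (m + 1) := fun x => ∫ y, akr t x y • cv u y ∂(μH[(n : ℝ)] : Measure (Sph n)) with hN
  have i1 : ∀ x, Integrable (akr t x) (μH[(n : ℝ)] : Measure (Sph n)) := fun x =>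
    integrable_of_cont _ (ker_cont' t x)
  have i2 : ∀ x, Integrable (fun y => akr t x y • cv u y) (μH[(n : ℝ)] : Measure (Sph n)) := fun x =>
    integrable_of_cont _ ((ker_cont' t x).smul (cv_cont hu))
  have h1 : ‖N x - N x'‖ ≤ dist x x' * V := by
    rw [hN]; simp only
    rw [← integral_sub (i2 x) (i2 x')]
    refine norm_integral_le_of_norm_le_const (Eventually.of_forall fun y => ?_)
    rw [← sub_smul, norm_smul, cv_norm, mul_one]
    exact akr_lip t x x' y
  have h2 : |den t x - den t x'| ≤ dist x x' * V := by
    unfold den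
    rw [← integral_sub (i1 x) (i1 x'), ← Real.norm_eq_abs]
    exact norm_integral_le_of_norm_le_const (Eventually.of_forall fun y => akr_lip t x x' y)
  have h3 : ‖N x'‖ ≤ den t x' := by
    refine (norm_integral_le_integral_norm _).trans (le_of_eq ?_)
    unfold den; congr 1; ext1 y
    rw [norm_smul, cv_norm, mul_one, Real.norm_eq_abs, abs_of_nonneg (ker_nonneg t x' y)]
  have e : Mav t (cv u) x - Mav t (cv u) x' = (den t x)⁻¹ • (N x - N x') +
      ((den t x)⁻¹ * (den t x' - den t x) * (den t x')⁻¹) • N x' := by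
    show (den t x)⁻¹ • N x - (den t x')⁻¹ • N x' = _
    rw [smul_sub, sub_add, ← sub_smul]; congr 2; field_simp; ring
  rw [e]
  refine (norm_add_le _ _).trans ?_
  rw [norm_smul, norm_smul, norm_mul, norm_mul, norm_inv, norm_inv]
  simp only [Real.norm_eq_abs, abs_of_pos hp, abs_of_pos hp']
  rw [abs_sub_comm]
  calc _ ≤ (den t x)⁻¹ * (dist x x' * V) + (den t x)⁻¹ * (dist x x' * V) * (den t x')⁻¹ * den t x' := by
        gcongr
    _ = 2 * V * (den t x)⁻¹ * dist x x' := by field_simp; ring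
    _ ≤ 2 * V * (c * (t * t ^ n))⁻¹ * dist x x' := by gcongr
    _ = _ := by ring

lemma Mav_cont (t : ℝ) (ht : 0 < t) (ht4 : t ≤ 4) (u : Sph n → Sph m) (hu : Continuous u) :
    Continuous (Mav t (cv u)) := by
  obtain ⟨L, hL, h⟩ := Mav_lip (n := n) (m := m) t ht ht4
  exact (LipschitzWith.of_dist_le_mul (K := ⟨L, hL⟩) fun x y => by
    rw [dist_eq_norm]; exact h u x y hu).continuous

lemma Mav_near (t : ℝ) (ht : 0 < t) (ht4 : t ≤ 4) (v : Sph n → Fn (m + 1)) (hv : Continuous v)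
    (x : Sph n) (w : Fn (m + 1)) (δ : ℝ) (h : ∀ y ∈ Metric.ball x t, ‖v y - w‖ ≤ δ) :
    ‖Mav t v x - w‖ ≤ δ := by
  have := Pm_prob t x ht ht4
  rw [Mav_eq t x ht ht4]
  have e : (∫ y, v y ∂(Pm t x)) - w = ∫ y, (v y - w) ∂(Pm t x) := by
    rw [integral_sub (integrable_of_cont _ hv) (integrable_const w)]; simp
  rw [e]
  obtain ⟨C, hC, h2⟩ := Pm_le (n := n)
  have h3 : ∀ᵐ y ∂(Pm t x), ‖v y - w‖ ≤ δ := by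
    have h4 : Pm t x (Metric.ball x t)ᶜ = 0 := by
      refine le_antisymm ((h2 t x ht ht4 _).trans ?_) zero_le
      simp [Measure.restrict_apply measurableSet_ball.compl]
    have h5 : ∀ᵐ y ∂(Pm t x), y ∈ Metric.ball x t := h4
    filter_upwards [h5] with y hy using h y hy
  simpa using norm_integral_le_of_norm_le_const h3

theorem Mav_hom (T : ℝ) (hT : 0 < T) (hT4 : T ≤ 4) (u : Sph n → Sph m) (hu : Continuous u)
    (h0 : ∀ t x, 0 < t → t ≤ T → Mav t (cv u) x ≠ 0) :
    Homotopic u (fun x => proj m (Mav T (cv u) x)) := by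
  classical
  set V : ℝ → Sph n → Fn (m + 1) := fun σ x => if σ ≤ 0 then cv u x else Mav (σ * T) (cv u) x with hV
  refine Homotopic.of_real (fun σ x => proj m (V σ x)) ?_ ?_ ?_
  · apply proj_continuousOn
    · rintro ⟨σ, x⟩ ⟨⟨hσ0, hσ1⟩, -⟩
      rcases hσ0.eq_or_lt with h | h
      · obtain rfl : σ = 0 := h.symm
        rw [ContinuousWithinAt, Metric.tendsto_nhds]
        intro ε hε
        have hc := (cv_cont hu).continuousAt (x := x)
        rw [Metric.continuousAt_iff] at hc
        obtain ⟨d, hd, hc⟩ := hc (ε / 2) (by positivity)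
        have h3 : ∀ᶠ z : ℝ × Sph n in 𝓝[Icc 0 1 ×ˢ univ] (0, x), z ∈ Icc (0 : ℝ) 1 ×ˢ (univ : Set (Sph n)) :=
          eventually_mem_nhdsWithin
        have h4 : ∀ᶠ z : ℝ × Sph n in 𝓝 (0, x), z.1 * T < d / 2 := by
          have : Tendsto (fun z : ℝ × Sph n => z.1 * T) (𝓝 (0, x)) (𝓝 (0 * T)) :=
            (by fun_prop : Continuous fun z : ℝ × Sph n => z.1 * T).tendsto (0, x)
          rw [zero_mul] at this
          exact this.eventually (gt_mem_nhds (by positivity))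
        have h5 : ∀ᶠ z : ℝ × Sph n in 𝓝 (0, x), dist z.2 x < d / 2 := by
          have : Tendsto (fun z : ℝ × Sph n => dist z.2 x) (𝓝 (0, x)) (𝓝 (dist x x)) :=
            (by fun_prop : Continuous fun z : ℝ × Sph n => dist z.2 x).tendsto (0, x)
          rw [dist_self] at this
          exact this.eventually (gt_mem_nhds (by positivity))
        filter_upwards [h3, nhdsWithin_le_nhds h4, nhdsWithin_le_nhds h5] with z z3 z4 z5
        have e0 : V 0 x = cv u x := by simp [hV]
        rw [e0]
        by_cases hz : z.1 ≤ 0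
        · simp only [hV, if_pos hz]
          exact (hc (by linarith)).trans (by linarith)
        · simp only [hV, if_neg hz]
          push Not at hz
          rw [dist_eq_norm]
          refine lt_of_le_of_lt (Mav_near (z.1 * T) (by positivity) (by nlinarith [z3.1.2]) (cv u) (cv_cont hu) z.2
            (cv u x) (ε / 2) ?_) (by linarith)
          intro y hy
          rw [← dist_eq_norm]
          refine (hc ?_).le
          have := dist_triangle y z.2 x
          rw [Metric.mem_ball] at hy
          linarith
      · apply ContinuousAt.continuousWithinAt
        have h1 : (fun z : ℝ × Sph n => Mav (z.1 * T) (cv u) z.2) =ᶠ[𝓝 (σ, x)]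
            fun z : ℝ × Sph n => V z.1 z.2 := by
          have : ∀ᶠ z : ℝ × Sph n in 𝓝 (σ, x), 0 < z.1 :=
            continuous_fst.continuousAt.eventually (lt_mem_nhds h)
          filter_upwards [this] with z hz
          simp only [hV, if_neg (not_le.2 hz)]
        refine ContinuousAt.congr ?_ h1
        unfold Mav
        have c1 : Continuous fun z : ℝ × Sph n => den (z.1 * T) z.2 :=
          den_cont.comp (f := fun z : ℝ × Sph n => (z.1 * T, z.2)) (by fun_prop)
        have c2 := (num_cont (cv u) (cv_cont hu)).comp
          (f := fun z : ℝ × Sph n => (z.1 * T, z.2)) (by fun_prop)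
        refine ContinuousAt.smul (ContinuousAt.inv₀ c1.continuousAt ?_) c2.continuousAt
        exact (den_pos _ _ (by positivity) (by nlinarith)).ne'
    · rintro ⟨σ, x⟩ ⟨⟨hσ0, hσ1⟩, -⟩
      simp only [hV]
      split_ifs with h
      · intro h; have := cv_norm u x; rw [h] at this; simp at this
      · push Not at h
        exact h0 _ _ (by positivity) (by nlinarith)
  · intro x; simp only [hV, le_refl, if_true]; exact proj_coe (u x)
  · intro x; simp [hV, not_le.2 one_pos]
end


section
variable (n m : ℕ)

lemma enorm_rpow_le_iff {G : Type*} [NormedAddCommGroup G] {p : ℝ} (hp : 1 ≤ p) (v : G) {δ : ℝ}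
    (hδ : 0 ≤ δ) (h : ‖v‖ₑ ^ p ≤ ENNReal.ofReal (δ ^ p)) : ‖v‖ ≤ δ := by
  rwa [← ENNReal.ofReal_rpow_of_nonneg hδ (by linarith),
    ENNReal.rpow_le_rpow_iff (by linarith), ← ofReal_norm, ENNReal.ofReal_le_ofReal_iff hδ] at h

lemma ofReal_mul_le {C ε : ℝ} (hC : 0 < C) {E : ℝ≥0∞} (h : E ≤ ENNReal.ofReal (ε / C)) :
    ENNReal.ofReal C * E ≤ ENNReal.ofReal ε := by
  refine (mul_le_mul' le_rfl h).trans ?_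
  rw [← ENNReal.ofReal_mul hC.le, mul_div_cancel₀ _ hC.ne']

theorem Mav_norm' (p : ℝ) (hp : 1 ≤ p) : ∃ ε : ℝ, 0 < ε ∧ ∀ (u : Sph n → Sph m) (T : ℝ) (x : Sph n),
    Continuous u → T ≤ 4 → Em n p (cv u) (Metric.ball x T) univ ≤ ENNReal.ofReal ε →
    ∀ t, 0 < t → t ≤ T → 3 / 4 ≤ ‖Mav t (cv u) x‖ := by
  obtain ⟨C, hC, h⟩ := Mav_norm (n := n) (m := m) p hp
  refine ⟨(1 / 4) ^ p / C, by positivity, fun u T x hu hT hE t ht htT => ?_⟩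
  have := h u t (1 / 4) x hu ht (by linarith) (by norm_num) (ofReal_mul_le hC
    ((Em_mono n p _ (Metric.ball_subset_ball htT) subset_rfl).trans hE))
  linarith

theorem small_null (p : ℝ) (hp : 1 ≤ p) : ∃ ε : ℝ, 0 < ε ∧ ∀ u : Sph n → Sph m, Continuous u →
    Em n p (cv u) univ univ ≤ ENNReal.ofReal ε → NullHomotopic u := by
  obtain ⟨ε, hε, h⟩ := Mav_norm' n m p hp
  obtain ⟨C, hC, h'⟩ := Mav_four (n := n) (m := m) p hp
  refine ⟨min ε ((1 / 4) ^ p / C), by positivity, fun u hu hE => ?_⟩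
  have hE1 : Em n p (cv u) univ univ ≤ ENNReal.ofReal ε :=
    hE.trans (ENNReal.ofReal_le_ofReal (min_le_left _ _))
  have hE2 : Em n p (cv u) univ univ ≤ ENNReal.ofReal ((1 / 4) ^ p / C) :=
    hE.trans (ENNReal.ofReal_le_ofReal (min_le_right _ _))
  have h1 : ∀ t x, 0 < t → t ≤ 4 → 3 / 4 ≤ ‖Mav t (cv u) x‖ := fun t x ht ht4 =>
    h u 4 x hu le_rfl ((Em_mono n p _ (subset_univ _) subset_rfl).trans hE1) t ht ht4
  have h2 := Mav_hom 4 (by norm_num) le_rfl u hu (fun t x ht ht4 h0 => by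
    have := h1 t x ht ht4
    rw [h0] at this; norm_num at this)
  refine ⟨proj m (Mav 4 (cv u) default), h2.trans' (homotopic_proj (Mav_cont 4 (by norm_num) le_rfl u hu)
    continuous_const fun x => ?_)⟩
  have := enorm_rpow_le_iff hp _ (by norm_num) ((h' u x default hu).trans (ofReal_mul_le hC hE2))
  linarith [h1 4 x (by norm_num) le_rfl]
end


section euc
variable {n : ℕ}

/-- the radius function of the annulus -/
def tt (x : Fn n) : ℝ := 1 / 2 * max 0 (1 - |‖x‖ - 2|)

/-- the annulus -/
def An (n : ℕ) : Set (Fn n) := {x | 1 < ‖x‖ ∧ ‖x‖ < 3}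

lemma An_open : IsOpen (An n) :=
  (isOpen_lt continuous_const continuous_norm).inter (isOpen_lt continuous_norm continuous_const)

lemma An_meas : MeasurableSet (An n) := An_open.measurableSet

lemma tt_cont : Continuous (tt (n := n)) := by unfold tt; fun_prop

lemma tt_nonneg (x : Fn n) : 0 ≤ tt x := by unfold tt; positivity

lemma tt_le (x : Fn n) : tt x ≤ 1 / 2 := by
  unfold tt
  have : max 0 (1 - |‖x‖ - 2|) ≤ 1 := max_le zero_le_one (by linarith [abs_nonneg (‖x‖ - 2)])
  linarith

lemma tt_off {x : Fn n} (hx : x ∉ An n) : tt x = 0 := by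
  unfold tt
  rw [max_eq_left, mul_zero]
  by_contra h
  push Not at h
  have h1 : |‖x‖ - 2| < 1 := by linarith
  rw [abs_lt] at h1
  exact hx ⟨by linarith, by linarith⟩

lemma tt_pos {x : Fn n} (hx : x ∈ An n) : 0 < tt x := by
  unfold tt
  have : |‖x‖ - 2| < 1 := by rw [abs_lt]; constructor <;> linarith [hx.1, hx.2]
  rw [max_eq_right (by linarith)]; linarith

lemma tt_lip (x y : Fn n) : |tt x - tt y| ≤ 1 / 2 * dist x y := by
  unfold tt
  rw [← mul_sub, abs_mul, abs_of_pos (by norm_num : (0 : ℝ) < 1 / 2)]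
  gcongr
  refine (abs_max_sub_max_le_max _ _ _ _).trans ?_
  rw [sub_self, abs_zero, max_eq_right (abs_nonneg _)]
  rw [show 1 - |‖x‖ - 2| - (1 - |‖y‖ - 2|) = |‖y‖ - 2| - |‖x‖ - 2| by ring]
  refine (abs_abs_sub_abs_le _ _).trans ?_
  rw [show ‖y‖ - 2 - (‖x‖ - 2) = ‖y‖ - ‖x‖ by ring, dist_comm, dist_eq_norm]
  exact abs_norm_sub_norm_le y x

lemma tt_ball {x : Fn n} (hx : x ∈ An n) {y : Fn n} (hy : dist y x ≤ tt x) : y ∈ An n := by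
  have h1 : |‖y‖ - ‖x‖| ≤ dist y x := by rw [dist_eq_norm]; exact abs_norm_sub_norm_le y x
  have h2 : |‖x‖ - 2| < 1 := by rw [abs_lt]; constructor <;> linarith [hx.1, hx.2]
  have h3 : tt x = 1 / 2 * (1 - |‖x‖ - 2|) := by unfold tt; rw [max_eq_right (by linarith)]
  rw [h3] at hy
  rw [abs_le] at h1
  constructor
  · have := neg_abs_le (‖x‖ - 2); linarith
  · have := le_abs_self (‖x‖ - 2); linarith

/-- the perturbation of the identity -/
def psi (z x : Fn n) : Fn n := x + tt x • z

lemma psi_cont (z : Fn n) : Continuous (psi z) := by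
  have := tt_cont (n := n)
  unfold psi; fun_prop

lemma psi_cont2 : Continuous fun q : Fn n × Fn n => psi q.1 q.2 := by
  have := tt_cont (n := n)
  unfold psi; fun_prop

lemma psi_An {z x : Fn n} (hz : ‖z‖ ≤ 1) (hx : x ∈ An n) : psi z x ∈ An n := by
  apply tt_ball hx
  rw [dist_eq_norm, psi, add_sub_cancel_left, norm_smul, Real.norm_eq_abs, abs_of_nonneg (tt_nonneg x)]
  nlinarith [tt_nonneg x]

lemma psi_diff {z : Fn n} (hz : ‖z‖ ≤ 1) (x y : Fn n) : ‖(psi z x - psi z y) - (x - y)‖ ≤ 1 / 2 * dist x y := by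
  have : (psi z x - psi z y) - (x - y) = (tt x - tt y) • z := by
    unfold psi; rw [sub_smul]; abel
  rw [this, norm_smul, Real.norm_eq_abs]
  calc _ ≤ |tt x - tt y| * 1 := by gcongr
    _ ≤ _ := by rw [mul_one]; exact tt_lip x y

lemma psi_le {z : Fn n} (hz : ‖z‖ ≤ 1) (x y : Fn n) : dist (psi z x) (psi z y) ≤ 3 / 2 * dist x y := by
  have h := psi_diff hz x y
  have h2 := norm_sub_norm_le (psi z x - psi z y) (x - y)
  rw [← dist_eq_norm, ← dist_eq_norm] at h2
  linarith

lemma psi_ge {z : Fn n} (hz : ‖z‖ ≤ 1) (x y : Fn n) : dist x y ≤ 2 * dist (psi z x) (psi z y) := by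
  have h := psi_diff hz x y
  have h2 := norm_sub_norm_le (x - y) (psi z x - psi z y)
  rw [← dist_eq_norm, ← dist_eq_norm, norm_sub_rev] at h2
  linarith

lemma psi_map {z : Fn n} (hz : ‖z‖ ≤ 1) {A : Set (Fn n)} (hA : MeasurableSet A)
    (hAp : ∀ x ∈ A, psi z x ∈ A) (h : Fn n → ℝ≥0∞) (hh : Measurable h) :
    ∫⁻ x in A, h (psi z x) ∂μH[(n : ℝ)] ≤ ENNReal.ofReal (2 ^ n) * ∫⁻ x in A, h x ∂μH[(n : ℝ)] := by
  have hanti : AntilipschitzWith 2 (psi z) := AntilipschitzWith.of_le_mul_dist fun x y => by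
    simpa using psi_ge hz x y
  have hm : Measurable (psi z) := (psi_cont z).measurable
  have h1 : ((μH[(n : ℝ)] : Measure (Fn n)).restrict A).map (psi z) ≤
      ENNReal.ofReal (2 ^ n) • (μH[(n : ℝ)] : Measure (Fn n)).restrict A := by
    rw [Measure.le_iff]
    intro s hs
    rw [Measure.map_apply hm hs, Measure.restrict_apply (hm hs), Measure.smul_apply,
      Measure.restrict_apply hs, smul_eq_mul]
    refine (measure_mono (t := psi z ⁻¹' (s ∩ A)) ?_).trans ?_
    · rintro x ⟨hx, hxA⟩; exact ⟨hx, hAp x hxA⟩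
    · refine (hanti.hausdorffMeasure_preimage_le (Nat.cast_nonneg n) _).trans (le_of_eq ?_)
      congr 1
      rw [ENNReal.ofReal_pow (by norm_num)]; simp
  calc _ = ∫⁻ x, h x ∂(((μH[(n : ℝ)] : Measure (Fn n)).restrict A).map (psi z)) := by
        rw [lintegral_map hh hm]
    _ ≤ _ := (lintegral_mono' h1 le_rfl).trans (by rw [lintegral_smul_measure, smul_eq_mul])

/-- uniform probability on a set -/
def UP (A : Set (Fn n)) : Measure (Fn n) :=
  ((μH[(n : ℝ)] : Measure (Fn n)) A)⁻¹ • (μH[(n : ℝ)] : Measure (Fn n)).restrict A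

lemma UP_prob {A : Set (Fn n)} (h0 : (μH[(n : ℝ)] : Measure (Fn n)) A ≠ 0)
    (h1 : (μH[(n : ℝ)] : Measure (Fn n)) A ≠ ∞) : IsProbabilityMeasure (UP A) :=
  ⟨by simp [UP, ENNReal.inv_mul_cancel h0 h1]⟩

instance UPball_prob : IsProbabilityMeasure (UP (Metric.ball (0 : Fn n) 1)) :=
  UP_prob (Metric.measure_ball_pos _ _ one_pos).ne' measure_ball_lt_top.ne

lemma An_fin : (μH[(n : ℝ)] : Measure (Fn n)) (An n) ≠ ∞ := by
  refine ((measure_mono (t := Metric.ball 0 3) ?_).trans_lt measure_ball_lt_top).ne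
  intro x hx; simpa using hx.2

lemma exists_norm_two (hn : 1 ≤ n) : ∃ x : Fn n, ‖x‖ = 2 :=
  ⟨EuclideanSpace.single ⟨0, hn⟩ 2, by simp⟩

lemma An_pos (hn : 1 ≤ n) : (μH[(n : ℝ)] : Measure (Fn n)) (An n) ≠ 0 := by
  obtain ⟨x, hx⟩ := exists_norm_two hn
  exact (An_open.measure_pos _ ⟨x, by constructor <;> linarith⟩).ne'

lemma UPball_ae : ∀ᵐ z ∂(UP (Metric.ball (0 : Fn n) 1)), ‖z‖ ≤ 1 := by
  have : ∀ᵐ z ∂((μH[(n : ℝ)] : Measure (Fn n)).restrict (Metric.ball 0 1)), ‖z‖ ≤ 1 := by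
    filter_upwards [ae_restrict_mem measurableSet_ball] with z hz
    exact (mem_ball_zero_iff.1 hz).le
  exact Measure.ae_smul_measure this _

/-- averaging at variable scale -/
def MM {m : ℕ} (σ : ℝ) (f : Fn n → Fn m) (x : Fn n) : Fn m :=
  ∫ z, f (x + (σ * tt x) • z) ∂(UP (Metric.ball (0 : Fn n) 1))

lemma MM_off {m : ℕ} (σ : ℝ) (f : Fn n → Fn m) {x : Fn n} (hx : x ∉ An n) : MM σ f x = f x := by
  simp [MM, tt_off hx]

lemma MM_zero {m : ℕ} (f : Fn n → Fn m) (x : Fn n) : MM 0 f x = f x := by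
  simp [MM]

lemma MM_cont {m : ℕ} (f : Fn n → Fn m) (hf : Continuous f) (hb : ∀ x, ‖f x‖ = 1) :
    Continuous fun q : ℝ × Fn n => MM q.1 f q.2 := by
  have := tt_cont (n := n)
  refine continuous_of_dominated (bound := fun _ => 1) ?_ ?_ ?_ ?_
  · intro q
    exact (by fun_prop : Continuous fun z => f (q.2 + (q.1 * tt q.2) • z)).aestronglyMeasurable
  · intro q; exact Eventually.of_forall fun z => (hb _).le
  · exact integrable_const _
  · exact Eventually.of_forall fun z => by fun_prop

lemma int_bdd {m : ℕ} (P : Measure (Fn n)) [IsFiniteMeasure P] (f : Fn n → Fn m) (hf : Continuous f)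
    (hb : ∀ x, ‖f x‖ = 1) : Integrable f P :=
  Integrable.of_bound hf.aestronglyMeasurable 1 (Eventually.of_forall fun x => (hb x).le)

end euc


section euc
variable {n m : ℕ}

lemma en_eq {X G : Type*} [MetricSpace X] [NormedAddCommGroup G] [NormedSpace ℝ G] {p : ℝ}
    (hp : 0 ≤ p) (v : X → G)
    (x y : X) : en n p v x y = ENNReal.ofReal (1 / dist x y ^ (2 * (n : ℝ))) * ‖v x - v y‖ₑ ^ p := by
  rw [enorm_rpow_eq hp, ← ENNReal.ofReal_mul (by positivity), en]
  congr 1; ring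

lemma MM_one (f : Fn n → Fn m) (x : Fn n) :
    MM 1 f x = ∫ z, f (psi z x) ∂(UP (Metric.ball (0 : Fn n) 1)) := by
  simp [MM, psi]

lemma psi_cont' (x : Fn n) : Continuous fun z => psi z x := by unfold psi; fun_prop

lemma MM_en {p : ℝ} (hp : 1 ≤ p) (f : Fn n → Fn m) (hf : Continuous f) (hb : ∀ x, ‖f x‖ = 1)
    (x y : Fn n) : en n p (MM 1 f) x y ≤
      ∫⁻ z, ENNReal.ofReal ((3 / 2) ^ (2 * n)) * en n p f (psi z x) (psi z y)
        ∂(UP (Metric.ball (0 : Fn n) 1)) := by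
  rcases eq_or_ne x y with rfl | hxy
  · simp [en, Real.zero_rpow (show p ≠ 0 by linarith)]
  have hi : ∀ x, Integrable (fun z => f (psi z x)) (UP (Metric.ball (0 : Fn n) 1)) := fun x =>
    int_bdd _ _ (hf.comp (psi_cont' x)) (fun z => hb _)
  rw [en_eq (by linarith), MM_one, MM_one, ← integral_sub (hi x) (hi y)]
  refine (mul_le_mul' le_rfl (jensen1 _ hp _ ((hi x).sub (hi y)).1)).trans ?_
  rw [← lintegral_const_mul' _ _ ENNReal.ofReal_ne_top]
  refine lintegral_mono_ae ?_
  filter_upwards [UPball_ae] with z hz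
  rw [en_eq (by linarith), ← mul_assoc]
  refine mul_le_mul' ?_ le_rfl
  rw [← ENNReal.ofReal_mul (by positivity)]
  apply ENNReal.ofReal_le_ofReal
  have hd : 0 < dist x y := dist_pos.2 hxy
  have h1 := psi_le hz x y
  have h2 := psi_ge hz x y
  have hd' : 0 < dist (psi z x) (psi z y) := by linarith
  rw [dist_rpow_two_mul, dist_rpow_two_mul, ← pow_mul, ← pow_mul, mul_one_div,
    div_le_div_iff₀ (by positivity) (by positivity), one_mul, ← mul_pow]
  gcongr

lemma en_psi_meas (p : ℝ) (f : Fn n → Fn m) (hf : Continuous f) :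
    Measurable fun q : (Fn n × Fn n) × Fn n => en n p f (psi q.2 q.1.1) (psi q.2 q.1.2) := by
  have h := psi_cont2 (n := n)
  have c1 : Continuous fun q : (Fn n × Fn n) × Fn n => psi q.2 q.1.1 :=
    h.comp (f := fun q : (Fn n × Fn n) × Fn n => (q.2, q.1.1)) (by fun_prop)
  have c2 : Continuous fun q : (Fn n × Fn n) × Fn n => psi q.2 q.1.2 :=
    h.comp (f := fun q : (Fn n × Fn n) × Fn n => (q.2, q.1.2)) (by fun_prop)
  unfold en
  have h1 : Measurable fun q : (Fn n × Fn n) × Fn n => ‖f (psi q.2 q.1.1) - f (psi q.2 q.1.2)‖ :=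
    (by fun_prop : Continuous _).measurable
  have h2 : Measurable fun q : (Fn n × Fn n) × Fn n => dist (psi q.2 q.1.1) (psi q.2 q.1.2) :=
    (by fun_prop : Continuous _).measurable
  exact ((h1.pow_const p).div (h2.pow_const _)).ennreal_ofReal

/-- first term of the energy estimate -/
theorem MM_Em {p : ℝ} (hp : 1 ≤ p) (f : Fn n → Fn m) (hf : Continuous f) (hb : ∀ x, ‖f x‖ = 1) :
    Em n p (MM 1 f) (An n) univ ≤ ENNReal.ofReal (9 ^ n) * Em n p f (An n) univ := by
  set P := UP (Metric.ball (0 : Fn n) 1) with hP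
  have hm := en_psi_meas p f hf
  set k : ℝ≥0∞ := ENNReal.ofReal ((3 / 2) ^ (2 * n)) with hk
  have hm1 : ∀ x, Measurable fun q : Fn n × Fn n => en n p f (psi q.2 x) (psi q.2 q.1) := fun x =>
    hm.comp (g := fun q : (Fn n × Fn n) × Fn n => en n p f (psi q.2 q.1.1) (psi q.2 q.1.2))
      (f := fun q : Fn n × Fn n => ((x, q.1), q.2)) (by fun_prop)
  have hm2 : Measurable fun q : Fn n × Fn n => ∫⁻ y, en n p f (psi q.2 q.1) (psi q.2 y) ∂μH[(n : ℝ)] := by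
    have : Measurable fun r : (Fn n × Fn n) × Fn n => en n p f (psi r.1.2 r.1.1) (psi r.1.2 r.2) :=
      hm.comp (g := fun q : (Fn n × Fn n) × Fn n => en n p f (psi q.2 q.1.1) (psi q.2 q.1.2))
      (f := fun r : (Fn n × Fn n) × Fn n => ((r.1.1, r.2), r.1.2)) (by fun_prop)
    exact this.lintegral_prod_right'
  have step : ∀ z, ‖z‖ ≤ 1 → ∫⁻ x in An n, ∫⁻ y, en n p f (psi z x) (psi z y) ∂μH[(n : ℝ)] ∂μH[(n : ℝ)]
      ≤ ENNReal.ofReal (2 ^ n) * (ENNReal.ofReal (2 ^ n) * Em n p f (An n) univ) := by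
    intro z hz
    have e1 : ∀ x, ∫⁻ y, en n p f (psi z x) (psi z y) ∂μH[(n : ℝ)] ≤
        ENNReal.ofReal (2 ^ n) * ∫⁻ y, en n p f (psi z x) y ∂μH[(n : ℝ)] := by
      intro x
      have := psi_map hz MeasurableSet.univ (fun x _ => mem_univ _) (en n p f (psi z x))
        (en_measurable_right n p f hf _)
      simpa using this
    refine (lintegral_mono e1).trans ?_
    rw [lintegral_const_mul' _ _ ENNReal.ofReal_ne_top]
    gcongr
    have := psi_map hz An_meas (fun x hx => psi_An hz hx) (fun x => ∫⁻ y, en n p f x y ∂μH[(n : ℝ)])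
      (en_measurable_int n p f hf _)
    simpa [Em] using this
  calc Em n p (MM 1 f) (An n) univ
      ≤ ∫⁻ x in An n, ∫⁻ y, ∫⁻ z, k * en n p f (psi z x) (psi z y) ∂P ∂μH[(n : ℝ)] ∂μH[(n : ℝ)] := by
        unfold Em
        rw [Measure.restrict_univ]
        exact lintegral_mono fun x => lintegral_mono fun y => MM_en hp f hf hb x y
    _ = k * ∫⁻ x in An n, ∫⁻ y, ∫⁻ z, en n p f (psi z x) (psi z y) ∂P ∂μH[(n : ℝ)] ∂μH[(n : ℝ)] := by
        have hk' : k ≠ ∞ := ENNReal.ofReal_ne_top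
        simp_rw [lintegral_const_mul' k _ hk']
    _ = k * ∫⁻ x in An n, ∫⁻ z, ∫⁻ y, en n p f (psi z x) (psi z y) ∂μH[(n : ℝ)] ∂P ∂μH[(n : ℝ)] := by
        congr 1
        refine lintegral_congr fun x => ?_
        exact lintegral_lintegral_swap (hm1 x).aemeasurable
    _ = k * ∫⁻ z, ∫⁻ x in An n, ∫⁻ y, en n p f (psi z x) (psi z y) ∂μH[(n : ℝ)] ∂μH[(n : ℝ)] ∂P := by
        congr 1
        exact lintegral_lintegral_swap hm2.aemeasurable
    _ ≤ k * ∫⁻ z, ENNReal.ofReal (2 ^ n) * (ENNReal.ofReal (2 ^ n) * Em n p f (An n) univ) ∂P := by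
        gcongr 1
        refine lintegral_mono_ae ?_
        filter_upwards [UPball_ae] with z hz using step z hz
    _ = _ := by
        rw [lintegral_const, measure_univ, mul_one, ← mul_assoc, ← mul_assoc, hk,
          ← ENNReal.ofReal_mul (by positivity), ← ENNReal.ofReal_mul (by positivity)]
        congr 2
        rw [pow_mul, ← mul_pow, ← mul_pow]; norm_num

/-- the mean over the annulus -/
def cst (f : Fn n → Fn m) : Fn m := ∫ z, f z ∂(UP (An n))

/-- a positive constant -/
def mAn (n : ℕ) : ℝ := (μH[(n : ℝ)] : Measure (Fn n)).real (An n)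

lemma mAn_pos (hn : 1 ≤ n) : 0 < mAn n := ENNReal.toReal_pos (An_pos hn) An_fin

lemma mAn_inv (hn : 1 ≤ n) : ((μH[(n : ℝ)] : Measure (Fn n)) (An n))⁻¹ = ENNReal.ofReal (1 / mAn n) := by
  rw [one_div, ENNReal.ofReal_inv_of_pos (mAn_pos hn), mAn, Measure.real, ENNReal.ofReal_toReal An_fin]

lemma cst_diff (hn : 1 ≤ n) {p : ℝ} (hp : 1 ≤ p) (f : Fn n → Fn m) (hf : Continuous f)
    (hb : ∀ x, ‖f x‖ = 1) (x : Fn n) :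
    ‖f x - cst f‖ₑ ^ p ≤ ENNReal.ofReal (1 / mAn n) * ∫⁻ y in An n, ‖f x - f y‖ₑ ^ p ∂μH[(n : ℝ)] := by
  have := UP_prob (An_pos hn) An_fin
  have h := jensen_dirac (UP (An n)) hp f (int_bdd _ f hf hb) (f x)
  rw [← enorm_neg, neg_sub]
  refine h.trans (le_of_eq ?_)
  rw [UP, lintegral_smul_measure, mAn_inv hn, smul_eq_mul]
  congr 2; ext1 y
  rw [← enorm_neg, neg_sub]

lemma An_dist {x y : Fn n} (hx : x ∈ An n) (hy : y ∈ An n) : dist x y ≤ 6 := by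
  have := dist_triangle_right x y 0
  rw [dist_zero_right, dist_zero_right] at this
  linarith [hx.2, hy.2]

lemma cst_int (hn : 1 ≤ n) {p : ℝ} (hp : 1 ≤ p) (f : Fn n → Fn m) (hf : Continuous f)
    (hb : ∀ x, ‖f x‖ = 1) :
    ∫⁻ x in An n, ‖f x - cst f‖ₑ ^ p ∂μH[(n : ℝ)] ≤
      ENNReal.ofReal (6 ^ (2 * n) / mAn n) * Em n p f (An n) univ := by
  refine (lintegral_mono fun x => cst_diff hn hp f hf hb x).trans ?_
  rw [lintegral_const_mul' _ _ ENNReal.ofReal_ne_top]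
  have h := avg_le n (p := p) (by linarith) f ((μH[(n : ℝ)] : Measure (Fn n)).restrict (An n))
    ((μH[(n : ℝ)] : Measure (Fn n)).restrict (An n)) 1 1 ENNReal.one_ne_top (An n) (An n) An_meas An_meas
    (by simp) (by simp) 6 (fun x hx y hy => An_dist hx hy)
  refine (mul_le_mul' le_rfl h).trans ?_
  rw [mul_one, mul_one, ← mul_assoc, ← ENNReal.ofReal_mul (by have := mAn_pos hn; positivity)]
  refine mul_le_mul' (le_of_eq ?_) (Em_mono n p f subset_rfl (subset_univ _))
  congr 1; ring

lemma MM_cst_int (hn : 1 ≤ n) {p : ℝ} (hp : 1 ≤ p) (f : Fn n → Fn m) (hf : Continuous f)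
    (hb : ∀ x, ‖f x‖ = 1) :
    ∫⁻ x in An n, ‖MM 1 f x - cst f‖ₑ ^ p ∂μH[(n : ℝ)] ≤
      ENNReal.ofReal (2 ^ n * (6 ^ (2 * n) / mAn n)) * Em n p f (An n) univ := by
  set P := UP (Metric.ball (0 : Fn n) 1) with hP
  have hi : ∀ x, Integrable (fun z => f (psi z x)) P := fun x =>
    int_bdd _ _ (hf.comp (psi_cont' x)) (fun z => hb _)
  have hc : Continuous fun q : Fn n × Fn n => ‖f (psi q.2 q.1) - cst f‖ₑ := by
    have := (psi_cont2 (n := n)).comp continuous_swap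
    have h2 : Continuous fun q : Fn n × Fn n => f (psi q.2 q.1) := hf.comp this
    fun_prop
  calc _ ≤ ∫⁻ x in An n, ∫⁻ z, ‖f (psi z x) - cst f‖ₑ ^ p ∂P ∂μH[(n : ℝ)] := by
        refine lintegral_mono fun x => ?_
        rw [MM_one]
        exact jensen_dirac P hp _ (hi x) _
    _ = ∫⁻ z, ∫⁻ x in An n, ‖f (psi z x) - cst f‖ₑ ^ p ∂μH[(n : ℝ)] ∂P :=
        lintegral_lintegral_swap (hc.measurable.pow_const p).aemeasurable
    _ ≤ ∫⁻ z, ENNReal.ofReal (2 ^ n) * (ENNReal.ofReal (6 ^ (2 * n) / mAn n) * Em n p f (An n) univ) ∂P := by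
        refine lintegral_mono_ae ?_
        filter_upwards [UPball_ae] with z hz
        refine (psi_map hz An_meas (fun x hx => psi_An hz hx) (fun x => ‖f x - cst f‖ₑ ^ p)
          ?_).trans (mul_le_mul' le_rfl (cst_int hn hp f hf hb))
        exact (by fun_prop : Continuous fun x => ‖f x - cst f‖ₑ).measurable.pow_const p
    _ = _ := by
        rw [lintegral_const, measure_univ, mul_one, ← mul_assoc, ← ENNReal.ofReal_mul (by positivity)]
end euc


section gen
variable {X G G' : Type*} [MetricSpace X] [MeasurableSpace X] [BorelSpace X]
  [NormedAddCommGroup G] [NormedAddCommGroup G']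

lemma Em_union_left (n : ℕ) (p : ℝ) (v : X → G) (A A' B : Set X) :
    Em n p v (A ∪ A') B ≤ Em n p v A B + Em n p v A' B := lintegral_union_le _ _ _

lemma Em_lip (n : ℕ) {p : ℝ} (hp : 0 ≤ p) (v : X → G) (w : X → G') {L : ℝ} (hL : 0 ≤ L)
    (h : ∀ x y, ‖w x - w y‖ ≤ L * ‖v x - v y‖) (A B : Set X) :
    Em n p w A B ≤ ENNReal.ofReal (L ^ p) * Em n p v A B := by
  unfold Em
  rw [← lintegral_const_mul' _ _ ENNReal.ofReal_ne_top]
  refine lintegral_mono fun x => ?_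
  simp only
  rw [← lintegral_const_mul' _ _ ENNReal.ofReal_ne_top]
  refine lintegral_mono fun y => ?_
  simp only [en]
  rw [← ENNReal.ofReal_mul (by positivity)]
  apply ENNReal.ofReal_le_ofReal
  rw [← mul_div_assoc, ← Real.mul_rpow hL (norm_nonneg _)]
  gcongr
  exact h x y

lemma Em_congr (n : ℕ) (p : ℝ) (v w : X → G) {A B : Set X} (hA : MeasurableSet A) (hB : MeasurableSet B)
    (h : ∀ x ∈ A, v x = w x) (h' : ∀ x ∈ B, v x = w x) : Em n p v A B = Em n p w A B := by
  unfold Em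
  refine setLIntegral_congr_fun hA fun x hx => ?_
  refine setLIntegral_congr_fun hB fun y hy => ?_
  simp only [en, h x hx, h' y hy]

lemma Em_const (n : ℕ) {p : ℝ} (hp : 0 < p) (v : X → G) {A : Set X} (hA : MeasurableSet A) (c : G)
    (h : ∀ x ∈ A, v x = c) : Em n p v A A = 0 := by
  rw [Em_congr n p v (fun _ => c) hA hA h h]
  simp [Em, en, Real.zero_rpow hp.ne']
end gen

section euc
variable {n m : ℕ}

/-- radial kernel -/
def gk (n : ℕ) (p t : ℝ) : ℝ := (min 1 t) ^ p / t ^ (2 * (n : ℝ))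

lemma gk_nonneg (p : ℝ) {t : ℝ} (ht : 0 ≤ t) : 0 ≤ gk n p t := by unfold gk; positivity

lemma gk_int (hn : 1 ≤ n) {p : ℝ} (hp : (n : ℝ) < p) :
    Integrable (fun x : Fn n => gk n p ‖x‖) μH[(n : ℝ)] := by
  have : Nonempty (Fin n) := ⟨⟨0, hn⟩⟩
  rw [integrable_fun_norm_addHaar (μ := (μH[(n : ℝ)] : Measure (Fn n))) (f := gk n p)]
  rw [finrank_euclideanSpace_fin]
  have hc : ((n - 1 : ℕ) : ℝ) = (n : ℝ) - 1 := by rw [Nat.cast_sub hn]; simp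
  rw [← Ioc_union_Ioi_eq_Ioi (zero_le_one' ℝ)]
  refine IntegrableOn.union ?_ ?_
  · have h1 : IntegrableOn (fun y : ℝ => y ^ (p - n - 1)) (Ioc 0 1) := by
      have := intervalIntegral.intervalIntegrable_rpow' (a := 0) (b := 1) (r := p - n - 1) (by linarith)
      rwa [intervalIntegrable_iff_integrableOn_Ioc_of_le zero_le_one] at this
    refine h1.congr_fun (fun y hy => ?_) measurableSet_Ioc
    simp only [gk, smul_eq_mul]
    rw [min_eq_right hy.2, ← Real.rpow_natCast, hc, ← Real.rpow_sub hy.1, ← Real.rpow_add hy.1]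
    congr 1; ring
  · have h1 : IntegrableOn (fun y : ℝ => y ^ (-(n : ℝ) - 1)) (Ioi 1) :=
      integrableOn_Ioi_rpow_of_lt (by have : (1 : ℝ) ≤ n := by exact_mod_cast hn
                                      linarith) one_pos
    refine h1.congr_fun (fun y hy => ?_) measurableSet_Ioi
    have hy0 : (0 : ℝ) < y := lt_trans one_pos hy
    simp only [gk, smul_eq_mul]
    rw [min_eq_left (le_of_lt hy), ← Real.rpow_natCast, hc, Real.one_rpow, one_div,
      ← Real.rpow_neg hy0.le, ← Real.rpow_add hy0]
    congr 1; ring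

lemma gk_bound (hn : 1 ≤ n) {p : ℝ} (hp : (n : ℝ) < p) :
    ∃ K : ℝ, 0 ≤ K ∧ ∀ x : Fn n, ∫⁻ y, ENNReal.ofReal (gk n p (dist x y)) ∂μH[(n : ℝ)] ≤ ENNReal.ofReal K := by
  refine ⟨∫ x : Fn n, gk n p ‖x‖ ∂μH[(n : ℝ)], integral_nonneg fun x => gk_nonneg p (norm_nonneg _), fun x => ?_⟩
  rw [ofReal_integral_eq_lintegral_ofReal (gk_int hn hp)
    (Eventually.of_forall fun x => gk_nonneg p (norm_nonneg _))]
  have := lintegral_sub_right_eq_self (μ := (μH[(n : ℝ)] : Measure (Fn n)))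
    (fun y => ENNReal.ofReal (gk n p ‖y‖)) x
  rw [← this]
  refine le_of_eq (lintegral_congr fun y => ?_)
  rw [dist_comm, dist_eq_norm]

/-- interpolation with the mean -/
def VV (θ : Fn n → ℝ) (f : Fn n → Fn m) (x : Fn n) : Fn m := (1 - θ x) • MM 1 f x + θ x • cst f

lemma add_rpow_le {p : ℝ} (hp : 0 ≤ p) {a b : ℝ} (ha : 0 ≤ a) (hb : 0 ≤ b) :
    (a + b) ^ p ≤ 2 ^ p * (a ^ p + b ^ p) := by
  have h1 : (a + b) ^ p ≤ (2 * max a b) ^ p := by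
    apply Real.rpow_le_rpow (by positivity) _ hp
    linarith [le_max_left a b, le_max_right a b]
  rw [Real.mul_rpow (by norm_num) (by positivity)] at h1
  refine h1.trans ?_
  gcongr
  rcases max_cases a b with ⟨h, _⟩ | ⟨h, _⟩ <;> rw [h]
  · have := Real.rpow_nonneg hb p; linarith
  · have := Real.rpow_nonneg ha p; linarith

lemma VV_en {p : ℝ} (hp : 1 ≤ p) (f : Fn n → Fn m) (θ : Fn n → ℝ) (h0 : ∀ x, 0 ≤ θ x) (h1 : ∀ x, θ x ≤ 1)
    (hl : ∀ x y, |θ x - θ y| ≤ 2 * min 1 (dist x y)) (x y : Fn n) :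
    en n p (VV θ f) x y ≤ ENNReal.ofReal (2 ^ p) * (en n p (MM 1 f) x y +
      ENNReal.ofReal (2 ^ p) * (ENNReal.ofReal (gk n p (dist x y)) * ‖MM 1 f x - cst f‖ₑ ^ p)) := by
  have hp0 : 0 ≤ p := by linarith
  have hg := gk_nonneg (n := n) p (t := dist x y) dist_nonneg
  rw [enorm_rpow_eq hp0, ← ENNReal.ofReal_mul hg, ← ENNReal.ofReal_mul (by positivity), en, en,
    ← ENNReal.ofReal_add (by positivity) (by positivity), ← ENNReal.ofReal_mul (by positivity)]
  apply ENNReal.ofReal_le_ofReal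
  have e : VV θ f x - VV θ f y = (1 - θ y) • (MM 1 f x - MM 1 f y) + (θ y - θ x) • (MM 1 f x - cst f) := by
    unfold VV; module
  have hN : ‖VV θ f x - VV θ f y‖ ≤ ‖MM 1 f x - MM 1 f y‖ + (2 * min 1 (dist x y)) * ‖MM 1 f x - cst f‖ := by
    rw [e]
    refine (norm_add_le _ _).trans ?_
    rw [norm_smul, norm_smul, Real.norm_eq_abs, Real.norm_eq_abs]
    gcongr
    · rw [abs_of_nonneg (by linarith [h1 y])]
      exact mul_le_of_le_one_left (norm_nonneg _) (by linarith [h0 y])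
    · rw [abs_sub_comm]; exact hl x y
  have hm : 0 ≤ min 1 (dist x y) := le_min zero_le_one dist_nonneg
  calc _ ≤ (‖MM 1 f x - MM 1 f y‖ + (2 * min 1 (dist x y)) * ‖MM 1 f x - cst f‖) ^ p / dist x y ^ (2 * (n : ℝ)) := by
        gcongr
    _ ≤ (2 ^ p * (‖MM 1 f x - MM 1 f y‖ ^ p + ((2 * min 1 (dist x y)) * ‖MM 1 f x - cst f‖) ^ p)) / dist x y ^ (2 * (n : ℝ)) := by
        gcongr
        exact add_rpow_le hp0 (norm_nonneg _) (by positivity)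
    _ = _ := by
        rw [Real.mul_rpow (by positivity) (norm_nonneg _), Real.mul_rpow (by norm_num) hm, gk]
        ring

theorem VV_Em (hn : 1 ≤ n) {p : ℝ} (hp : (n : ℝ) < p) : ∃ C : ℝ, 0 < C ∧ ∀ (f : Fn n → Fn m) (θ : Fn n → ℝ),
    Continuous f → (∀ x, ‖f x‖ = 1) → (∀ x, 0 ≤ θ x) → (∀ x, θ x ≤ 1) →
    (∀ x y, |θ x - θ y| ≤ 2 * min 1 (dist x y)) →
    Em n p (VV θ f) (An n) univ ≤ ENNReal.ofReal C * Em n p f (An n) univ := by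
  have hp1 : 1 ≤ p := by have : (1 : ℝ) ≤ n := by exact_mod_cast hn
                         linarith
  obtain ⟨K, hK0, hK⟩ := gk_bound hn hp
  have hmA := mAn_pos hn
  refine ⟨2 ^ p * (9 ^ n + 2 ^ p * (K * (2 ^ n * (6 ^ (2 * n) / mAn n)))), by positivity, ?_⟩
  intro f θ hf hb h0 h1 hl
  have hmm : Measurable (MM 1 f) := by
    have := (MM_cont f hf hb).comp (f := fun x : Fn n => ((1 : ℝ), x)) (by fun_prop)
    exact this.measurable
  have hmc : Continuous (MM 1 f) := 
    (MM_cont f hf hb).comp (f := fun x : Fn n => ((1 : ℝ), x)) (by fun_prop)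
  set N : Fn n → ℝ≥0∞ := fun x => ‖MM 1 f x - cst f‖ₑ ^ p with hN
  have hgm : ∀ x : Fn n, Measurable fun y => ENNReal.ofReal (gk n p (dist x y)) := by
    intro x
    unfold gk
    have h2 : Measurable fun y : Fn n => dist x y := (continuous_const.dist continuous_id).measurable
    exact (((measurable_const.min h2).pow_const p).div (h2.pow_const _)).ennreal_ofReal
  have hNt : ∀ x, N x ≠ ∞ := fun x => by
    rw [hN]; simp only; rw [enorm_rpow_eq (by linarith)]; exact ENNReal.ofReal_ne_top
  calc Em n p (VV θ f) (An n) univ ≤ ∫⁻ x in An n, (ENNReal.ofReal (2 ^ p) * (∫⁻ y, en n p (MM 1 f) x y ∂μH[(n : ℝ)] +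
        ENNReal.ofReal (2 ^ p) * (ENNReal.ofReal K * N x))) ∂μH[(n : ℝ)] := by
        unfold Em
        rw [Measure.restrict_univ]
        refine lintegral_mono fun x => ?_
        refine (lintegral_mono fun y => VV_en hp1 f θ h0 h1 hl x y).trans ?_
        rw [lintegral_const_mul' _ _ ENNReal.ofReal_ne_top, lintegral_add_left
          (en_measurable_right n p _ hmc x), lintegral_const_mul' _ _ ENNReal.ofReal_ne_top,
          lintegral_mul_const _ (hgm x)]
        gcongr
        exact hK x
    _ = ENNReal.ofReal (2 ^ p) * (Em n p (MM 1 f) (An n) univ +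
        ENNReal.ofReal (2 ^ p) * (ENNReal.ofReal K * ∫⁻ x in An n, N x ∂μH[(n : ℝ)])) := by
        rw [lintegral_const_mul' _ _ ENNReal.ofReal_ne_top, lintegral_add_left
          (en_measurable_int n p _ hmc _), lintegral_const_mul' _ _ ENNReal.ofReal_ne_top,
          lintegral_const_mul' _ _ ENNReal.ofReal_ne_top]
        simp [Em]
    _ ≤ ENNReal.ofReal (2 ^ p) * (ENNReal.ofReal (9 ^ n) * Em n p f (An n) univ +
        ENNReal.ofReal (2 ^ p) * (ENNReal.ofReal K *
          (ENNReal.ofReal (2 ^ n * (6 ^ (2 * n) / mAn n)) * Em n p f (An n) univ))) := by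
        gcongr
        · exact MM_Em hp1 f hf hb
        · exact MM_cst_int hn hp1 f hf hb
    _ = _ := by
        rw [← mul_assoc (ENNReal.ofReal K), ← ENNReal.ofReal_mul hK0, ← mul_assoc, ← ENNReal.ofReal_mul (by positivity),
          ← add_mul, ← ENNReal.ofReal_add (by positivity) (by positivity), ← mul_assoc, ← ENNReal.ofReal_mul (by positivity)]

/-- inner and outer regions -/
def In (n : ℕ) : Set (Fn n) := {x | ‖x‖ ≤ 1}
/-- outer region -/
def Out (n : ℕ) : Set (Fn n) := {x | 3 ≤ ‖x‖}

lemma In_meas : MeasurableSet (In n) := (isClosed_le continuous_norm continuous_const).measurableSet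
lemma Out_meas : MeasurableSet (Out n) := (isClosed_le continuous_const continuous_norm).measurableSet

lemma cross_w (hn : 1 ≤ n) {p : ℝ} (hp : 1 ≤ p) : ∃ C : ℝ, 0 < C ∧ ∀ (f V : Fn n → Fn m),
    Continuous f → (∀ x, ‖f x‖ = 1) → (∀ x ∈ In n, V x = cst f) → (∀ x ∈ Out n, V x = f x) →
    Em n p V (In n) (Out n) ≤ ENNReal.ofReal C * Em n p f (An n) univ := by
  have hmA := mAn_pos hn
  set I := (μH[(n : ℝ)] : Measure (Fn n)).real (In n) with hI
  have hI0 : 0 ≤ I := ENNReal.toReal_nonneg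
  have hIf : (μH[(n : ℝ)] : Measure (Fn n)) (In n) ≠ ∞ := by
    have : In n = Metric.closedBall 0 1 := by ext; simp [In]
    rw [this]; exact measure_closedBall_lt_top.ne
  refine ⟨(9 ^ n / mAn n) * I + 1, by positivity, ?_⟩
  intro f V hf hb hVi hVo
  have key : ∀ x ∈ In n, ∫⁻ y in Out n, en n p V x y ∂μH[(n : ℝ)] ≤
      ENNReal.ofReal (9 ^ n / mAn n) * Em n p f (An n) univ := by
    intro x hx
    rw [Em_symm n p f hf]
    have : Em n p f (Out n) (An n) ≤ Em n p f univ (An n) := Em_mono n p f (subset_univ _) subset_rfl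
    refine le_trans ?_ (mul_le_mul' le_rfl this)
    unfold Em
    rw [← lintegral_const_mul' _ _ ENNReal.ofReal_ne_top]
    refine setLIntegral_mono' Out_meas fun y hy => ?_
    rw [en_eq (by linarith), hVi x hx, hVo y hy, ← enorm_neg, neg_sub]
    refine (mul_le_mul' le_rfl (cst_diff hn hp f hf hb y)).trans ?_
    rw [← mul_assoc, ← ENNReal.ofReal_mul (by positivity), ← lintegral_const_mul' _ _ ENNReal.ofReal_ne_top,
      ← lintegral_const_mul' _ _ ENNReal.ofReal_ne_top]
    refine setLIntegral_mono' An_meas fun z hz => ?_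
    rw [en_eq (by linarith), ← mul_assoc, ← ENNReal.ofReal_mul (by positivity)]
    refine mul_le_mul' (ENNReal.ofReal_le_ofReal ?_) le_rfl
    have hx' : ‖x‖ ≤ 1 := hx
    have hy' : 3 ≤ ‖y‖ := hy
    have d1 : ‖y‖ - ‖x‖ ≤ dist x y := by rw [dist_comm, dist_eq_norm]; exact norm_sub_norm_le y x
    have d2 : dist y z ≤ ‖y‖ + ‖z‖ := by rw [dist_eq_norm]; exact norm_sub_le y z
    have d3 : ‖y‖ - ‖z‖ ≤ dist y z := by rw [dist_eq_norm]; exact norm_sub_norm_le y z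
    have d4 : dist y z ≤ 3 * dist x y := by linarith [hz.2]
    have d5 : 0 < dist y z := by linarith [hz.2]
    have d6 : 0 < dist x y := by linarith
    rw [dist_rpow_two_mul, dist_rpow_two_mul, ← pow_mul, ← pow_mul]
    rw [show 1 / dist x y ^ (2 * n) * (1 / mAn n) = (1 / mAn n) * (1 / dist x y ^ (2 * n)) by ring,
      show 9 ^ n / mAn n * (1 / dist y z ^ (2 * n)) = (1 / mAn n) * (9 ^ n / dist y z ^ (2 * n)) by ring]
    refine mul_le_mul_of_nonneg_left ?_ (by positivity)
    rw [div_le_div_iff₀ (by positivity) (by positivity), one_mul, show (9 : ℝ) = 3 ^ 2 by norm_num, ← pow_mul,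
      ← mul_pow]
    gcongr
  unfold Em at key ⊢
  refine (setLIntegral_mono' In_meas key).trans ?_
  rw [setLIntegral_const, ENNReal.ofReal_add (by positivity) (by positivity), add_mul,
    ENNReal.ofReal_mul (by positivity), hI, ofReal_measureReal hIf]
  refine le_trans (le_of_eq ?_) le_self_add
  ring

lemma cross_in (hn : 1 ≤ n) {p : ℝ} (hp : (n : ℝ) < p) : ∃ C : ℝ, 0 < C ∧ ∀ (f V : Fn n → Fn m),
    Continuous f → (∀ x, ‖f x‖ = 1) → (∀ x ∈ In n, V x = f x) → (∀ x ∈ Out n, V x = cst f) →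
    Em n p V (In n) (Out n) ≤ ENNReal.ofReal C * Em n p f (An n) univ := by
  have hp1 : 1 ≤ p := by have : (1 : ℝ) ≤ n := by exact_mod_cast hn
                         linarith
  have hmA := mAn_pos hn
  obtain ⟨K, hK0, hK⟩ := gk_bound hn hp
  refine ⟨K * (4 ^ (2 * n) / mAn n) + 1, by positivity, ?_⟩
  intro f V hf hb hVi hVo
  have key : ∀ x ∈ In n, ∫⁻ y in Out n, en n p V x y ∂μH[(n : ℝ)] ≤
      ENNReal.ofReal K * ‖f x - cst f‖ₑ ^ p := by
    intro x hx
    have hx' : ‖x‖ ≤ 1 := hx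
    calc _ ≤ ∫⁻ y in Out n, ENNReal.ofReal (gk n p (dist x y)) * ‖f x - cst f‖ₑ ^ p ∂μH[(n : ℝ)] := by
          refine setLIntegral_mono' Out_meas fun y hy => ?_
          have hy' : 3 ≤ ‖y‖ := hy
          have d1 : ‖y‖ - ‖x‖ ≤ dist x y := by rw [dist_comm, dist_eq_norm]; exact norm_sub_norm_le y x
          rw [en_eq (by linarith), hVi x hx, hVo y hy, gk, min_eq_left (by linarith), Real.one_rpow]
      _ ≤ ∫⁻ y, ENNReal.ofReal (gk n p (dist x y)) * ‖f x - cst f‖ₑ ^ p ∂μH[(n : ℝ)] :=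
          setLIntegral_le_lintegral _ _
      _ ≤ _ := by
          rw [lintegral_mul_const']
          · gcongr; exact hK x
          · rw [enorm_rpow_eq (by linarith)]; exact ENNReal.ofReal_ne_top
  unfold Em at key ⊢
  refine (setLIntegral_mono' In_meas key).trans ?_
  rw [lintegral_const_mul' _ _ ENNReal.ofReal_ne_top]
  refine (mul_le_mul' le_rfl (lintegral_mono fun x => cst_diff hn hp1 f hf hb x)).trans ?_
  rw [lintegral_const_mul' _ _ ENNReal.ofReal_ne_top]
  have h := avg_le n (p := p) (by linarith) f ((μH[(n : ℝ)] : Measure (Fn n)).restrict (In n))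
    ((μH[(n : ℝ)] : Measure (Fn n)).restrict (An n)) 1 1 ENNReal.one_ne_top (In n) (An n) In_meas An_meas
    (by simp) (by simp) 4 (fun x hx y hy => by
      have := dist_triangle_right x y 0
      rw [dist_zero_right, dist_zero_right] at this
      have hx' : ‖x‖ ≤ 1 := hx
      linarith [hy.2])
  refine (mul_le_mul' le_rfl (mul_le_mul' le_rfl h)).trans ?_
  rw [Em_symm n p f hf, mul_one, mul_one, ← mul_assoc, ← mul_assoc, ← ENNReal.ofReal_mul (by positivity), ← ENNReal.ofReal_mul (by positivity)]
  refine mul_le_mul' (ENNReal.ofReal_le_ofReal ?_) (Em_mono n p f subset_rfl (subset_univ _))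
  have : K * (1 / mAn n) * 4 ^ (2 * n) = K * (4 ^ (2 * n) / mAn n) := by ring
  linarith
end euc


section euc
variable {n m : ℕ}

/-- volume of the unit ball -/
def wB (n : ℕ) : ℝ := (μH[(n : ℝ)] : Measure (Fn n)).real (Metric.ball 0 1)

lemma wB_pos : 0 < wB n := ENNReal.toReal_pos (Metric.measure_ball_pos _ _ one_pos).ne' measure_ball_lt_top.ne

/-- the pushed forward uniform measure -/
def PB (x : Fn n) (ρ : ℝ) : Measure (Fn n) := (UP (Metric.ball (0 : Fn n) 1)).map (fun z => x + ρ • z)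

lemma PB_meas (x : Fn n) (ρ : ℝ) : Measurable (fun z : Fn n => x + ρ • z) :=
  (by fun_prop : Continuous fun z : Fn n => x + ρ • z).measurable

instance PB_prob (x : Fn n) (ρ : ℝ) : IsProbabilityMeasure (PB x ρ) :=
  Measure.isProbabilityMeasure_map (PB_meas x ρ).aemeasurable

lemma PB_le (x : Fn n) {ρ : ℝ} (hρ : 0 < ρ) :
    PB x ρ ≤ ENNReal.ofReal (1 / (wB n * ρ ^ n)) • (μH[(n : ℝ)] : Measure (Fn n)).restrict (Metric.ball x ρ) := by
  rw [Measure.le_iff]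
  intro s hs
  rw [PB, Measure.map_apply (PB_meas x ρ) hs, UP, Measure.smul_apply, Measure.smul_apply,
    Measure.restrict_apply hs, Measure.restrict_apply ((PB_meas x ρ) hs)]
  have e : (fun z : Fn n => x + ρ • z) ⁻¹' s ∩ Metric.ball 0 1 =
      (fun z => ρ • z) ⁻¹' ((fun z => x + z) ⁻¹' (s ∩ Metric.ball x ρ)) := by
    ext z
    simp only [mem_inter_iff, mem_preimage, Metric.mem_ball, dist_self_add_left, dist_zero_right, norm_smul,
      Real.norm_eq_abs, abs_of_pos hρ]
    rw [show ρ * ‖z‖ < ρ ↔ ‖z‖ < 1 from ⟨fun h => by nlinarith, fun h => by nlinarith⟩]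
  rw [e, Measure.addHaar_preimage_smul _ hρ.ne', measure_preimage_add, finrank_euclideanSpace_fin,
    smul_eq_mul, smul_eq_mul, ← mul_assoc, abs_of_pos (by positivity)]
  refine mul_le_mul' (le_of_eq ?_) le_rfl
  have : (μH[(n : ℝ)] : Measure (Fn n)) (Metric.ball 0 1) = ENNReal.ofReal (wB n) :=
    (ofReal_measureReal measure_ball_lt_top.ne).symm
  rw [this, ← ENNReal.ofReal_inv_of_pos wB_pos, ← ENNReal.ofReal_mul (by have := wB_pos (n := n); positivity)]
  congr 1
  rw [one_div, mul_inv]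

lemma MM_PB (σ : ℝ) (f : Fn n → Fn m) (hf : Continuous f) (x : Fn n) :
    MM σ f x = ∫ y, f y ∂(PB x (σ * tt x)) := by
  rw [PB, integral_map (PB_meas _ _).aemeasurable hf.aestronglyMeasurable, MM]

lemma ball_An {x : Fn n} (hx : x ∈ An n) {σ : ℝ} (h1 : σ ≤ 1) :
    Metric.ball x (σ * tt x) ⊆ An n := fun y hy => by
  refine tt_ball hx ((Metric.mem_ball.1 hy).le.trans ?_)
  exact mul_le_of_le_one_left (tt_nonneg x) h1

lemma MM_low {p : ℝ} (hp : 1 ≤ p) : ∃ ε : ℝ, 0 < ε ∧ ∀ (f : Fn n → Fn m), Continuous f → (∀ x, ‖f x‖ = 1) →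
    Em n p f (An n) univ ≤ ENNReal.ofReal ε → ∀ σ x, 0 ≤ σ → σ ≤ 1 → 3 / 4 ≤ ‖MM σ f x‖ := by
  have hw := wB_pos (n := n)
  refine ⟨(1 / 4) ^ p / (4 ^ n / wB n ^ 2), by positivity, fun f hf hb hE σ x h0 h1 => ?_⟩
  by_cases hx : x ∈ An n
  swap
  · rw [MM_off σ f hx, hb]; norm_num
  rcases h0.eq_or_lt with rfl | h0
  · rw [MM_zero, hb]; norm_num
  have hρ : 0 < σ * tt x := mul_pos h0 (tt_pos hx)
  set ρ := σ * tt x with hρd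
  rw [MM_PB σ f hf x]
  have key := avg_le n (p := p) (by linarith) f (PB x ρ) (PB x ρ) _ _ ENNReal.ofReal_ne_top _ _
    measurableSet_ball measurableSet_ball (PB_le x hρ) (PB_le x hρ) (2 * ρ) (fun a ha b hb => by
      have := dist_triangle_right a b x
      rw [Metric.mem_ball] at ha hb; linarith)
  have hm : AEMeasurable (fun x' => ∫⁻ y, ‖f x' - f y‖ₑ ^ p ∂(PB x ρ)) (PB x ρ) := by
    have : Measurable fun q : Fn n × Fn n => ‖f q.1 - f q.2‖ₑ ^ p :=
      (by fun_prop : Continuous fun q : Fn n × Fn n => ‖f q.1 - f q.2‖ₑ).measurable.pow_const p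
    exact this.lintegral_prod_right'.aemeasurable
  have := norm_ge_of_avg (PB x ρ) hp f (int_bdd _ f hf hb) hb (1 / 4) (by norm_num) ?_ hm
  · linarith
  refine key.trans ?_
  rw [← ENNReal.ofReal_mul (by positivity), ← ENNReal.ofReal_mul (by positivity)]
  have e : (2 * ρ) ^ (2 * n) * (1 / (wB n * ρ ^ n)) * (1 / (wB n * ρ ^ n)) = 4 ^ n / wB n ^ 2 := by
    rw [show (4 : ℝ) = 2 ^ 2 by norm_num, ← pow_mul, mul_pow, mul_comm 2 n, pow_mul ρ]; field_simp
  rw [e]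
  exact ofReal_mul_le (by positivity)
    ((Em_mono n p f (ball_An hx h1) (subset_univ _)).trans hE)

lemma MM_cst_close (hn : 1 ≤ n) {p : ℝ} (hp : 1 ≤ p) : ∃ ε : ℝ, 0 < ε ∧ ∀ (f : Fn n → Fn m), Continuous f → (∀ x, ‖f x‖ = 1) →
    Em n p f (An n) univ ≤ ENNReal.ofReal ε → ∀ x, 3 / 2 ≤ ‖x‖ → ‖x‖ ≤ 5 / 2 → ‖MM 1 f x - cst f‖ ≤ 1 / 4 := by
  have hw := wB_pos (n := n)
  have hA := mAn_pos hn
  set C := 6 ^ (2 * n) * (4 ^ n / wB n) * (1 / mAn n) with hC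
  refine ⟨(1 / 4) ^ p / C, by positivity, fun f hf hb hE x h3 h5 => ?_⟩
  have hx : x ∈ An n := ⟨by linarith, by linarith⟩
  have htt : 1 / 4 ≤ tt x := by
    unfold tt
    have : |‖x‖ - 2| ≤ 1 / 2 := by rw [abs_le]; constructor <;> linarith
    have := le_max_right 0 (1 - |‖x‖ - 2|)
    linarith
  have hρ : 0 < 1 * tt x := by linarith
  have := UP_prob (An_pos hn) An_fin
  have key := avg_le n (p := p) (by linarith) f (PB x (1 * tt x)) (UP (An n)) _ _ ENNReal.ofReal_ne_top _ _
    measurableSet_ball An_meas (PB_le x hρ) (le_of_eq (by rw [UP, mAn_inv hn])) 6 (fun a ha b hb =>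
      An_dist (ball_An hx le_rfl ha) hb)
  apply enorm_rpow_le_iff hp _ (by norm_num)
  rw [MM_PB 1 f hf x, cst]
  refine (jensen2 _ _ hp f (int_bdd _ f hf hb) (int_bdd _ f hf hb)).trans (key.trans ?_)
  rw [← ENNReal.ofReal_mul (by positivity), ← ENNReal.ofReal_mul (by positivity)]
  refine le_trans (mul_le_mul' (ENNReal.ofReal_le_ofReal ?_) (Em_mono n p f (ball_An hx le_rfl) (subset_univ _)))
    (ofReal_mul_le (C := C) (by positivity) hE)
  rw [hC]
  refine mul_le_mul_of_nonneg_right (mul_le_mul_of_nonneg_left ?_ (by positivity)) (by positivity)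
  rw [div_le_div_iff₀ (by positivity) hw, one_mul, one_mul]
  have : 1 ≤ 4 ^ n * tt x ^ n := by rw [← mul_pow]; exact one_le_pow₀ (by linarith)
  nlinarith

/-- all pointwise facts -/
theorem VV_low (hn : 1 ≤ n) {p : ℝ} (hp : 1 ≤ p) : ∃ ε : ℝ, 0 < ε ∧ ∀ (f : Fn n → Fn m), Continuous f → (∀ x, ‖f x‖ = 1) →
    Em n p f (An n) univ ≤ ENNReal.ofReal ε → (∀ σ x, 0 ≤ σ → σ ≤ 1 → 3 / 4 ≤ ‖MM σ f x‖) ∧ 1 / 2 ≤ ‖cst f‖ ∧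
    ∀ θ : Fn n → ℝ, (∀ x, 0 ≤ θ x ∧ θ x ≤ 1) → (∀ x, θ x = 0 ∨ θ x = 1 ∨ (3 / 2 ≤ ‖x‖ ∧ ‖x‖ ≤ 5 / 2)) →
      ∀ x, 1 / 2 ≤ ‖VV θ f x‖ := by
  obtain ⟨ε1, h1, H1⟩ := MM_low (n := n) (m := m) hp
  obtain ⟨ε2, h2, H2⟩ := MM_cst_close (n := n) (m := m) hn hp
  refine ⟨min ε1 ε2, lt_min h1 h2, fun f hf hb hE => ?_⟩
  have K1 := H1 f hf hb (hE.trans (ENNReal.ofReal_le_ofReal (min_le_left _ _)))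
  have K2 := H2 f hf hb (hE.trans (ENNReal.ofReal_le_ofReal (min_le_right _ _)))
  have hc : 1 / 2 ≤ ‖cst f‖ := by
    obtain ⟨x, hx⟩ := exists_norm_two hn
    have a := K2 x (by linarith) (by linarith)
    have b := K1 1 x zero_le_one le_rfl
    have := norm_sub_norm_le (MM 1 f x) (cst f)
    linarith
  refine ⟨K1, hc, fun θ h01 h x => ?_⟩
  have b := K1 1 x zero_le_one le_rfl
  rcases h x with h | h | h
  · rw [VV, h]; simp; linarith
  · rw [VV, h]; simpa using hc
  · have a := K2 x h.1 h.2
    have e : VV θ f x = MM 1 f x - θ x • (MM 1 f x - cst f) := by unfold VV; module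
    have h3 : ‖θ x • (MM 1 f x - cst f)‖ ≤ 1 / 4 := by
      rw [norm_smul, Real.norm_eq_abs, abs_of_nonneg (h01 x).1]
      nlinarith [h01 x, norm_nonneg (MM 1 f x - cst f)]
    have h4 := norm_sub_norm_le (MM 1 f x) (θ x • (MM 1 f x - cst f))
    rw [e]; linarith

lemma VV_cont (f : Fn n → Fn m) (hf : Continuous f) (hb : ∀ x, ‖f x‖ = 1) (θ : Fn n → ℝ) (hθ : Continuous θ) :
    Continuous fun q : ℝ × Fn n => VV (fun x => q.1 * θ x) f q.2 := by
  have hmc : Continuous (MM 1 f) := 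
    (MM_cont f hf hb).comp (f := fun x : Fn n => ((1 : ℝ), x)) (by fun_prop)
  unfold VV; fun_prop
end euc


section chart
variable {n m : ℕ}

lemma singleton_null (hn : 1 ≤ n) (a : Sph n) : (μH[(n : ℝ)] : Measure (Sph n)) {a} = 0 := by
  have := Measure.nullSingletonClass_hausdorff (Sph n) (d := (n : ℝ)) (by exact_mod_cast hn)
  exact measure_singleton a

lemma Em_univ_chart (hn : 1 ≤ n) {p : ℝ} (c : Chart n) {G : Type*} [NormedAddCommGroup G]
    (v : Sph n → G) (hv : Continuous v) {A : Set (Fn n)} (hA : MeasurableSet A) :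
    Em n p v (c.τ '' A) univ = Em n p (v ∘ c.τ) A univ := by
  rw [← Em_conf n p c.τ c.emb.measurableEmbedding c.lam c.lam_meas c.lam_pos c.conf v hv hA MeasurableSet.univ,
    image_univ, c.range_eq]
  unfold Em
  have : (({c.pt}ᶜ : Set (Sph n)) : Set (Sph n)) =ᵐ[(μH[(n : ℝ)] : Measure (Sph n))] univ := by
    rw [ae_eq_univ, compl_compl]; exact singleton_null hn _
  rw [Measure.restrict_congr_set this]

lemma Em_full_chart (hn : 1 ≤ n) {p : ℝ} (c : Chart n) {G : Type*} [NormedAddCommGroup G]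
    (v : Sph n → G) (hv : Continuous v) :
    Em n p v univ univ = Em n p (v ∘ c.τ) univ univ := by
  rw [← Em_univ_chart hn c v hv MeasurableSet.univ, image_univ, c.range_eq]
  unfold Em
  have : (({c.pt}ᶜ : Set (Sph n)) : Set (Sph n)) =ᵐ[(μH[(n : ℝ)] : Measure (Sph n))] univ := by
    rw [ae_eq_univ, compl_compl]; exact singleton_null hn _
  rw [Measure.restrict_congr_set this]

lemma region_cover : (univ : Set (Fn n)) = An n ∪ (In n ∪ Out n) := by
  ext x
  simp only [mem_univ, An, In, Out, mem_union, mem_ofPred_eq, true_iff]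
  by_cases h : ‖x‖ ≤ 1
  · tauto
  · by_cases h2 : 3 ≤ ‖x‖
    · tauto
    · left; constructor <;> linarith

lemma Em_union_right {G : Type*} [NormedAddCommGroup G] (p : ℝ) (v : Fn n → G) (hv : Continuous v)
    (A B B' : Set (Fn n)) : Em n p v A (B ∪ B') ≤ Em n p v A B + Em n p v A B' := by
  rw [Em_symm n p v hv, Em_symm n p v hv A B, Em_symm n p v hv A B']
  exact Em_union_left n p v _ _ _

lemma Em_decomp {G : Type*} [NormedAddCommGroup G] (p : ℝ) (v : Fn n → G) (hv : Continuous v) :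
    Em n p v univ univ ≤ Em n p v (In n) (In n) + Em n p v (Out n) (Out n) + 2 * Em n p v (An n) univ
      + 2 * Em n p v (In n) (Out n) := by
  set A := Em n p v (An n) univ
  set X := Em n p v (In n) (Out n) with hX
  have h0 : Em n p v univ univ ≤ A + Em n p v (In n ∪ Out n) univ := by
    conv_lhs => rw [show Em n p v univ univ = Em n p v (An n ∪ (In n ∪ Out n)) univ by rw [← region_cover]]
    exact Em_union_left n p v _ _ _
  have h1 : Em n p v (In n ∪ Out n) univ ≤ A + Em n p v (In n ∪ Out n) (In n ∪ Out n) := by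
    have : Em n p v (In n ∪ Out n) (An n) ≤ A := by
      rw [Em_symm n p v hv]; exact Em_mono n p v subset_rfl (subset_univ _)
    refine le_trans ?_ (add_le_add_left this _)
    rw [show Em n p v (In n ∪ Out n) univ = Em n p v (In n ∪ Out n) (An n ∪ (In n ∪ Out n)) by rw [← region_cover]]
    exact Em_union_right p v hv _ _ _
  have h2 : Em n p v (In n ∪ Out n) (In n ∪ Out n) ≤ (Em n p v (In n) (In n) + X) + (X + Em n p v (Out n) (Out n)) := by
    refine (Em_union_left n p v _ _ _).trans (add_le_add (Em_union_right p v hv _ _ _) ?_)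
    rw [hX, Em_symm n p v hv (In n)]
    exact Em_union_right p v hv _ _ _
  refine (h0.trans (add_le_add_right (h1.trans (add_le_add_right h2 _)) _)).trans (le_of_eq ?_)
  ring

/-- ramp -/
def ramp (t : ℝ) : ℝ := max 0 (min 1 t)

lemma ramp_nonneg (t : ℝ) : 0 ≤ ramp t := le_max_left _ _
lemma ramp_le (t : ℝ) : ramp t ≤ 1 := max_le zero_le_one (min_le_left _ _)
lemma ramp_one {t : ℝ} (h : 1 ≤ t) : ramp t = 1 := by unfold ramp; rw [min_eq_left h]; simp
lemma ramp_zero {t : ℝ} (h : t ≤ 0) : ramp t = 0 := by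
  unfold ramp; rw [max_eq_left]; exact (min_le_right _ _).trans h
lemma ramp_cont : Continuous ramp := by unfold ramp; fun_prop
lemma ramp_lip (a b : ℝ) : |ramp a - ramp b| ≤ |a - b| := by
  unfold ramp
  refine (abs_max_sub_max_le_max _ _ _ _).trans ?_
  rw [sub_self, abs_zero, max_eq_right (abs_nonneg _)]
  refine (abs_min_sub_min_le_max _ _ _ _).trans ?_
  rw [sub_self, abs_zero, max_eq_right (abs_nonneg _)]

lemma ramp_lip2 (a b : ℝ) (d : ℝ) (hd : 0 ≤ d) (h : |a - b| ≤ 2 * d) : |ramp a - ramp b| ≤ 2 * min 1 d := by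
  have h1 := (ramp_lip a b).trans h
  have h2 : |ramp a - ramp b| ≤ 1 := by
    rw [abs_le]; constructor <;> linarith [ramp_nonneg a, ramp_nonneg b, ramp_le a, ramp_le b]
  rcases min_cases 1 d with ⟨h, _⟩ | ⟨h, _⟩ <;> rw [h] <;> linarith

/-- cutoffs -/
def thw (x : Fn n) : ℝ := ramp (5 - 2 * ‖x‖)
/-- cutoff -/
def thi (x : Fn n) : ℝ := ramp (2 * ‖x‖ - 3)
/-- cutoff -/
def thb (x : Fn n) : ℝ := min (thw x) (thi x)

lemma thw_cont : Continuous (thw (n := n)) := by have := ramp_cont; unfold thw; fun_prop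
lemma thi_cont : Continuous (thi (n := n)) := by have := ramp_cont; unfold thi; fun_prop
lemma thb_cont : Continuous (thb (n := n)) := thw_cont.min thi_cont

lemma thw_lip (x y : Fn n) : |thw x - thw y| ≤ 2 * min 1 (dist x y) := by
  apply ramp_lip2 _ _ _ dist_nonneg
  have := abs_norm_sub_norm_le y x
  rw [← dist_eq_norm, dist_comm] at this
  rw [show 5 - 2 * ‖x‖ - (5 - 2 * ‖y‖) = 2 * (‖y‖ - ‖x‖) by ring, abs_mul, abs_two]
  linarith

lemma thi_lip (x y : Fn n) : |thi x - thi y| ≤ 2 * min 1 (dist x y) := by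
  apply ramp_lip2 _ _ _ dist_nonneg
  have := abs_norm_sub_norm_le x y
  rw [← dist_eq_norm] at this
  rw [show 2 * ‖x‖ - 3 - (2 * ‖y‖ - 3) = 2 * (‖x‖ - ‖y‖) by ring, abs_mul, abs_two]
  linarith

lemma thw_case (x : Fn n) : thw x = 0 ∨ thw x = 1 ∨ (3 / 2 ≤ ‖x‖ ∧ ‖x‖ ≤ 5 / 2) := by
  by_cases h : ‖x‖ ≤ 2
  · right; left; exact ramp_one (by linarith)
  · by_cases h2 : 5 / 2 ≤ ‖x‖
    · left; exact ramp_zero (by linarith)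
    · right; right; constructor <;> linarith

lemma thi_case (x : Fn n) : thi x = 0 ∨ thi x = 1 ∨ (3 / 2 ≤ ‖x‖ ∧ ‖x‖ ≤ 5 / 2) := by
  by_cases h : ‖x‖ ≤ 3 / 2
  · left; exact ramp_zero (by linarith)
  · by_cases h2 : 2 ≤ ‖x‖
    · right; left; exact ramp_one (by linarith)
    · right; right; constructor <;> linarith

lemma thw_in {x : Fn n} (h : ‖x‖ ≤ 2) : thw x = 1 := ramp_one (by linarith)
lemma thi_out {x : Fn n} (h : 2 ≤ ‖x‖) : thi x = 1 := ramp_one (by linarith)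
lemma thb_in {x : Fn n} (h : ‖x‖ ≤ 2) : thb x = thi x := by
  unfold thb; rw [thw_in h, min_eq_right (show thi x ≤ 1 from ramp_le _)]
lemma thb_out {x : Fn n} (h : 2 ≤ ‖x‖) : thb x = thw x := by
  unfold thb; rw [thi_out h, min_eq_left (show thw x ≤ 1 from ramp_le _)]
lemma thw_01 (x : Fn n) : 0 ≤ thw x ∧ thw x ≤ 1 := ⟨ramp_nonneg _, ramp_le _⟩
lemma thi_01 (x : Fn n) : 0 ≤ thi x ∧ thi x ≤ 1 := ⟨ramp_nonneg _, ramp_le _⟩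
lemma thb_01 (x : Fn n) : 0 ≤ thb x ∧ thb x ≤ 1 := ⟨le_min (thw_01 x).1 (thi_01 x).1, min_le_of_left_le (thw_01 x).2⟩
lemma thw_Out {x : Fn n} (h : 5 / 2 ≤ ‖x‖) : thw x = 0 := ramp_zero (by linarith)
lemma thi_In {x : Fn n} (h : ‖x‖ ≤ 3 / 2) : thi x = 0 := ramp_zero (by linarith)

lemma VV_one {f : Fn n → Fn m} {θ : Fn n → ℝ} {x : Fn n} (h : θ x = 1) : VV θ f x = cst f := by
  simp [VV, h]
lemma VV_zero {f : Fn n → Fn m} {θ : Fn n → ℝ} {x : Fn n} (h : θ x = 0) : VV θ f x = MM 1 f x := by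
  simp [VV, h]
lemma VV_congr {f : Fn n → Fn m} {θ θ' : Fn n → ℝ} {x : Fn n} (h : θ x = θ' x) : VV θ f x = VV θ' f x := by
  simp [VV, h]

lemma In_not {x : Fn n} (h : ‖x‖ ≤ 1) : x ∉ An n := fun h' => by linarith [h'.1]
lemma Out_not {x : Fn n} (h : 3 ≤ ‖x‖) : x ∉ An n := fun h' => by linarith [h'.2]

/-- the two energy comparisons in the flat model -/
theorem flat_energy (m : ℕ) (hn : 1 ≤ n) {p : ℝ} (hp : (n : ℝ) < p) : ∃ C : ℝ, 0 < C ∧ ∀ (f : Fn n → Fn (m + 1)),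
    Continuous f → (∀ x, ‖f x‖ = 1) → (∀ x, 1 / 2 ≤ ‖VV thw f x‖) → (∀ x, 1 / 2 ≤ ‖VV thi f x‖) →
    Em n p (fun x => (proj m (VV thw f x) : Fn (m + 1))) univ univ ≤
      Em n p f (Out n) (Out n) + ENNReal.ofReal C * Em n p f (An n) univ ∧
    Em n p (fun x => (proj m (VV thi f x) : Fn (m + 1))) univ univ ≤
      Em n p f (In n) (In n) + ENNReal.ofReal C * Em n p f (An n) univ := by
  have hp1 : 1 ≤ p := by have : (1 : ℝ) ≤ n := by exact_mod_cast hn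
                         linarith
  obtain ⟨C1, hC1, H1⟩ := VV_Em (n := n) (m := m + 1) hn hp
  obtain ⟨C2, hC2, H2⟩ := cross_w (n := n) (m := m + 1) hn hp1
  obtain ⟨C3, hC3, H3⟩ := cross_in (n := n) (m := m + 1) hn hp
  have final : ∀ (Cx : ℝ) (hCx : 0 < Cx) (hle : Cx ≤ C2 + C3) (ν X A : ℝ≥0∞), A ≤ ENNReal.ofReal (4 ^ p) * (ENNReal.ofReal C1 * ν) →
      X ≤ ENNReal.ofReal (4 ^ p) * (ENNReal.ofReal Cx * ν) →
      2 * A + 2 * X ≤ ENNReal.ofReal (2 * (4 ^ p * (C1 + (C2 + C3)))) * ν := by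
    intro Cx hCx hle ν X A hA hX
    refine (add_le_add (mul_le_mul' le_rfl hA) (mul_le_mul' le_rfl hX)).trans ?_
    rw [show (2 : ℝ≥0∞) = ENNReal.ofReal (2 : ℝ) by simp, ← mul_assoc, ← mul_assoc, ← mul_assoc, ← mul_assoc, ← ENNReal.ofReal_mul (by positivity),
      ← ENNReal.ofReal_mul (by positivity), ← ENNReal.ofReal_mul (by positivity), ← add_mul,
      ← ENNReal.ofReal_add (by positivity) (by positivity)]
    refine mul_le_mul' (ENNReal.ofReal_le_ofReal ?_) le_rfl
    have : (0 : ℝ) < 4 ^ p := by positivity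
    nlinarith [mul_le_mul_of_nonneg_left hle this.le]
  refine ⟨2 * (4 ^ p * (C1 + (C2 + C3))), by positivity, fun f hf hb hw hi => ?_⟩
  have cont : ∀ θ : Fn n → ℝ, Continuous θ → Continuous (VV θ f) := fun θ hθ => by
    simpa [Function.comp_def] using (VV_cont f hf hb θ hθ).comp (f := fun x : Fn n => ((1 : ℝ), x)) (by fun_prop)
  have nz : ∀ {y : Fn (m + 1)}, 1 / 2 ≤ ‖y‖ → y ≠ 0 := fun h h0 => by
    rw [h0] at h; norm_num at h
  have projf : ∀ {y : Fn (m + 1)} , ‖y‖ = 1 → (proj m y : Fn (m + 1)) = y := fun {y} h => by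
    rw [coe_proj (fun h0 => by rw [h0] at h; norm_num at h), h]; simp
  constructor
  · have hc : Continuous fun x => (proj m (VV thw f x) : Fn (m + 1)) :=
      continuous_subtype_val.comp (proj_continuous (cont _ thw_cont) fun x => nz (hw x))
    have hlip : ∀ x y, ‖(proj m (VV thw f x) : Fn (m + 1)) - proj m (VV thw f y)‖ ≤ 4 * ‖VV thw f x - VV thw f y‖ :=
      fun x y => proj_lip (hw x) (hw y)
    refine (Em_decomp p _ hc).trans ?_
    rw [Em_const n (by linarith) _ In_meas (proj m (cst f) : Fn (m + 1)) (fun x hx => by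
      rw [VV_one (thw_in (by have : ‖x‖ ≤ 1 := hx
                             linarith))]), zero_add]
    rw [Em_congr n p _ f Out_meas Out_meas
      (fun x hx => by
        have hx' : 3 ≤ ‖x‖ := hx
        rw [VV_zero (thw_Out (by linarith)), MM_off _ _ (Out_not hx'), projf (hb x)])
      (fun x hx => by
        have hx' : 3 ≤ ‖x‖ := hx
        rw [VV_zero (thw_Out (by linarith)), MM_off _ _ (Out_not hx'), projf (hb x)]), add_assoc]
    refine add_le_add le_rfl (final C2 hC2 (by linarith) _ _ _ ?_ ?_)
    · exact (Em_lip n (by linarith) (VV thw f) _ (by norm_num) hlip _ _).trans (mul_le_mul' le_rfl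
        (H1 f thw hf hb (fun x => (thw_01 x).1) (fun x => (thw_01 x).2) thw_lip))
    · refine (Em_lip n (by linarith) (VV thw f) _ (by norm_num) hlip _ _).trans (mul_le_mul' le_rfl
        (H2 f _ hf hb (fun x hx => ?_) (fun x hx => ?_)))
      · exact VV_one (thw_in (by have : ‖x‖ ≤ 1 := hx
                                 linarith))
      · have hx' : 3 ≤ ‖x‖ := hx
        rw [VV_zero (thw_Out (by linarith)), MM_off _ _ (Out_not hx')]
  · have hc : Continuous fun x => (proj m (VV thi f x) : Fn (m + 1)) :=
      continuous_subtype_val.comp (proj_continuous (cont _ thi_cont) fun x => nz (hi x))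
    have hlip : ∀ x y, ‖(proj m (VV thi f x) : Fn (m + 1)) - proj m (VV thi f y)‖ ≤ 4 * ‖VV thi f x - VV thi f y‖ :=
      fun x y => proj_lip (hi x) (hi y)
    refine (Em_decomp p _ hc).trans ?_
    rw [Em_const n (by linarith) _ Out_meas (proj m (cst f) : Fn (m + 1)) (fun x hx => by
      rw [VV_one (thi_out (by have : 3 ≤ ‖x‖ := hx
                              linarith))]), add_zero]
    rw [Em_congr n p _ f In_meas In_meas
      (fun x hx => by
        have hx' : ‖x‖ ≤ 1 := hx
        rw [VV_zero (thi_In (by linarith)), MM_off _ _ (In_not hx'), projf (hb x)])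
      (fun x hx => by
        have hx' : ‖x‖ ≤ 1 := hx
        rw [VV_zero (thi_In (by linarith)), MM_off _ _ (In_not hx'), projf (hb x)]), add_assoc]
    refine add_le_add le_rfl (final C3 hC3 (by linarith) _ _ _ ?_ ?_)
    · exact (Em_lip n (by linarith) (VV thi f) _ (by norm_num) hlip _ _).trans (mul_le_mul' le_rfl
        (H1 f thi hf hb (fun x => (thi_01 x).1) (fun x => (thi_01 x).2) thi_lip))
    · refine (Em_lip n (by linarith) (VV thi f) _ (by norm_num) hlip _ _).trans (mul_le_mul' le_rfl
        (H3 f _ hf hb (fun x hx => ?_) (fun x hx => ?_)))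
      · have hx' : ‖x‖ ≤ 1 := hx
        rw [VV_zero (thi_In (by linarith)), MM_off _ _ (In_not hx')]
      · exact VV_one (thi_out (by have : 3 ≤ ‖x‖ := hx
                                  linarith))
end chart


section rep
variable {n m : ℕ}

lemma glue_self (c : Chart n) {Y : Type*} [TopologicalSpace Y] (U : Sph n → Y) : glue c U (fun x => U (c.τ x)) = U := by
  ext1 y
  by_cases h : y ∈ range c.τ
  · obtain ⟨x, rfl⟩ := h; rw [glue_tau]
  · rw [glue, dif_neg h]

lemma glue_cont0 (c : Chart n) {Y : Type*} [TopologicalSpace Y] (U : Sph n → Y) (hU : Continuous U) (F : Fn n → Y)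
    (hF : Continuous F) (R : ℝ) (hFU : ∀ x, R ≤ ‖x‖ → F x = U (c.τ x)) : Continuous (glue c U F) := by
  have := glue_continuous (T := Unit) c U hU (fun _ => F) (by fun_prop) R (fun _ => hFU)
  exact this.comp (f := fun y : Sph n => ((), y)) (by fun_prop)

lemma scale_dist (a : Sph n) (r : ℝ) (hr : 0 < r) (x : Fn n) :
    dist (((st n a).scale r hr).τ x) a ^ 2 = 4 * (r * ‖x‖) ^ 2 / ((r * ‖x‖) ^ 2 + 4) := by
  have := st_dist n a (r • x)
  rwa [norm_smul, Real.norm_eq_abs, abs_of_pos hr] at this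

lemma scale_iff (a : Sph n) (r : ℝ) (hr : 0 < r) (x : Fn n) :
    Real.sqrt (4 * (r * 2) ^ 2 / ((r * 2) ^ 2 + 4)) ≤ dist (((st n a).scale r hr).τ x) a ↔ 2 ≤ ‖x‖ := by
  rw [Real.sqrt_le_left dist_nonneg, scale_dist, div_le_div_iff₀ (by positivity) (by positivity)]
  constructor
  · intro h
    have h2 : (r * 2) ^ 2 ≤ (r * ‖x‖) ^ 2 := by nlinarith
    have h3 := le_of_sq_le_sq0 h2 (by positivity)
    exact le_of_mul_le_mul_left h3 hr
  · intro h
    have h2 : (r * 2) ^ 2 ≤ (r * ‖x‖) ^ 2 := by gcongr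
    nlinarith

theorem replace (a : Sph n) (r : ℝ) (hr : 0 < r) (U : Sph n → Sph m) (hU : Continuous U)
    (hM : ∀ σ x, 0 ≤ σ → σ ≤ 1 → 3 / 4 ≤ ‖MM σ (cv U ∘ ((st n a).scale r hr).τ) x‖)
    (hV : ∀ θ : Fn n → ℝ, (∀ x, 0 ≤ θ x ∧ θ x ≤ 1) → (∀ x, θ x = 0 ∨ θ x = 1 ∨ (3 / 2 ≤ ‖x‖ ∧ ‖x‖ ≤ 5 / 2)) →
      ∀ x, 1 / 2 ≤ ‖VV θ (cv U ∘ ((st n a).scale r hr).τ) x‖) :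
    ∃ ui w : Sph n → Sph m, Continuous ui ∧ Continuous w ∧
      (∀ x, ui (((st n a).scale r hr).τ x) = proj m (VV thi (cv U ∘ ((st n a).scale r hr).τ) x)) ∧
      (∀ x, w (((st n a).scale r hr).τ x) = proj m (VV thw (cv U ∘ ((st n a).scale r hr).τ) x)) ∧
      (NullHomotopic ui → Homotopic w U) := by
  set c := (st n a).scale r hr with hc
  set f : Fn n → Fn (m + 1) := cv U ∘ c.τ with hf
  have hfc : Continuous f := (cv_cont hU).comp c.emb.continuous
  have hb : ∀ x, ‖f x‖ = 1 := fun x => cv_norm _ _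
  have cont : ∀ θ : Fn n → ℝ, Continuous θ → Continuous (VV θ f) := fun θ hθ => by
    simpa [Function.comp_def] using (VV_cont f hfc hb θ hθ).comp (f := fun x : Fn n => ((1 : ℝ), x)) (by fun_prop)
  have nz : ∀ {y : Fn (m + 1)}, 1 / 2 ≤ ‖y‖ → y ≠ 0 := fun h h0 => by
    rw [h0] at h; norm_num at h
  have pf : ∀ x, proj m (f x) = U (c.τ x) := fun x => proj_coe _
  have bcase : ∀ x : Fn n, thb x = 0 ∨ thb x = 1 ∨ (3 / 2 ≤ ‖x‖ ∧ ‖x‖ ≤ 5 / 2) := fun x => by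
    rcases le_total ‖x‖ 2 with h | h
    · rw [thb_in h]; exact thi_case x
    · rw [thb_out h]; exact thw_case x
  have tbcase : ∀ t : ℝ, 0 ≤ t → t ≤ 1 → ∀ x : Fn n, 1 / 2 ≤ ‖VV (fun x => t * thb x) f x‖ := by
    intro t h0 h1 x
    by_cases hx : 3 / 2 ≤ ‖x‖ ∧ ‖x‖ ≤ 5 / 2
    · have := hV (fun y => if 3 / 2 ≤ ‖y‖ ∧ ‖y‖ ≤ 5 / 2 then t * thb y else 0) (fun y => by
        split_ifs
        · exact ⟨mul_nonneg h0 (thb_01 y).1, mul_le_one₀ h1 (thb_01 y).1 (thb_01 y).2⟩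
        · simp) (fun y => by
        by_cases hy : 3 / 2 ≤ ‖y‖ ∧ ‖y‖ ≤ 5 / 2
        · right; right; exact hy
        · left; simp only [if_neg hy]) x
      rwa [VV_congr (θ' := fun x => t * thb x) (by simp only [if_pos hx])] at this
    · have hz : thb x = 0 := by
        by_cases h : ‖x‖ ≤ 3 / 2
        · rw [thb_in (by linarith), thi_In h]
        · have : 5 / 2 ≤ ‖x‖ := by
            by_contra h'
            exact hx ⟨by linarith, by linarith⟩
          rw [thb_out (by linarith), thw_Out this]
      rw [VV_zero (by rw [hz, mul_zero])]
      linarith [hM 1 x zero_le_one le_rfl]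
  -- the intermediate map
  set U' : Sph n → Sph m := glue c U (fun x => proj m (VV thb f x)) with hU'
  have far : ∀ (θ : Fn n → ℝ) x, 3 ≤ ‖x‖ → θ x = 0 → proj m (VV θ f x) = U (c.τ x) := fun θ x hx h => by
    rw [VV_zero h, MM_off _ _ (Out_not hx), pf]
  have thb_far : ∀ x : Fn n, 3 ≤ ‖x‖ → thb x = 0 := fun x hx => by
    rw [thb_out (by linarith), thw_Out (by linarith)]
  have hU'c : Continuous U' := by
    refine glue_cont0 c U hU _ (proj_continuous (cont _ thb_cont) fun x => nz ?_) 3 (fun x hx => far _ x hx (thb_far x hx))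
    simpa using tbcase 1 zero_le_one le_rfl x
  have hom1 : Homotopic U (glue c U (fun x => proj m (MM 1 f x))) := by
    refine ⟨fun z => glue c U (fun x => proj m (MM (z.1 : ℝ) f x)) z.2, ?_, fun x => ?_, fun x => ?_⟩
    · refine glue_continuous c U hU (fun (t : unitInterval) x => proj m (MM (t : ℝ) f x)) ?_ 3 ?_
      · refine proj_continuous (F := fun z : unitInterval × Fn n => MM (z.1 : ℝ) f z.2) ?_ fun z => nz ?_
        · exact (MM_cont f hfc hb).comp (f := fun z : unitInterval × Fn n => ((z.1 : ℝ), z.2)) (by fun_prop)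
        · linarith [hM z.1 z.2 z.1.2.1 z.1.2.2]
      · intro t x hx
        rw [MM_off _ _ (Out_not hx), pf]
    · simp only [Set.Icc.coe_zero, MM_zero, pf]
      rw [glue_self]
    · simp
  have hom2 : Homotopic (glue c U (fun x => proj m (MM 1 f x))) U' := by
    refine ⟨fun z => glue c U (fun x => proj m (VV (fun y => (z.1 : ℝ) * thb y) f x)) z.2, ?_, fun x => ?_, fun x => ?_⟩
    · refine glue_continuous c U hU (fun (t : unitInterval) x => proj m (VV (fun y => (t : ℝ) * thb y) f x)) ?_ 3 ?_
      · refine proj_continuous (F := fun z : unitInterval × Fn n => VV (fun y => (z.1 : ℝ) * thb y) f z.2) ?_ fun z => nz ?_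
        · exact (VV_cont f hfc hb thb thb_cont).comp (f := fun z : unitInterval × Fn n => ((z.1 : ℝ), z.2)) (by fun_prop)
        · exact tbcase z.1 z.1.2.1 z.1.2.2 z.2
      · intro t x hx
        exact far _ x hx (by rw [thb_far x hx, mul_zero])
    · simp only [Set.Icc.coe_zero, zero_mul]
      congr 1
      ext1 x
      rw [VV_zero rfl]
    · simp [hU']
  set c' : Sph m := proj m (cst f) with hc'
  set ρ := Real.sqrt (4 * (r * 2) ^ 2 / ((r * 2) ^ 2 + 4)) with hρ
  have hρ0 : 0 < ρ := Real.sqrt_pos.2 (by positivity)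
  have hρ2 : ρ ≤ 2 := by
    rw [hρ, Real.sqrt_le_left (by norm_num), div_le_iff₀ (by positivity)]; nlinarith
  have iff : ∀ x, ρ ≤ dist (c.τ x) a ↔ 2 ≤ ‖x‖ := scale_iff a r hr
  have offr : ∀ y, y ∉ range c.τ → dist y a = 2 := fun y hy => by
    rw [c.range_eq, mem_compl_iff, not_not] at hy
    have : y = (st n a).pt := hy
    rw [this, st_pt, dist_neg_self]
  set ui : Sph n → Sph m := glue c (fun _ => c') (fun x => proj m (VV thi f x)) with hui
  set w : Sph n → Sph m := glue c U (fun x => proj m (VV thw f x)) with hw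
  have hiV := hV thi thi_01 thi_case
  have hwV := hV thw thw_01 thw_case
  have e1 : ui = fun y => if ρ ≤ dist y a then c' else U' y := by
    ext1 y
    by_cases h : y ∈ range c.τ
    · obtain ⟨x, rfl⟩ := h
      rw [hui, glue_tau]
      simp only [iff]
      split_ifs with h
      · rw [VV_one (thi_out h)]
      · rw [hU', glue_tau, VV_congr (thb_in (by linarith))]
    · rw [hui, glue, dif_neg h, if_pos (by rw [offr y h]; exact hρ2)]
  have e2 : w = fun y => if ρ ≤ dist y a then U' y else c' := by
    ext1 y
    by_cases h : y ∈ range c.τ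
    · obtain ⟨x, rfl⟩ := h
      rw [hw, glue_tau]
      simp only [iff]
      split_ifs with h
      · rw [hU', glue_tau, VV_congr (thb_out (by linarith))]
      · rw [VV_one (thw_in (by linarith))]
    · rw [hw, glue, dif_neg h, if_pos (by rw [offr y h]; exact hρ2), hU', glue, dif_neg h]
  refine ⟨ui, w, ?_, ?_, fun x => glue_tau _ _ _ _, fun x => glue_tau _ _ _ _, fun hnull => ?_⟩
  · exact glue_cont0 c _ continuous_const _ (proj_continuous (cont _ thi_cont) fun x => nz (hiV x)) 2
      (fun x hx => by rw [VV_one (thi_out hx)])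
  · exact glue_cont0 c _ hU _ (proj_continuous (cont _ thw_cont) fun x => nz (hwV x)) 3
      (fun x hx => far _ x hx (thw_Out (by linarith)))
  · rw [e1] at hnull
    have := topo a ρ hρ0 hρ2 U' hU'c c' (fun y hy => by
      have h : y ∈ range c.τ := by
        by_contra h
        have h2 := offr y h
        rw [hy] at h2
        have : ρ ^ 2 < 4 := by
          rw [hρ, Real.sq_sqrt (by positivity), div_lt_iff₀ (by positivity)]; nlinarith
        rw [h2] at this; norm_num at this
      obtain ⟨x, rfl⟩ := h
      have h2 : ‖x‖ = 2 := by
        have h3 := scale_dist a r hr x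
        rw [← hc, hy, hρ, Real.sq_sqrt (by positivity), div_eq_div_iff (by positivity) (by positivity)] at h3
        have h4 : (r * 2) ^ 2 = (r * ‖x‖) ^ 2 := by linarith
        have h5 := (pow_left_inj₀ (by positivity) (by positivity) two_ne_zero).1 h4
        exact (mul_left_cancel₀ hr.ne' h5).symm
      rw [hU', glue_tau, VV_one (by rw [thb_in h2.le, thi_out h2.ge])]) hnull
    rw [← e2] at this
    exact ((hom1.trans' hom2).trans' this).symm'

lemma hole {A B X Y η C : ℝ} (hC : 0 < C) (hA : 0 ≤ A) (h : A + B + X ≤ X + C * B + η) (hη : 0 ≤ η) (hB : 0 ≤ B) :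
    A ≤ C / (C + 1) * (A + B) + η := by
  have h1 : A * (C + 1) ≤ C * (A + B) + η := by nlinarith
  have h2 : A ≤ (C * (A + B) + η) / (C + 1) := by rw [le_div_iff₀ (by linarith)]; exact h1
  refine h2.trans ?_
  rw [add_div, mul_div_right_comm]
  have : η / (C + 1) ≤ η := div_le_self hη (by linarith)
  linarith

theorem KL (m : ℕ) (hn : 1 ≤ n) {p : ℝ} (hp : (n : ℝ) < p) (δ : ℝ) (hδ : 0 < δ)
    (hnull : ∀ u : Sph n → Sph m, Continuous u → Em n p (cv u) univ univ < ENNReal.ofReal δ → NullHomotopic u) :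
    ∃ θ : ℝ, 0 < θ ∧ θ < 1 ∧ ∀ (U : Sph n → Sph m) (η : ℝ), Continuous U → 0 ≤ η → Em n p (cv U) univ univ ≠ ∞ →
      (∀ w : Sph n → Sph m, Continuous w → Homotopic w U → Em n p (cv U) univ univ ≤ Em n p (cv w) univ univ + ENNReal.ofReal η) →
      ∀ (a : Sph n) (s : ℝ), 0 < s → s ≤ 1 → Em n p (cv U) (Metric.ball a (6 * s)) univ ≤ ENNReal.ofReal (2 / 3 * δ) →
        Em n p (cv U) (Metric.ball a s) univ ≤ ENNReal.ofReal θ * Em n p (cv U) (Metric.ball a (6 * s)) univ + ENNReal.ofReal η := by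
  have hp1 : 1 ≤ p := by have : (1 : ℝ) ≤ n := by exact_mod_cast hn
                         linarith
  obtain ⟨ε0, hε0, HL⟩ := VV_low (n := n) (m := m + 1) hn hp1
  obtain ⟨C, hC, HE⟩ := flat_energy (n := n) m hn hp
  set ε1 := min ε0 (min (δ / 2) (δ / 4 / C)) with hε1
  have hε1p : 0 < ε1 := by positivity
  have hε1δ : ε1 ≤ δ / 2 := (min_le_right _ _).trans (min_le_left _ _)
  refine ⟨max (C / (C + 1)) (1 - ε1 / δ), lt_max_of_lt_left (by positivity), max_lt ?_ ?_, ?_⟩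
  · rw [div_lt_one (by linarith)]; linarith
  · have : 0 < ε1 / δ := by positivity
    linarith
  intro U η hU hη hfin hmin a s hs hs1 hsm
  set θ := max (C / (C + 1)) (1 - ε1 / δ) with hθ
  set c := (st n a).scale (2 * s) (by positivity) with hc
  set f : Fn n → Fn (m + 1) := cv U ∘ c.τ with hf
  have hfc : Continuous f := (cv_cont hU).comp c.emb.continuous
  have hb : ∀ x, ‖f x‖ = 1 := fun x => cv_norm _ _
  have hEf : Em n p (cv U) univ univ = Em n p f univ univ := Em_full_chart hn c _ (cv_cont hU)
  rw [hEf] at hfin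
  have hall : ∀ A B, Em n p f A B ≠ ∞ := fun A B =>
    ((Em_mono n p f (subset_univ _) (subset_univ _)).trans_lt hfin.lt_top).ne
  -- balls
  have hin : Em n p (cv U) (Metric.ball a s) univ ≤ Em n p f (In n) univ := by
    rw [hf, ← Em_univ_chart hn c _ (cv_cont hU) In_meas]
    refine Em_mono n p _ (fun y hy => ?_) subset_rfl
    obtain ⟨x, hx, rfl⟩ := ball_sub_st n a hs1 hy
    refine ⟨(2 * s)⁻¹ • x, ?_, ?_⟩
    · show ‖(2 * s)⁻¹ • x‖ ≤ 1
      rw [mem_ball_zero_iff] at hx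
      rw [norm_smul, norm_inv, Real.norm_eq_abs, abs_of_pos (by positivity : 0 < 2 * s), inv_mul_le_iff₀ (by positivity)]
      linarith
    · show (st n a).τ ((2 * s) • (2 * s)⁻¹ • x) = _
      rw [smul_inv_smul₀ (by positivity)]
  have hout : Em n p f (In n ∪ An n) univ ≤ Em n p (cv U) (Metric.ball a (6 * s)) univ := by
    rw [hf, ← Em_univ_chart hn c _ (cv_cont hU) (In_meas.union An_meas)]
    refine Em_mono n p _ ?_ subset_rfl
    rintro _ ⟨x, hx, rfl⟩
    refine st_sub_ball n a (6 * s) ⟨(2 * s) • x, ?_, rfl⟩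
    rw [mem_ball_zero_iff, norm_smul, Real.norm_eq_abs, abs_of_pos (by positivity : 0 < 2 * s)]
    have : ‖x‖ < 3 := by
      rcases hx with hx | hx
      · have : ‖x‖ ≤ 1 := hx
        linarith
      · exact hx.2
    nlinarith
  have hdis : Em n p f (In n ∪ An n) univ = Em n p f (In n) univ + Em n p f (An n) univ := by
    unfold Em
    refine lintegral_union An_meas (Set.disjoint_left.2 fun x hx hx' => In_not hx hx')
  have hdis2 : Em n p f (In n ∪ An n) univ + Em n p f (Out n) univ = Em n p f univ univ := by
    unfold Em
    rw [← lintegral_union Out_meas]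
    · rw [show In n ∪ An n ∪ Out n = univ by rw [region_cover, union_comm (In n), union_assoc]]
    · refine Set.disjoint_left.2 fun x hx hx' => ?_
      have h3 : 3 ≤ ‖x‖ := hx'
      rcases hx with hx | hx
      · have : ‖x‖ ≤ 1 := hx
        linarith
      · linarith [hx.2]
  have hsm' := hout.trans hsm
  refine hin.trans (le_trans ?_ (add_le_add_left (mul_le_mul' le_rfl hout) _))
  set A := (Em n p f (In n) univ).toReal with hA
  set B := (Em n p f (An n) univ).toReal with hB
  set X := (Em n p f (Out n) (Out n)).toReal with hX
  have eA : Em n p f (In n) univ = ENNReal.ofReal A := (ENNReal.ofReal_toReal (hall _ _)).symm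
  have eB : Em n p f (An n) univ = ENNReal.ofReal B := (ENNReal.ofReal_toReal (hall _ _)).symm
  have eX : Em n p f (Out n) (Out n) = ENNReal.ofReal X := (ENNReal.ofReal_toReal (hall _ _)).symm
  have hA0 : 0 ≤ A := ENNReal.toReal_nonneg
  have hB0 : 0 ≤ B := ENNReal.toReal_nonneg
  have hX0 : 0 ≤ X := ENNReal.toReal_nonneg
  have hθ0 : 0 ≤ θ := le_max_of_le_left (by positivity)
  rw [hdis, eA, eB, ← ENNReal.ofReal_add hA0 hB0, ← ENNReal.ofReal_mul hθ0, ← ENNReal.ofReal_add (by positivity) hη]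
  rw [hdis, eA, eB, ← ENNReal.ofReal_add hA0 hB0, ENNReal.ofReal_le_ofReal_iff (by positivity)] at hsm'
  apply ENNReal.ofReal_le_ofReal
  rcases le_or_gt B ε1 with hBε | hBε
  · have hBsm : Em n p f (An n) univ ≤ ENNReal.ofReal ε0 := by
      rw [eB]; exact ENNReal.ofReal_le_ofReal (hBε.trans (min_le_left _ _))
    obtain ⟨hM, -, hV⟩ := HL f hfc hb hBsm
    obtain ⟨ui, w, huic, hwc, hui, hw, himp⟩ := replace a (2 * s) (by positivity) U hU hM hV
    obtain ⟨E1, E2⟩ := HE f hfc hb (hV thw thw_01 thw_case) (hV thi thi_01 thi_case)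
    have Ew : Em n p (cv w) univ univ ≤ Em n p f (Out n) (Out n) + ENNReal.ofReal C * Em n p f (An n) univ := by
      rw [Em_full_chart hn c _ (cv_cont hwc)]
      convert E1 using 2
      ext1 x; exact congrArg Subtype.val (hw x)
    have Ei : Em n p (cv ui) univ univ ≤ Em n p f (In n) (In n) + ENNReal.ofReal C * Em n p f (An n) univ := by
      rw [Em_full_chart hn c _ (cv_cont huic)]
      convert E2 using 2
      ext1 x; exact congrArg Subtype.val (hui x)
    have hlt : Em n p (cv ui) univ univ < ENNReal.ofReal δ := by
      refine (Ei.trans (add_le_add_left (Em_mono n p f subset_rfl (subset_univ _)) _)).trans_lt ?_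
      rw [eA, eB, ← ENNReal.ofReal_mul hC.le, ← ENNReal.ofReal_add hA0 (by positivity), ENNReal.ofReal_lt_ofReal_iff hδ]
      have : C * B ≤ δ / 4 := by
        have : B ≤ δ / 4 / C := hBε.trans ((min_le_right _ _).trans (min_le_right _ _))
        rw [le_div_iff₀ hC] at this
        linarith
      linarith
    have hEw := (hmin w hwc (himp (hnull ui huic hlt))).trans (add_le_add_left Ew _)
    have h4 : Em n p f (In n ∪ An n) univ + Em n p f (Out n) (Out n) ≤ Em n p f (Out n) (Out n) +
        ENNReal.ofReal C * Em n p f (An n) univ + ENNReal.ofReal η := by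
      refine le_trans ?_ hEw
      rw [hEf, ← hdis2]
      exact add_le_add_right (Em_mono n p f subset_rfl (subset_univ _)) _
    rw [hdis, eA, eB, eX, ← ENNReal.ofReal_mul hC.le, ← ENNReal.ofReal_add hA0 hB0, ← ENNReal.ofReal_add (by positivity) hX0,
      ← ENNReal.ofReal_add hX0 (by positivity), ← ENNReal.ofReal_add (by positivity) hη,
      ENNReal.ofReal_le_ofReal_iff (by positivity)] at h4
    refine (hole (Y := 0) hC hA0 h4 hη hB0).trans ?_
    have := le_max_left (C / (C + 1)) (1 - ε1 / δ)
    gcongr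
  · have h1 : A ≤ (1 - ε1 / δ) * (A + B) := by
      have : ε1 / δ * (A + B) ≤ ε1 := by
        rw [div_mul_eq_mul_div, div_le_iff₀ hδ]
        have : A + B ≤ δ := by linarith
        gcongr
      nlinarith
    have h2 : (1 - ε1 / δ) * (A + B) ≤ θ * (A + B) :=
      mul_le_mul_of_nonneg_right (le_max_right _ _) (by linarith)
    linarith
end rep


section mob
variable {n m : ℕ}

/-- conformal automorphism of the sphere, as a vector -/
def mobv (b x : Fn (n + 1)) : Fn (n + 1) := (Real.sqrt (1 - ‖b‖ ^ 2) / ‖x - b‖) ^ 2 • (x - b) - b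

/-- conformal automorphism of the sphere -/
def mob (b : Fn (n + 1)) (x : Sph n) : Sph n := proj n (mobv b x)

lemma mob_ne {b : Fn (n + 1)} (hb : ‖b‖ < 1) (x : Sph n) : (x : Fn (n + 1)) - b ≠ 0 := by
  intro h
  rw [sub_eq_zero] at h
  have : ‖(x : Fn (n + 1))‖ = 1 := by simp
  rw [h] at this; linarith

lemma mob_sq {b : Fn (n + 1)} (hb : ‖b‖ < 1) : Real.sqrt (1 - ‖b‖ ^ 2) ^ 2 = 1 - ‖b‖ ^ 2 :=
  Real.sq_sqrt (by nlinarith [norm_nonneg b])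

lemma mobv_norm {b : Fn (n + 1)} (hb : ‖b‖ < 1) (x : Sph n) : ‖mobv b (x : Fn (n + 1))‖ = 1 := by
  have hx : ‖(x : Fn (n + 1))‖ = 1 := by simp
  have hd := norm_pos_iff.2 (mob_ne hb x)
  have h2 : ‖(x : Fn (n + 1)) - b‖ ^ 2 = 1 - 2 * inner ℝ (x : Fn (n + 1)) b + ‖b‖ ^ 2 := by
    rw [norm_sub_sq_real, hx]; ring
  have h3 : inner ℝ ((x : Fn (n + 1)) - b) b = inner ℝ (x : Fn (n + 1)) b - ‖b‖ ^ 2 := by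
    rw [inner_sub_left, real_inner_self_eq_norm_sq]
  have h1 : ‖mobv b (x : Fn (n + 1))‖ ^ 2 = 1 := by
    rw [mobv, norm_sub_sq_real, norm_smul, inner_smul_left, h3, div_pow, mob_sq hb, mul_pow, Real.norm_eq_abs, sq_abs]
    simp only [conj_trivial]
    have h4 : inner ℝ (x : Fn (n + 1)) b = (1 + ‖b‖ ^ 2 - ‖(x : Fn (n + 1)) - b‖ ^ 2) / 2 := by linarith
    rw [h4]
    field_simp
    ring
  exact (pow_eq_one_iff_of_nonneg (norm_nonneg _) two_ne_zero).1 h1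

lemma coe_mob {b : Fn (n + 1)} (hb : ‖b‖ < 1) (x : Sph n) : (mob b x : Fn (n + 1)) = mobv b x := by
  have : (⟨mobv b x, by simpa using mobv_norm hb x⟩ : Sph n) = mob b x := (proj_coe _).symm
  rw [← this]

lemma mob_inv {b : Fn (n + 1)} (hb : ‖b‖ < 1) (x : Sph n) : mob (-b) (mob b x) = x := by
  have hb' : ‖-b‖ < 1 := by rwa [norm_neg]
  apply Subtype.ext
  have hd := norm_pos_iff.2 (mob_ne hb x)
  have hR : 0 < 1 - ‖b‖ ^ 2 := by nlinarith [norm_nonneg b]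
  rw [coe_mob hb', mobv, coe_mob hb]
  have : mobv b (x : Fn (n + 1)) - -b = (Real.sqrt (1 - ‖b‖ ^ 2) / ‖(x : Fn (n + 1)) - b‖) ^ 2 • ((x : Fn (n + 1)) - b) := by
    rw [mobv]; abel
  rw [this, norm_smul, smul_smul, norm_neg, sub_neg_eq_add, Real.norm_eq_abs, abs_of_nonneg (by positivity), div_pow, div_pow, mul_pow, div_pow, mob_sq hb]
  have : (1 - ‖b‖ ^ 2) / ((1 - ‖b‖ ^ 2) ^ 2 / (‖(x : Fn (n + 1)) - b‖ ^ 2) ^ 2 * ‖(x : Fn (n + 1)) - b‖ ^ 2) *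
      ((1 - ‖b‖ ^ 2) / ‖(x : Fn (n + 1)) - b‖ ^ 2) = 1 := by
    field_simp
  rw [this, one_smul]; abel

lemma mob_conf {b : Fn (n + 1)} (hb : ‖b‖ < 1) (x y : Sph n) : dist (mob b x) (mob b y) ^ 2 =
    (1 - ‖b‖ ^ 2) / ‖(x : Fn (n + 1)) - b‖ ^ 2 * ((1 - ‖b‖ ^ 2) / ‖(y : Fn (n + 1)) - b‖ ^ 2) * dist x y ^ 2 := by
  rw [Subtype.dist_eq, coe_mob hb, coe_mob hb, mobv, mobv, dist_sub_right,
    dist_div_norm_sq_smul (mob_ne hb x) (mob_ne hb y), dist_sub_right, ← Subtype.dist_eq, mob_sq hb]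
  rw [mul_pow, div_pow, mul_pow]
  have := norm_pos_iff.2 (mob_ne hb x)
  have := norm_pos_iff.2 (mob_ne hb y)
  field_simp

lemma mob_contOn (b : Fn (n + 1)) (hb : ‖b‖ < 1) :
    ContinuousOn (fun z : ℝ × Sph n => mob (z.1 • b) z.2) (Icc 0 1 ×ˢ univ) := by
  have hl : ∀ z ∈ Icc (0 : ℝ) 1 ×ˢ (univ : Set (Sph n)), ‖z.1 • b‖ < 1 := by
    rintro ⟨t, x⟩ ⟨⟨h0, h1⟩, -⟩
    rw [norm_smul, Real.norm_eq_abs, abs_of_nonneg h0]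
    nlinarith [norm_nonneg b]
  refine proj_continuousOn ?_ ?_
  · unfold mobv
    have h1 : ContinuousOn (fun z : ℝ × Sph n => Real.sqrt (1 - ‖z.1 • b‖ ^ 2) / ‖(z.2 : Fn (n + 1)) - z.1 • b‖) (Icc 0 1 ×ˢ univ) := by
      refine ContinuousOn.div (by fun_prop) (by fun_prop) ?_
      intro z hz
      exact (norm_pos_iff.2 (mob_ne (hl z hz) z.2)).ne'
    fun_prop
  · intro z hz h0
    have := mobv_norm (hl z hz) z.2
    rw [h0] at this; simp at this

lemma mob_cont {b : Fn (n + 1)} (hb : ‖b‖ < 1) : Continuous (mob (n := n) b) := by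
  have := (mob_contOn b hb).comp (f := fun x : Sph n => ((1 : ℝ), x)) (s := univ) (by fun_prop) (fun x _ => by simp)
  rw [← continuousOn_univ]
  simpa [Function.comp_def] using this

lemma mob_zero (x : Sph n) : mob 0 x = x := by
  apply Subtype.ext
  rw [coe_mob (by simp), mobv]
  simp

lemma mob_homotopic {b : Fn (n + 1)} (hb : ‖b‖ < 1) (u : Sph n → Sph m) (hu : Continuous u) :
    Homotopic (u ∘ mob b) u := by
  refine Homotopic.symm' (Homotopic.of_real (fun t x => u (mob (t • b) x)) ?_ ?_ ?_)
  · exact hu.comp_continuousOn (mob_contOn b hb)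
  · simp [mob_zero]
  · simp

/-- the homeomorphism -/
def mobH (b : Fn (n + 1)) (hb : ‖b‖ < 1) : Sph n ≃ₜ Sph n where
  toFun := mob b
  invFun := mob (-b)
  left_inv := mob_inv hb
  right_inv x := by
    have := mob_inv (b := -b) (by rwa [norm_neg]) x
    rwa [neg_neg] at this
  continuous_toFun := mob_cont hb
  continuous_invFun := mob_cont (by rwa [norm_neg])

lemma Em_mob {b : Fn (n + 1)} (hb : ‖b‖ < 1) (p : ℝ) (u : Sph n → Sph m) (hu : Continuous u) {A : Set (Sph n)} (hA : MeasurableSet A) :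
    Em n p (cv (u ∘ mob b)) A univ = Em n p (cv u) (mob b '' A) univ := by
  have he : MeasurableEmbedding (mob (n := n) b) := (mobH b hb).measurableEmbedding
  have hs : mob (n := n) b '' univ = univ := by
    rw [image_univ]; exact (mobH b hb).surjective.range_eq
  have := Em_conf n p (mob b) he (fun x : Sph n => (1 - ‖b‖ ^ 2) / ‖(x : Fn (n + 1)) - b‖ ^ 2) (by fun_prop)
    (fun x => by
      have := norm_pos_iff.2 (mob_ne hb x)
      have hR : 0 < 1 - ‖b‖ ^ 2 := by nlinarith [norm_nonneg b]
      positivity) (mob_conf hb) (cv u) (cv_cont hu) hA MeasurableSet.univ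
  rw [hs] at this
  rw [this]; rfl

lemma Em_ac (p : ℝ) (u : Sph n → Sph m) (hn : 1 ≤ n) (h : Em n p (cv u) univ univ ≠ ∞) {δ : ℝ} (hδ : 0 < δ) :
    ∃ k : ℕ, ∀ a : Sph n, Em n p (cv u) (Metric.ball a ((1 / 2) ^ k)) univ ≤ ENNReal.ofReal δ := by
  unfold Em at h ⊢
  simp only [Measure.restrict_univ] at h ⊢
  obtain ⟨d, hd, H⟩ := exists_pos_setLIntegral_lt_of_measure_lt (ε := ENNReal.ofReal δ) h (by simpa using hδ)
  obtain ⟨c1, c2, -, hc2, hb⟩ := muS_ball n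
  have ht : Tendsto (fun k : ℕ => ENNReal.ofReal (c2 * ((1 / 2) ^ k) ^ n)) atTop (𝓝 0) := by
    have : Tendsto (fun k : ℕ => c2 * (((1 : ℝ) / 2) ^ k) ^ n) atTop (𝓝 (c2 * 0 ^ n)) :=
      ((tendsto_pow_atTop_nhds_zero_of_lt_one (by norm_num) (by norm_num)).pow n).const_mul c2
    rw [zero_pow (by omega), mul_zero] at this
    simpa using ENNReal.tendsto_ofReal this
  obtain ⟨k, hk⟩ := (ht.eventually_lt_const hd).exists
  refine ⟨k, fun a => (H _ (lt_of_le_of_lt ?_ hk)).le⟩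
  have := (hb a ((1 / 2) ^ k) (by positivity)).2
  rw [← ENNReal.ofReal_toReal (measure_ne_top μH[(n : ℝ)] (Metric.ball a ((1 / 2) ^ k)))]
  exact ENNReal.ofReal_le_ofReal this

theorem normalizeU (p : ℝ) (hn : 1 ≤ n) (δ : ℝ) (hδ : 0 < δ) (u : Sph n → Sph m) (hu : Continuous u)
    (hE : Em n p (cv u) univ univ ≤ ENNReal.ofReal (7 / 6 * δ)) :
    ∃ v : Sph n → Sph m, Continuous v ∧ Homotopic v u ∧ Em n p (cv v) univ univ = Em n p (cv u) univ univ ∧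
      ∀ a : Sph n, Em n p (cv v) (Metric.ball a (1 / 64)) univ ≤ ENNReal.ofReal (2 / 3 * δ) := by
  classical
  have hex := Em_ac p u hn (hE.trans_lt ENNReal.ofReal_lt_top).ne (δ := δ / 2) (by positivity)
  set k := Nat.find hex with hk
  have hk1 := Nat.find_spec hex
  rw [← hk] at hk1
  rcases Nat.eq_zero_or_pos k with h0 | hpos
  · refine ⟨u, hu, Homotopic.rfl' hu, rfl, fun a => ?_⟩
    refine (Em_mono n p _ (Metric.ball_subset_ball ?_) subset_rfl).trans ((hk1 a).trans (ENNReal.ofReal_le_ofReal (by linarith)))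
    rw [h0]; norm_num
  have hk2 := Nat.find_min hex (m := k - 1) (by omega)
  push Not at hk2
  obtain ⟨a, ha⟩ := hk2
  set ρ : ℝ := (1 / 2) ^ (k - 1) with hρ
  have hρ0 : 0 < ρ := by positivity
  have hρ1 : ρ ≤ 1 := pow_le_one₀ (by norm_num) (by norm_num)
  have hρk : (1 / 2 : ℝ) ^ k = ρ / 2 := by
    rw [hρ]
    conv_lhs => rw [show k = (k - 1) + 1 by omega, pow_succ]
    ring
  rw [hρk] at hk1
  set b : Fn (n + 1) := -((1 - ρ / 2) • (a : Fn (n + 1))) with hb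
  have hbn : ‖b‖ = 1 - ρ / 2 := by
    rw [hb, norm_neg, norm_smul, Real.norm_eq_abs, abs_of_nonneg (by linarith)]; simp
  have hb1 : ‖b‖ < 1 := by rw [hbn]; linarith
  have hq : ∀ x : Sph n, ‖(x : Fn (n + 1)) - b‖ ^ 2 = (ρ / 2) ^ 2 + (1 - ρ / 2) * dist x (-a) ^ 2 := by
    intro x
    rw [Subtype.dist_eq, dist_eq_norm, hb, sub_neg_eq_add]
    have hx : ‖(x : Fn (n + 1))‖ = 1 := by simp
    have ha : ‖(a : Fn (n + 1))‖ = 1 := by simp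
    have : ((-a : Sph n) : Fn (n + 1)) = -(a : Fn (n + 1)) := rfl
    rw [this, sub_neg_eq_add, norm_add_sq_real, norm_add_sq_real, norm_smul, inner_smul_right, hx, ha, mul_pow, Real.norm_eq_abs, sq_abs]
    ring
  refine ⟨u ∘ mob b, hu.comp (mob_cont hb1), mob_homotopic hb1 u hu, ?_, fun a' => ?_⟩
  · rw [Em_mob hb1 p u hu MeasurableSet.univ]
    congr 1
    rw [image_univ]; exact (mobH b hb1).surjective.range_eq
  rw [Em_mob hb1 p u hu Metric.isOpen_ball.measurableSet]
  have hR : 0 < 1 - ‖b‖ ^ 2 := by nlinarith [norm_nonneg b]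
  have hR2 : 1 - ‖b‖ ^ 2 ≤ ρ := by rw [hbn]; nlinarith
  rcases le_or_gt (1 / 2) (dist a' (-a)) with hc | hc
  · have key : mob b '' Metric.ball a' (1 / 64) ⊆ Metric.ball (mob b a') (ρ / 2) := by
      rintro _ ⟨x, hx, rfl⟩
      rw [Metric.mem_ball] at hx ⊢
      have lb : ∀ z : Sph n, 3 / 8 ≤ dist z (-a) → (1 - ‖b‖ ^ 2) / ‖(z : Fn (n + 1)) - b‖ ^ 2 ≤ 16 * ρ := by
        intro z hz
        have h1 : 1 / 16 ≤ ‖(z : Fn (n + 1)) - b‖ ^ 2 := by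
          rw [hq]; nlinarith
        rw [div_le_iff₀ (by linarith)]
        nlinarith
      have hx' : 3 / 8 ≤ dist x (-a) := by
        have := dist_triangle a' x (-a)
        rw [dist_comm a' x] at this
        linarith
      have h1 := lb x hx'
      have h2 := lb a' (by linarith)
      have h3 : dist (mob b x) (mob b a') ^ 2 ≤ (16 * ρ) * (16 * ρ) * (1 / 64) ^ 2 := by
        rw [mob_conf hb1]
        gcongr
      have : dist (mob b x) (mob b a') ≤ ρ / 4 := le_of_sq_le_sq0 (by nlinarith) (by positivity)
      linarith
    refine (Em_mono n p _ key subset_rfl).trans ((hk1 _).trans (ENNReal.ofReal_le_ofReal (by linarith)))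
  · have key : Disjoint (mob b '' Metric.ball a' (1 / 64)) (Metric.ball a ρ) := by
      rw [Set.disjoint_left]
      rintro _ ⟨x, hx, rfl⟩ h
      rw [Metric.mem_ball] at hx h
      have hfix : mob b a = a := by
        apply Subtype.ext
        rw [coe_mob hb1, mobv, div_pow, mob_sq hb1, hq, hbn, dist_comm, dist_neg_self]
        rw [hb, sub_neg_eq_add, sub_neg_eq_add]
        rw [show (a : Fn (n + 1)) + (1 - ρ / 2) • (a : Fn (n + 1)) = (2 - ρ / 2) • (a : Fn (n + 1)) by module, smul_smul, ← add_smul]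
        have : (1 - (1 - ρ / 2) ^ 2) / ((ρ / 2) ^ 2 + (1 - ρ / 2) * 2 ^ 2) * (2 - ρ / 2) + (1 - ρ / 2) = 1 := by
          have : (ρ / 2) ^ 2 + (1 - ρ / 2) * 2 ^ 2 = (2 - ρ / 2) ^ 2 := by ring
          rw [this]
          have : 2 - ρ / 2 ≠ 0 := by linarith
          rw [show 1 - (1 - ρ / 2) ^ 2 = (ρ / 2) * (2 - ρ / 2) by ring]
          have h8 : ρ / 2 * (2 - ρ / 2) / (2 - ρ / 2) ^ 2 * (2 - ρ / 2) = ρ / 2 := by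
            generalize 2 - ρ / 2 = T at this
            field_simp
          rw [h8]; ring
        rw [this, one_smul]
      have hd : dist x (-a) ≤ 5 / 8 := by
        have := dist_triangle x a' (-a)
        linarith
      have hxa : dist x a ^ 2 = 4 - dist x (-a) ^ 2 := by
        rw [dist_sq_sph, dist_sq_sph]
        have : ((-a : Sph n) : Fn (n + 1)) = -(a : Fn (n + 1)) := rfl
        rw [this, inner_neg_right]; ring
      have h3 := mob_conf hb1 x a
      rw [hfix, hxa, hq, hq, hbn, dist_comm a, dist_neg_self] at h3
      set q := dist x (-a) ^ 2 with hqd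
      have hq0 : 0 ≤ q := by positivity
      have hq1 : q ≤ 25 / 64 := by rw [hqd]; nlinarith [dist_nonneg (x := x) (y := -a)]
      have hlt : dist (mob b x) a ^ 2 < ρ ^ 2 := by gcongr
      rw [h3] at hlt
      have e1 : (1 - (1 - ρ / 2) ^ 2) / ((ρ / 2) ^ 2 + (1 - ρ / 2) * q) * ((1 - (1 - ρ / 2) ^ 2) / ((ρ / 2) ^ 2 + (1 - ρ / 2) * 2 ^ 2)) *
          (4 - q) = (ρ / 2) ^ 2 * (4 - q) / ((ρ / 2) ^ 2 + (1 - ρ / 2) * q) := by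
        have : (ρ / 2) ^ 2 + (1 - ρ / 2) * 2 ^ 2 = (2 - ρ / 2) ^ 2 := by ring
        rw [this]
        have h4 : 2 - ρ / 2 ≠ 0 := by linarith
        have h5 : (ρ / 2) ^ 2 + (1 - ρ / 2) * q ≠ 0 := by
          have : 0 ≤ (1 - ρ / 2) * q := mul_nonneg (by linarith) hq0
          positivity
        rw [show 1 - (1 - ρ / 2) ^ 2 = (ρ / 2) * (2 - ρ / 2) by ring]
        generalize 2 - ρ / 2 = T at h4
        generalize (ρ / 2) ^ 2 + (1 - ρ / 2) * q = S at h5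
        field_simp
      rw [e1, div_lt_iff₀ (by have : 0 ≤ (1 - ρ / 2) * q := mul_nonneg (by linarith) hq0
                              positivity)] at hlt
      have h6 : (ρ / 2) ^ 2 + (1 - ρ / 2) * q ≤ (4 - q) / 4 := by nlinarith
      have : ρ ^ 2 * ((ρ / 2) ^ 2 + (1 - ρ / 2) * q) ≤ ρ ^ 2 * ((4 - q) / 4) := by gcongr
      nlinarith
    have hsum : Em n p (cv u) (mob b '' Metric.ball a' (1 / 64)) univ + Em n p (cv u) (Metric.ball a ρ) univ ≤ Em n p (cv u) univ univ := by
      refine le_trans (le_of_eq ?_) (Em_mono n p (cv u) (subset_univ (mob b '' Metric.ball a' (1 / 64) ∪ Metric.ball a ρ)) subset_rfl)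
      unfold Em
      exact (lintegral_union Metric.isOpen_ball.measurableSet key).symm
    have h7 : Em n p (cv u) (mob b '' Metric.ball a' (1 / 64)) univ + ENNReal.ofReal (δ / 2) ≤ ENNReal.ofReal (2 / 3 * δ) + ENNReal.ofReal (δ / 2) := by
      refine (add_le_add_right ha.le _).trans (hsum.trans (hE.trans ?_))
      rw [← ENNReal.ofReal_add (by positivity) (by positivity)]
      exact ENNReal.ofReal_le_ofReal (by linarith)
    exact (ENNReal.add_le_add_iff_right ENNReal.ofReal_ne_top).1 h7
end mob


section lim
variable {n m : ℕ}

lemma decay (p : ℝ) {δ θ η : ℝ} (hθ0 : 0 < θ) (hθ1 : θ < 1) (hη : 0 ≤ η) (hδ : 0 < δ) (U : Sph n → Sph m)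
    (hK : ∀ (a : Sph n) (s : ℝ), 0 < s → s ≤ 1 → Em n p (cv U) (Metric.ball a (6 * s)) univ ≤ ENNReal.ofReal (2 / 3 * δ) →
        Em n p (cv U) (Metric.ball a s) univ ≤ ENNReal.ofReal θ * Em n p (cv U) (Metric.ball a (6 * s)) univ + ENNReal.ofReal η)
    (h0 : ∀ a : Sph n, Em n p (cv U) (Metric.ball a (1 / 64)) univ ≤ ENNReal.ofReal (2 / 3 * δ)) (j : ℕ) (a : Sph n) :
    Em n p (cv U) (Metric.ball a (1 / 64 * (1 / 9) ^ j)) univ ≤ ENNReal.ofReal (2 / 3 * δ * θ ^ j + η / (1 - θ)) := by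
  have h1 : 0 < 1 - θ := by linarith
  have key : ∀ j : ℕ, Em n p (cv U) (Metric.ball a (1 / 64 * (1 / 6) ^ j)) univ ≤ ENNReal.ofReal (2 / 3 * δ * θ ^ j + η / (1 - θ)) := by
    intro j
    induction j with
    | zero =>
      simp only [pow_zero, mul_one]
      refine (h0 a).trans (ENNReal.ofReal_le_ofReal ?_)
      have : 0 ≤ η / (1 - θ) := by positivity
      linarith
    | succ j ih =>
      have e : 6 * ((1 : ℝ) / 64 * (1 / 6) ^ (j + 1)) = 1 / 64 * (1 / 6) ^ j := by rw [pow_succ]; ring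
      have hle : ((1 : ℝ) / 6) ^ j ≤ 1 := pow_le_one₀ (by norm_num) (by norm_num)
      have hle' : ((1 : ℝ) / 6) ^ (j + 1) ≤ 1 := pow_le_one₀ (by norm_num) (by norm_num)
      have := hK a (1 / 64 * (1 / 6) ^ (j + 1)) (by positivity) (by linarith) (by
        rw [e]
        exact (Em_mono n p _ (Metric.ball_subset_ball (by linarith)) subset_rfl).trans (h0 a))
      rw [e] at this
      refine this.trans ((add_le_add_left (mul_le_mul' le_rfl ih) _).trans (le_of_eq ?_))
      rw [← ENNReal.ofReal_mul hθ0.le, ← ENNReal.ofReal_add (by positivity) hη]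
      congr 1
      rw [pow_succ]
      field_simp
      ring
  refine (Em_mono n p _ (Metric.ball_subset_ball ?_) subset_rfl).trans (key j)
  gcongr; norm_num

lemma Mav_le_one (t : ℝ) (ht : 0 < t) (ht4 : t ≤ 4) (u : Sph n → Sph m) (hu : Continuous u) (x : Sph n) :
    ‖Mav t (cv u) x‖ ≤ 1 := by
  have := Mav_near t ht ht4 (cv u) (cv_cont hu) x 0 1 (fun y _ => by simp [cv_norm])
  simpa using this

lemma Mav_diff9 (p : ℝ) (hp : 1 ≤ p) : ∃ C : ℝ, 0 < C ∧ ∀ (u : Sph n → Sph m) (t β : ℝ) (x : Sph n),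
    Continuous u → 0 < t → t ≤ 4 → 0 ≤ β → Em n p (cv u) (Metric.ball x t) univ ≤ ENNReal.ofReal β →
    ‖Mav t (cv u) x - Mav (t * (1 / 9)) (cv u) x‖ ≤ 2 * (C * β) ^ p⁻¹ := by
  obtain ⟨C, hC, h⟩ := Mav_diff (n := n) (m := m) p hp
  refine ⟨C, hC, fun u t β x hu ht ht4 hβ hE => ?_⟩
  have hp0 : p ≠ 0 := by linarith
  have key : ∀ t', 0 < t' → t' ≤ t → ‖Mav t' (cv u) x - Mav (t' / 3) (cv u) x‖ ≤ (C * β) ^ p⁻¹ := by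
    intro t' h0 h1
    refine enorm_rpow_le_iff hp _ (by positivity) ((h u t' x hu h0 (by linarith)).trans ?_)
    rw [Real.rpow_inv_rpow (by positivity) hp0, ENNReal.ofReal_mul hC.le]
    exact mul_le_mul' le_rfl ((Em_mono n p _ (Metric.ball_subset_ball h1) subset_rfl).trans hE)
  have h1 := key t ht le_rfl
  have h2 := key (t / 3) (by positivity) (by linarith)
  rw [show t / 3 / 3 = t * (1 / 9) by ring] at h2
  have := norm_sub_le_norm_sub_add_norm_sub (Mav t (cv u) x) (Mav (t / 3) (cv u) x) (Mav (t * (1 / 9)) (cv u) x)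
  linarith

lemma Mav_norm9 (p : ℝ) (hp : 1 ≤ p) : ∃ C : ℝ, 0 < C ∧ ∀ (u : Sph n → Sph m) (T β : ℝ) (x : Sph n),
    Continuous u → T ≤ 4 → 0 ≤ β → Em n p (cv u) (Metric.ball x T) univ ≤ ENNReal.ofReal β →
    ∀ t, 0 < t → t ≤ T → 1 - (C * β) ^ p⁻¹ ≤ ‖Mav t (cv u) x‖ := by
  obtain ⟨C, hC, h⟩ := Mav_norm (n := n) (m := m) p hp
  refine ⟨C, hC, fun u T β x hu hT hβ hE t ht htT => ?_⟩
  refine h u t _ x hu ht (by linarith) (by positivity) ?_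
  rw [Real.rpow_inv_rpow (by positivity) (by linarith), ENNReal.ofReal_mul hC.le]
  exact mul_le_mul' le_rfl ((Em_mono n p _ (Metric.ball_subset_ball htT) subset_rfl).trans hE)

/-- scales -/
def tj (j : ℕ) : ℝ := 1 / 64 * (1 / 9) ^ j

lemma tj_pos (j : ℕ) : 0 < tj j := by unfold tj; positivity
lemma tj_le (j : ℕ) : tj j ≤ (1 / 9) ^ j := by
  unfold tj; have : (0 : ℝ) < (1 / 9) ^ j := by positivity
  linarith
lemma tj_le_one (j : ℕ) : tj j ≤ 1 := (tj_le j).trans (pow_le_one₀ (by norm_num) (by norm_num))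
lemma tj_le_four (j : ℕ) : tj j ≤ 4 := (tj_le_one j).trans (by norm_num)
lemma tj_succ (j : ℕ) : tj (j + 1) = tj j * (1 / 9) := by unfold tj; rw [pow_succ]; ring

/-- averaged maps as bounded continuous functions -/
def Fj (j : ℕ) (u : Sph n → Sph m) (hu : Continuous u) : BoundedContinuousFunction (Sph n) (Fn (m + 1)) :=
  BoundedContinuousFunction.mkOfCompact ⟨Mav (tj j) (cv u), Mav_cont _ (tj_pos j) (tj_le_four j) u hu⟩

lemma Fj_apply (j : ℕ) (u : Sph n → Sph m) (hu : Continuous u) (x : Sph n) : Fj j u hu x = Mav (tj j) (cv u) x := rfl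

lemma compactness (U : ℕ → Sph n → Sph m) (hU : ∀ k, Continuous (U k)) :
    ∃ (ψ : ℕ → ℕ) (f : ℕ → BoundedContinuousFunction (Sph n) (Fn (m + 1))), StrictMono ψ ∧
      ∀ j, Tendsto (fun k => Fj j (U (ψ k)) (hU _)) atTop (𝓝 (f j)) := by
  set A : ℕ → Set (BoundedContinuousFunction (Sph n) (Fn (m + 1))) := fun j => range (fun k => Fj j (U k) (hU k)) with hA
  have hc : ∀ j, IsCompact (closure (A j)) := by
    intro j
    refine BoundedContinuousFunction.arzela_ascoli (Metric.closedBall 0 1) (isCompact_closedBall _ _) (A j) ?_ ?_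
    · rintro _ x ⟨k, rfl⟩
      rw [mem_closedBall_zero_iff]
      exact Mav_le_one _ (tj_pos j) (tj_le_four j) _ (hU k) x
    · obtain ⟨L, hL, h⟩ := Mav_lip (n := n) (m := m) (tj j) (tj_pos j) (tj_le_four j)
      refine (LipschitzWith.uniformEquicontinuous _ ⟨L, hL⟩ ?_).equicontinuous
      rintro ⟨_, k, rfl⟩
      refine LipschitzWith.of_dist_le_mul fun x y => ?_
      rw [dist_eq_norm]; exact h _ x y (hU k)
  have hK := isCompact_univ_pi hc
  obtain ⟨f, -, ψ, hψ, ht⟩ := hK.tendsto_subseq (x := fun k j => Fj j (U k) (hU k))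
    (fun k j _ => subset_closure ⟨k, rfl⟩)
  exact ⟨ψ, f, hψ, fun j => (tendsto_pi_nhds.1 ht) j⟩

lemma ae_conv (hn : 1 ≤ n) (p : ℝ) (hp : 1 ≤ p) (V : ℕ → Sph n → Sph m) (hV : ∀ k, Continuous (V k)) (E : ℝ≥0∞) (hE : E ≠ ∞)
    (hVE : ∀ k, Em n p (cv (V k)) univ univ ≤ E) :
    ∀ᵐ x ∂(μH[(n : ℝ)] : Measure (Sph n)), Tendsto (fun i => Mav (tj i) (cv (V i)) x - cv (V i) x) atTop (𝓝 0) := by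
  obtain ⟨C, hC, h⟩ := Mav_Lp (n := n) (m := m) p hp
  have hp0 : 0 < p := by linarith
  have hmeas : ∀ i, Measurable fun x => ‖Mav (tj i) (cv (V i)) x - cv (V i) x‖ₑ ^ p := fun i => by
    have := (Mav_cont _ (tj_pos i) (tj_le_four i) _ (hV i)).sub (cv_cont (hV i))
    exact (this.enorm.measurable).pow_const p
  have hsum : ∑' i, ∫⁻ x, ‖Mav (tj i) (cv (V i)) x - cv (V i) x‖ₑ ^ p ∂(μH[(n : ℝ)] : Measure (Sph n)) ≠ ∞ := by
    have hle : ∀ i, ∫⁻ x, ‖Mav (tj i) (cv (V i)) x - cv (V i) x‖ₑ ^ p ∂(μH[(n : ℝ)] : Measure (Sph n)) ≤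
        ENNReal.ofReal (C * (1 / 9) ^ i) * E := by
      intro i
      refine (h (V i) (tj i) (hV i) (tj_pos i) (tj_le_four i)).trans (mul_le_mul' (ENNReal.ofReal_le_ofReal ?_) (hVE i))
      refine mul_le_mul_of_nonneg_left ?_ hC.le
      exact (pow_le_of_le_one (tj_pos i).le (tj_le_one i) (by omega)).trans (tj_le i)
    refine ((ENNReal.tsum_le_tsum hle).trans_lt ?_).ne
    rw [ENNReal.tsum_mul_right]
    refine ENNReal.mul_lt_top ?_ hE.lt_top
    exact (Summable.tsum_ofReal_ne_top ((summable_geometric_of_lt_one (by norm_num) (by norm_num)).mul_left C)).lt_top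
  rw [← lintegral_tsum (fun i => (hmeas i).aemeasurable)] at hsum
  filter_upwards [ae_lt_top (Measurable.ennreal_tsum hmeas) hsum] with x hx
  have h1 := ENNReal.tendsto_atTop_zero_of_tsum_ne_top hx.ne
  have h2 := (ENNReal.continuous_rpow_const (y := p⁻¹)).tendsto 0 |>.comp h1
  rw [ENNReal.zero_rpow_of_pos (by positivity)] at h2
  have h3 : Tendsto (fun i => ‖Mav (tj i) (cv (V i)) x - cv (V i) x‖ₑ) atTop (𝓝 0) := by
    refine h2.congr fun i => ?_
    simp only [Function.comp]
    rw [ENNReal.rpow_rpow_inv hp0.ne']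
  rw [tendsto_zero_iff_norm_tendsto_zero]
  have h4 := (ENNReal.tendsto_toReal ENNReal.zero_ne_top).comp h3
  simpa [Function.comp_def] using h4

theorem limit_map (hn : 1 ≤ n) (p : ℝ) (hp : 1 ≤ p) (U : ℕ → Sph n → Sph m) (hU : ∀ k, Continuous (U k)) (E : ℝ≥0∞)
    (hE : E ≠ ∞) (hUE : ∀ k, Em n p (cv (U k)) univ univ ≤ E) (D θ : ℝ) (hD : 0 ≤ D) (hθ0 : 0 < θ) (hθ1 : θ < 1)
    (η : ℕ → ℝ) (hη0 : ∀ k, 0 ≤ η k) (hη : Tendsto η atTop (𝓝 0))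
    (hdec : ∀ k j a, Em n p (cv (U k)) (Metric.ball a (tj j)) univ ≤ ENNReal.ofReal (D * θ ^ j + η k)) :
    ∃ (u : Sph n → Sph m) (κ : ℕ → ℕ), Continuous u ∧ Tendsto κ atTop atTop ∧ (∃ k, Homotopic u (U k)) ∧
      ∀ᵐ x ∂(μH[(n : ℝ)] : Measure (Sph n)), Tendsto (fun i => cv (U (κ i)) x) atTop (𝓝 (cv u x)) := by
  obtain ⟨ψ, f, hψ, hf⟩ := compactness U hU
  have hp0 : 0 < p := by linarith
  obtain ⟨C1, hC1, H1⟩ := Mav_diff9 (n := n) (m := m) p hp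
  obtain ⟨C2, hC2, H2⟩ := Mav_norm9 (n := n) (m := m) p hp
  have hβ : ∀ k j, 0 ≤ D * θ ^ j + η k := fun k j => by have := hη0 k; positivity
  have hη' : Tendsto (fun k => η (ψ k)) atTop (𝓝 0) := hη.comp hψ.tendsto_atTop
  have hfx : ∀ j x, Tendsto (fun k => Mav (tj j) (cv (U (ψ k))) x) atTop (𝓝 (f j x)) := fun j x =>
    ((ContinuousEvalConst.continuous_eval_const (F := BoundedContinuousFunction (Sph n) (Fn (m + 1))) x).tendsto (f j)).comp (hf j)
  have hlim : ∀ (C : ℝ) j, 0 < C → Tendsto (fun k => (C * (D * θ ^ j + η (ψ k))) ^ p⁻¹) atTop (𝓝 ((C * (D * θ ^ j)) ^ p⁻¹)) := by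
    intro C j hC
    refine Tendsto.rpow_const ?_ (Or.inr (by positivity))
    have := (hη'.const_add (D * θ ^ j)).const_mul C
    simpa using this
  have hgeo : ∀ (C : ℝ) j, 0 < C → (C * (D * θ ^ j)) ^ p⁻¹ = (C * D) ^ p⁻¹ * (θ ^ p⁻¹) ^ j := by
    intro C j hC
    rw [← mul_assoc, Real.mul_rpow (by positivity) (by positivity), ← Real.rpow_natCast, ← Real.rpow_mul hθ0.le,
      ← Real.rpow_natCast, ← Real.rpow_mul hθ0.le, mul_comm (j : ℝ)]
  set r := θ ^ p⁻¹ with hr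
  have hr0 : 0 < r := by positivity
  have hr1 : r < 1 := Real.rpow_lt_one hθ0.le hθ1 (by positivity)
  have hstep : ∀ j, dist (f j) (f (j + 1)) ≤ 2 * (C1 * D) ^ p⁻¹ * r ^ j := by
    intro j
    rw [BoundedContinuousFunction.dist_le (by positivity)]
    intro x
    rw [dist_eq_norm]
    have hl := ((hlim C1 j hC1).const_mul 2)
    rw [hgeo C1 j hC1] at hl
    rw [mul_assoc]
    refine le_of_tendsto_of_tendsto' ((hfx j x).sub (hfx (j + 1) x)).norm hl fun k => ?_
    rw [tj_succ]
    exact H1 _ _ _ x (hU _) (tj_pos j) (tj_le_four j) (hβ _ _) (hdec _ _ _)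
  obtain ⟨w, hw⟩ := cauchySeq_tendsto_of_complete (cauchySeq_of_le_geometric r _ hr1 hstep)
  have hwx : ∀ x, Tendsto (fun j => f j x) atTop (𝓝 (w x)) := fun x =>
    ((ContinuousEvalConst.continuous_eval_const (F := BoundedContinuousFunction (Sph n) (Fn (m + 1))) x).tendsto w).comp hw
  have hz : Tendsto (fun j : ℕ => (C2 * D) ^ p⁻¹ * r ^ j) atTop (𝓝 0) := by
    simpa using (tendsto_pow_atTop_nhds_zero_of_lt_one hr0.le hr1).const_mul ((C2 * D) ^ p⁻¹)
  have hw1 : ∀ x, ‖w x‖ = 1 := by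
    intro x
    apply le_antisymm
    · refine le_of_tendsto' (hwx x).norm fun j => le_of_tendsto' (hfx j x).norm fun k => ?_
      exact Mav_le_one _ (tj_pos j) (tj_le_four j) _ (hU _) x
    · have h1 : ∀ j, 1 - (C2 * D) ^ p⁻¹ * r ^ j ≤ ‖f j x‖ := by
        intro j
        rw [← hgeo C2 j hC2]
        refine le_of_tendsto_of_tendsto' ((hlim C2 j hC2).const_sub 1) (hfx j x).norm fun k => ?_
        exact H2 _ _ _ x (hU _) (tj_le_four j) (hβ _ _) (hdec _ _ _) _ (tj_pos j) le_rfl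
      have h2 := hz.const_sub 1
      rw [sub_zero] at h2
      exact le_of_tendsto_of_tendsto' h2 (hwx x).norm h1
  set u : Sph n → Sph m := fun x => ⟨w x, by simpa using hw1 x⟩ with hu
  have huc : Continuous u := w.continuous.subtype_mk _
  have hcu : ∀ x, cv u x = w x := fun x => rfl
  -- diagonal sequence
  have hsel : ∀ i : ℕ, ∃ k, i ≤ k ∧ dist (Fj i (U (ψ k)) (hU _)) (f i) < 1 / ((i : ℝ) + 1) := by
    intro i
    have := (tendsto_iff_dist_tendsto_zero.1 (hf i)).eventually_lt_const (u := 1 / ((i : ℝ) + 1)) (by positivity)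
    obtain ⟨k, h1, h2⟩ := (this.and (eventually_ge_atTop i)).exists
    exact ⟨k, h2, h1⟩
  choose κ hκ1 hκ2 using hsel
  refine ⟨u, fun i => ψ (κ i), huc, ?_, ?_, ?_⟩
  · exact hψ.tendsto_atTop.comp (tendsto_atTop_mono hκ1 tendsto_id)
  · obtain ⟨j, hj1, hj2⟩ := ((hz.eventually_lt_const (show (0 : ℝ) < 1 / 4 by norm_num)).and
      ((tendsto_iff_dist_tendsto_zero.1 hw).eventually_lt_const (show (0 : ℝ) < 1 / 4 by norm_num))).exists
    rw [← hgeo C2 j hC2] at hj1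
    obtain ⟨k, hk1, hk2⟩ := (((hlim C2 j hC2).eventually_lt_const hj1).and
      ((tendsto_iff_dist_tendsto_zero.1 (hf j)).eventually_lt_const (show (0 : ℝ) < 1 / 4 by norm_num))).exists
    have hlow : ∀ t x, 0 < t → t ≤ tj j → 3 / 4 ≤ ‖Mav t (cv (U (ψ k))) x‖ := fun t x h0 h1 => by
      have := H2 _ _ _ x (hU (ψ k)) (tj_le_four j) (hβ _ _) (hdec (ψ k) j x) t h0 h1
      linarith
    refine ⟨ψ k, Homotopic.symm' ((Mav_hom (tj j) (tj_pos j) (tj_le_four j) _ (hU _) fun t x h0 h1 hc => ?_).trans' ?_)⟩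
    · have := hlow t x h0 h1
      rw [hc] at this; norm_num at this
    · have := homotopic_proj (Mav_cont _ (tj_pos j) (tj_le_four j) _ (hU (ψ k))) (cv_cont huc) (fun x => by
        refine lt_of_lt_of_le ?_ (hlow _ x (tj_pos j) le_rfl)
        have d1 := BoundedContinuousFunction.dist_coe_le_dist (f := Fj j (U (ψ k)) (hU _)) (g := f j) x
        have d2 := BoundedContinuousFunction.dist_coe_le_dist (f := f j) (g := w) x
        have d3 := dist_triangle (Fj j (U (ψ k)) (hU _) x) (f j x) (w x)
        rw [← dist_eq_norm]
        rw [Fj_apply] at d3 d1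
        rw [hcu]
        linarith)
      convert this using 2 with x
      exact (proj_coe _).symm
  · have := ae_conv hn p hp (fun i => U (ψ (κ i))) (fun i => hU _) E hE (fun i => hUE _)
    filter_upwards [this] with x hx
    have h1 : Tendsto (fun i => Mav (tj i) (cv (U (ψ (κ i)))) x) atTop (𝓝 (w x)) := by
      have h2 : Tendsto (fun i => Mav (tj i) (cv (U (ψ (κ i)))) x - f i x) atTop (𝓝 0) := by
        rw [tendsto_zero_iff_norm_tendsto_zero]
        refine squeeze_zero (fun _ => norm_nonneg _) (fun i => ?_) tendsto_one_div_add_atTop_nhds_zero_nat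
        rw [← dist_eq_norm]
        exact (BoundedContinuousFunction.dist_coe_le_dist (f := Fj i (U (ψ (κ i))) (hU _)) (g := f i) x).trans (hκ2 i).le
      simpa using h2.add (hwx x)
    simpa [hcu] using h1.sub hx

lemma fatou (p : ℝ) (hp : 1 ≤ p) (V : ℕ → Sph n → Sph m) (hV : ∀ k, Continuous (V k)) (u : Sph n → Sph m)
    (h : ∀ᵐ x ∂(μH[(n : ℝ)] : Measure (Sph n)), Tendsto (fun i => cv (V i) x) atTop (𝓝 (cv u x))) :
    Em n p (cv u) univ univ ≤ liminf (fun i => Em n p (cv (V i)) univ univ) atTop := by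
  unfold Em
  simp only [Measure.restrict_univ]
  refine le_trans ?_ (lintegral_liminf_le fun i => en_measurable_int n p _ (cv_cont (hV i)) _)
  refine lintegral_mono_ae ?_
  filter_upwards [h] with x hx
  refine le_trans ?_ (lintegral_liminf_le fun i => en_measurable_right n p _ (cv_cont (hV i)) x)
  refine lintegral_mono_ae ?_
  filter_upwards [h] with y hy
  have : Tendsto (fun i => en n p (cv (V i)) x y) atTop (𝓝 (en n p (cv u) x y)) := by
    unfold en
    refine ENNReal.tendsto_ofReal (Tendsto.div_const ?_ _)
    exact Tendsto.rpow_const (hx.sub hy).norm (Or.inr (by linarith))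
  exact this.liminf_eq.ge
end lim

theorem final_aux (n m : ℕ) (hn : 1 ≤ n) (p : ℝ) (hp : (n : ℝ) < p) (δ : ℝ) (hδ : 0 < δ)
    (hnull : ∀ u : Sph n → Sph m, Continuous u → Em n p (cv u) univ univ < ENNReal.ofReal δ → NullHomotopic u)
    (g : Sph n → Sph m) (I : ℝ≥0∞) (hI : I ≤ ENNReal.ofReal (13 / 12 * δ))
    (hIle : ∀ v : Sph n → Sph m, Continuous v → Homotopic v g → I ≤ Em n p (cv v) univ univ)
    (hIex : ∀ e, I < e → ∃ v : Sph n → Sph m, Continuous v ∧ Homotopic v g ∧ Em n p (cv v) univ univ < e) :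
    ∃ u : Sph n → Sph m, Continuous u ∧ Homotopic u g ∧ Em n p (cv u) univ univ ≤ I := by
  have hp1 : 1 ≤ p := by
    have : (1 : ℝ) ≤ n := by exact_mod_cast hn
    linarith
  have hIt : I ≠ ∞ := (hI.trans_lt ENNReal.ofReal_lt_top).ne
  obtain ⟨θ, hθ0, hθ1, hKL⟩ := KL m hn hp δ hδ hnull
  set η : ℕ → ℝ := fun k => δ / 12 * (1 / ((k : ℝ) + 1)) with hη
  have hη0 : ∀ k, 0 < η k := fun k => by simp only [hη]; positivity
  have hη1 : ∀ k, η k ≤ δ / 12 := fun k => by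
    simp only [hη]
    have : 1 / ((k : ℝ) + 1) ≤ 1 := by
      rw [div_le_one (by positivity)]
      have : (0 : ℝ) ≤ k := by positivity
      linarith
    nlinarith
  have hηt : Tendsto η atTop (𝓝 0) := by
    simpa [hη] using (tendsto_one_div_add_atTop_nhds_zero_nat (𝕜 := ℝ)).const_mul (δ / 12)
  have hex : ∀ k, ∃ V : Sph n → Sph m, Continuous V ∧ Homotopic V g ∧ Em n p (cv V) univ univ ≤ I + ENNReal.ofReal (η k) ∧
      ∀ a : Sph n, Em n p (cv V) (Metric.ball a (1 / 64)) univ ≤ ENNReal.ofReal (2 / 3 * δ) := by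
    intro k
    obtain ⟨v, hv, hvg, hvE⟩ := hIex (I + ENNReal.ofReal (η k)) (ENNReal.lt_add_right hIt (by simpa using hη0 k))
    obtain ⟨V, hV, hVv, hVE, hVb⟩ := normalizeU p hn δ hδ v hv (by
      refine hvE.le.trans ((add_le_add hI (ENNReal.ofReal_le_ofReal (hη1 k))).trans ?_)
      rw [← ENNReal.ofReal_add (by positivity) (by positivity)]
      exact ENNReal.ofReal_le_ofReal (by linarith))
    exact ⟨V, hV, hVv.trans' hvg, by rw [hVE]; exact hvE.le, hVb⟩
  choose U hU hUg hUE hUb using hex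
  have hUE2 : ∀ k, Em n p (cv (U k)) univ univ ≤ ENNReal.ofReal (2 * δ) := fun k => by
    refine (hUE k).trans ((add_le_add hI (ENNReal.ofReal_le_ofReal (hη1 k))).trans ?_)
    rw [← ENNReal.ofReal_add (by positivity) (by positivity)]
    exact ENNReal.ofReal_le_ofReal (by linarith)
  have hdec : ∀ k j a, Em n p (cv (U k)) (Metric.ball a (tj j)) univ ≤
      ENNReal.ofReal (2 / 3 * δ * θ ^ j + η k / (1 - θ)) := fun k j a =>
    decay p hθ0 hθ1 (hη0 k).le hδ (U k) (hKL (U k) (η k) (hU k) (hη0 k).le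
      ((hUE2 k).trans_lt ENNReal.ofReal_lt_top).ne fun w hw hwU =>
        (hUE k).trans (add_le_add_left (hIle w hw (hwU.trans' (hUg k))) _)) (hUb k) j a
  obtain ⟨u, κ, hu, hκ, ⟨k, hk⟩, hae⟩ := limit_map hn p hp1 U hU (ENNReal.ofReal (2 * δ)) ENNReal.ofReal_ne_top hUE2
    (2 / 3 * δ) θ (by positivity) hθ0 hθ1 (fun k => η k / (1 - θ))
    (fun k => div_nonneg (hη0 k).le (by linarith)) (by simpa using hηt.div_const (1 - θ)) hdec
  refine ⟨u, hu, hk.trans' (hUg k), ?_⟩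
  refine (fatou p hp1 (fun i => U (κ i)) (fun i => hU _) u hae).trans ?_
  have ht : Tendsto (fun i => I + ENNReal.ofReal (η (κ i))) atTop (𝓝 I) := by
    have := (ENNReal.tendsto_ofReal (hηt.comp hκ)).const_add I
    simpa using this
  exact (liminf_le_liminf (Eventually.of_forall fun i => hUE (κ i))).trans ht.liminf_eq.le


/-- the least energy of nontrivial maps is bounded below by some `ε > 0`, and
every nontrivial homotopy class with near-minimal infimum energy contains a minimizer. -/
theorem stmt15 (n m : ℕ) (hn : 1 ≤ n) (hm : 1 ≤ m) (s : ℝ) (hs : 0 < s) (hs1 : s < 1)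
    (hn1 : n = 1 → s ≤ 1 / 2) :
    ∃ ε : ℝ, 0 < ε ∧
      ENNReal.ofReal ε ≤ minNontrivialEnergy n m s ∧
      ∀ g : Sph n → Sph m, Continuous g → ¬ NullHomotopic g →
        sInf {e : ℝ≥0∞ | ∃ v : Sph n → Sph m, Continuous v ∧ Homotopic v g ∧ e = sphEnergy n m s v}
            ≤ minNontrivialEnergy n m s + ENNReal.ofReal ε →
        ∃ u : Sph n → Sph m, Continuous u ∧ Homotopic u g ∧
          ∀ v : Sph n → Sph m, Continuous v → Homotopic v g →
            sphEnergy n m s u ≤ sphEnergy n m s v := by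
  have hs1' : (n : ℝ) < (n : ℝ) / s := by
    have : (0 : ℝ) < n := by exact_mod_cast hn
    rw [lt_div_iff₀ hs]
    nlinarith
  have hp1 : 1 ≤ (n : ℝ) / s := by
    have : (1 : ℝ) ≤ n := by exact_mod_cast hn
    linarith
  have hEq : ∀ u : Sph n → Sph m, sphEnergy n m s u = Em n ((n : ℝ) / s) (cv u) univ univ := sphEnergy_eq n m s
  obtain ⟨εa, hεa, hsn⟩ := small_null n m ((n : ℝ) / s) hp1
  have ha : ENNReal.ofReal εa ≤ minNontrivialEnergy n m s := by
    refine le_sInf ?_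
    rintro _ ⟨u, hu, hnu, rfl⟩
    by_contra h
    push Not at h
    rw [hEq] at h
    exact hnu (hsn u hu h.le)
  have hmin : ∀ u : Sph n → Sph m, Continuous u → ¬ NullHomotopic u →
      minNontrivialEnergy n m s ≤ sphEnergy n m s u := fun u hu hnu => sInf_le ⟨u, hu, hnu, rfl⟩
  by_cases htop : minNontrivialEnergy n m s = ∞
  · refine ⟨εa, hεa, ha, fun g hg hng _ => ⟨g, hg, Homotopic.rfl' hg, fun v hv hvg => ?_⟩⟩
    have := hmin v hv (fun ⟨c, hc⟩ => hng ⟨c, hvg.symm'.trans' hc⟩)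
    rw [htop, top_le_iff] at this
    rw [this]; exact le_top
  have hδe : minNontrivialEnergy n m s = ENNReal.ofReal (minNontrivialEnergy n m s).toReal :=
    (ENNReal.ofReal_toReal htop).symm
  have hδ : 0 < (minNontrivialEnergy n m s).toReal :=
    ENNReal.toReal_pos ((lt_of_lt_of_le (by simpa using hεa) ha).ne') htop
  generalize (minNontrivialEnergy n m s).toReal = δ at hδe hδ
  refine ⟨min εa (δ / 12), by positivity, (ENNReal.ofReal_le_ofReal (min_le_left _ _)).trans ha, fun g hg hng hI => ?_⟩
  obtain ⟨u, hu, hug, huE⟩ := final_aux n m hn ((n : ℝ) / s) hs1' δ hδ (fun u hu hlt => by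
      by_contra hnu
      have := hmin u hu hnu
      rw [hδe, hEq] at this
      exact absurd hlt (not_lt.2 this)) g _ (hI.trans (by
      rw [hδe, ← ENNReal.ofReal_add hδ.le (by positivity)]
      refine ENNReal.ofReal_le_ofReal ?_
      have := min_le_right εa (δ / 12)
      linarith)) (fun v hv hvg => by
      rw [← hEq]
      exact sInf_le ⟨v, hv, hvg, rfl⟩) (fun e he => by
      obtain ⟨_, ⟨v, hv, hvg, rfl⟩, hlt⟩ := sInf_lt_iff.1 he
      rw [hEq] at hlt
      exact ⟨v, hv, hvg, hlt⟩)
  refine ⟨u, hu, hug, fun v hv hvg => ?_⟩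
  rw [hEq u]
  exact huE.trans (sInf_le ⟨v, hv, hvg, rfl⟩)
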